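/- Let μ, k, c be nonzero real numbers and b ∈ ℝ with c² < −4(k² + b k); set κ = √(−(k²+bk) − c²/4). Then there exist functions s^h, β^h, s^v, β^v : (0,∞) → ℝ, each smooth, with lim_{a→0⁺} s^h(a) = lim_{a→0⁺} s^v(a) = 0, with s^h and s^v not identically zero, and with s^h(a) = O(a^κ) and s^v(a) = O(a^κ) as a → 0⁺, such that the pair (u, φ) defined as follows is a weak solution of the Ishimori system on ℝ × ℝ²: for |x| ≠ |y| set a = √|x² − y²| and α = (1/2) log(|x+y|/|x−y|), let (s,β) = (s^h, β^h) if |x| > |y| and (s,β) = (s^v, β^v) if |x| < |y|, and define u(t,x,y) = ( cos s(a), sin s(a) cos(β(a) + kα + μt), sin s(a) sin(β(a) + kα + μt) ) and φ(t,x,y) = cα + b log a − ∫₀^a (2k/a′)(1 − cos s(a′)) da′; and set u(t,x,y) = (1,0,0) when |x| = |y|. Moreover u is continuous on ℝ × ℝ² with |u(t,x,y) − (1,0,0)| = O(|x² − y²|^{κ/2}) locally uniformly as (x,y) approaches the cross {|x| = |y|}, and u and φ are smooth on ℝ × {(x,y) : |x| ≠ |y|} and satisfy the Ishimori system pointwise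 there. -/

import Mathlib

open Set Filter MeasureTheory Asymptotics

/-- Euclidean dot product on `ℝ³`. -/
noncomputable def dot3 (v w : Fin 3 → ℝ) : ℝ := v 0 * w 0 + v 1 * w 1 + v 2 * w 2

/-- Cross product on `ℝ³`. -/
noncomputable def cross3 (v w : Fin 3 → ℝ) : Fin 3 → ℝ :=
  ![v 1 * w 2 - v 2 * w 1, v 2 * w 0 - v 0 * w 2, v 0 * w 1 - v 1 * w 0]

/-- The north pole `e₀ = (1,0,0)`. -/
noncomputable def e0 : Fin 3 → ℝ := ![1, 0, 0]

/-- Directional (partial) derivative of a vector-valued map on `ℝ×ℝ²`. -/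
noncomputable def pdV (v : ℝ × ℝ × ℝ) (f : ℝ × ℝ × ℝ → Fin 3 → ℝ)
    (p : ℝ × ℝ × ℝ) : Fin 3 → ℝ := fderiv ℝ f p v

/-- Directional (partial) derivative of a scalar map on `ℝ×ℝ²`. -/
noncomputable def pdR (v : ℝ × ℝ × ℝ) (f : ℝ × ℝ × ℝ → ℝ) (p : ℝ × ℝ × ℝ) : ℝ :=
  fderiv ℝ f p v

/-- The coordinate directions `∂ₜ, ∂ₓ, ∂_y` on `ℝ×ℝ²`. -/
def et : ℝ × ℝ × ℝ := (1, 0, 0)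
def ex : ℝ × ℝ × ℝ := (0, 1, 0)
def ey : ℝ × ℝ × ℝ := (0, 0, 1)

/-- `(u,φ)` is a weak solution of the hyperbolic-hyperbolic Ishimori system on
`I × ℝ²`: the local integrability requirements together with the two integral
identities against all test functions supported in time in `I`. -/
def IsWeakIshimori (I : Set ℝ) (u : ℝ × ℝ × ℝ → Fin 3 → ℝ) (φ : ℝ × ℝ × ℝ → ℝ) : Prop :=
  LocallyIntegrableOn u {p : ℝ × ℝ × ℝ | p.1 ∈ I} volume ∧
  LocallyIntegrableOn (pdV ex u) {p : ℝ × ℝ × ℝ | p.1 ∈ I} volume ∧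
  LocallyIntegrableOn (pdV ey u) {p : ℝ × ℝ × ℝ | p.1 ∈ I} volume ∧
  LocallyIntegrableOn φ {p : ℝ × ℝ × ℝ | p.1 ∈ I} volume ∧
  LocallyIntegrableOn (fun p => φ p • pdV ex u p) {p : ℝ × ℝ × ℝ | p.1 ∈ I} volume ∧
  LocallyIntegrableOn (fun p => φ p • pdV ey u p) {p : ℝ × ℝ × ℝ | p.1 ∈ I} volume ∧
  LocallyIntegrableOn (fun p => dot3 (u p) (cross3 (pdV ex u p) (pdV ey u p)))
    {p : ℝ × ℝ × ℝ | p.1 ∈ I} volume ∧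
  (∀ ψ : ℝ × ℝ × ℝ → Fin 3 → ℝ, ContDiff ℝ (⊤ : ℕ∞) ψ → HasCompactSupport ψ →
    (∀ p : ℝ × ℝ × ℝ, p.1 ∉ I → ψ p = 0) →
    ∫ p : ℝ × ℝ × ℝ,
      (dot3 (cross3 (u p) (pdV ey u p)) (pdV ey ψ p)
        - dot3 (cross3 (u p) (pdV ex u p)) (pdV ex ψ p)
        + dot3 (u p) (pdV et ψ p)
        - φ p * (dot3 (pdV ey u p) (pdV ex ψ p) - dot3 (pdV ex u p) (pdV ey ψ p))) = 0) ∧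
  (∀ ρ : ℝ × ℝ × ℝ → ℝ, ContDiff ℝ (⊤ : ℕ∞) ρ → HasCompactSupport ρ →
    (∀ p : ℝ × ℝ × ℝ, p.1 ∉ I → ρ p = 0) →
    ∫ p : ℝ × ℝ × ℝ,
      ((pdR ex (pdR ex ρ) p - pdR ey (pdR ey ρ) p) * φ p
        + 2 * ρ p * dot3 (u p) (cross3 (pdV ex u p) (pdV ey u p))) = 0)

/-- The hyperbolic radial coordinate `a = √|x² − y²|`. -/
noncomputable def aOf (x y : ℝ) : ℝ := Real.sqrt |x ^ 2 - y ^ 2|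

/-- The hyperbolic angular coordinate `α = (1/2) log(|x+y|/|x−y|)`. -/
noncomputable def alphaOf (x y : ℝ) : ℝ := 1 / 2 * Real.log (|x + y| / |x - y|)

/-- The equivariant spin in terms of radial profiles `(s,β)` in the horizontal
(`|x| > |y|`) and vertical (`|x| < |y|`) cones; the rotation center `(1,0,0)` on the
cross `|x| = |y|`. -/
noncomputable def uDef (μ k : ℝ) (sh βh sv βv : ℝ → ℝ) (p : ℝ × ℝ × ℝ) : Fin 3 → ℝ :=
  if |p.2.1| > |p.2.2| then
    ![Real.cos (sh (aOf p.2.1 p.2.2)),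
      Real.sin (sh (aOf p.2.1 p.2.2)) *
        Real.cos (βh (aOf p.2.1 p.2.2) + k * alphaOf p.2.1 p.2.2 + μ * p.1),
      Real.sin (sh (aOf p.2.1 p.2.2)) *
        Real.sin (βh (aOf p.2.1 p.2.2) + k * alphaOf p.2.1 p.2.2 + μ * p.1)]
  else if |p.2.1| < |p.2.2| then
    ![Real.cos (sv (aOf p.2.1 p.2.2)),
      Real.sin (sv (aOf p.2.1 p.2.2)) *
        Real.cos (βv (aOf p.2.1 p.2.2) + k * alphaOf p.2.1 p.2.2 + μ * p.1),
      Real.sin (sv (aOf p.2.1 p.2.2)) *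
        Real.sin (βv (aOf p.2.1 p.2.2) + k * alphaOf p.2.1 p.2.2 + μ * p.1)]
  else ![1, 0, 0]

/-- The equivariant field `φ = cα + b log a − ∫₀^a (2k/a′)(1 − cos s(a′)) da′`. -/
noncomputable def φDef (k c b : ℝ) (sh sv : ℝ → ℝ) (p : ℝ × ℝ × ℝ) : ℝ :=
  if |p.2.1| > |p.2.2| then
    c * alphaOf p.2.1 p.2.2 + b * Real.log (aOf p.2.1 p.2.2)
      - ∫ a' in (0:ℝ)..aOf p.2.1 p.2.2, 2 * k / a' * (1 - Real.cos (sh a'))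
  else if |p.2.1| < |p.2.2| then
    c * alphaOf p.2.1 p.2.2 + b * Real.log (aOf p.2.1 p.2.2)
      - ∫ a' in (0:ℝ)..aOf p.2.1 p.2.2, 2 * k / a' * (1 - Real.cos (sv a'))
  else 0

/-! ## Part 1: integrals from `-∞` and the local solution near `-∞` -/

theorem tail_integrable {f : ℝ → ℝ} {K γ : ℝ} (hγ : 0 < γ) (hf : Continuous f)
    (hb : ∀ ρ ≤ 0, |f ρ| ≤ K * Real.exp (γ * ρ)) (σ : ℝ) : IntegrableOn f (Iic σ) := by
  have h0 : IntegrableOn f (Iic 0) := by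
    refine Integrable.mono' (g := fun ρ => K * Real.exp (γ * ρ))
      ((integrableOn_exp_mul_Iic hγ 0).const_mul K) hf.aestronglyMeasurable ?_
    refine (ae_restrict_iff' measurableSet_Iic).2 (Eventually.of_forall ?_)
    intro ρ hρ
    exact hb ρ hρ
  have h1 : IntegrableOn f (Icc 0 σ) := hf.continuousOn.integrableOn_compact isCompact_Icc
  refine (h0.union h1).mono_set ?_
  intro x hx
  rcases le_total x 0 with h | h
  · exact Or.inl h
  · exact Or.inr ⟨h, hx⟩

theorem tail_hasDerivAt {f : ℝ → ℝ} {K γ : ℝ} (hγ : 0 < γ) (hf : Continuous f)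
    (hb : ∀ ρ ≤ 0, |f ρ| ≤ K * Real.exp (γ * ρ)) (σ : ℝ) :
    HasDerivAt (fun σ => ∫ ρ in Iic σ, f ρ) (f σ) σ := by
  have hi := tail_integrable hγ hf hb
  have h : (fun σ => ∫ ρ in Iic σ, f ρ) = fun σ => (∫ ρ in Iic 0, f ρ) + ∫ ρ in (0:ℝ)..σ, f ρ := by
    ext σ
    rw [← intervalIntegral.integral_Iic_sub_Iic (hi 0) (hi σ)]
    ring
  rw [h]
  exact (hf.integral_hasStrictDerivAt 0 σ).hasDerivAt.const_add _

theorem tail_bound {f : ℝ → ℝ} {K γ : ℝ} (hγ : 0 < γ)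
    (hb : ∀ ρ ≤ 0, |f ρ| ≤ K * Real.exp (γ * ρ)) {σ : ℝ} (hσ : σ ≤ 0) :
    |∫ ρ in Iic σ, f ρ| ≤ K / γ * Real.exp (γ * σ) := by
  have := norm_integral_le_of_norm_le (μ := volume.restrict (Iic σ)) (f := f)
    (g := fun ρ => K * Real.exp (γ * ρ))
    ((integrableOn_exp_mul_Iic hγ σ).const_mul K) (by
      refine (ae_restrict_iff' measurableSet_Iic).2 (Eventually.of_forall ?_)
      intro ρ hρ
      exact hb ρ (le_trans hρ hσ))
  rw [integral_const_mul, integral_exp_mul_Iic hγ] at this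
  rw [Real.norm_eq_abs] at this
  calc _ ≤ _ := this
    _ = _ := by ring

/-- Solution of a weighted second order integral equation, tending to 1 at minus infinity. -/
theorem local_sol {κ δ C : ℝ} (hκ : 0 < κ) (hδ : 0 < δ) (hC : 0 ≤ C) (h : ℝ → ℝ → ℝ)
    (hcont : ContinuousOn (fun q : ℝ × ℝ => h q.1 q.2) (Iic 0 ×ˢ Icc 0 2))
    (hl : ∀ ρ ≤ 0, ∀ v ∈ Icc (0:ℝ) 2, ∀ w ∈ Icc (0:ℝ) 2,
      |h ρ v - h ρ w| ≤ C * Real.exp (δ * ρ) * |v - w|)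
    (h0 : ∀ ρ, h ρ 0 = 0) :
    ∃ T ≤ (0:ℝ), ∃ v w : ℝ → ℝ, ∃ D : ℝ, ∀ τ < T,
      HasDerivAt v (w τ) τ ∧ HasDerivAt w (-2 * κ * w τ + h τ (v τ)) τ ∧
      1/2 ≤ v τ ∧ v τ ≤ 3/2 ∧ |w τ| ≤ D := by
  set cl : ℝ → ℝ := fun v => max 0 (min v 2) with hcl
  have cl_mem : ∀ v, cl v ∈ Icc (0:ℝ) 2 := fun v =>
    ⟨le_max_left _ _, max_le (by norm_num) (min_le_right _ _)⟩
  have cl_lip : ∀ v w, |cl v - cl w| ≤ |v - w| := by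
    intro v w
    have h1 := abs_max_sub_max_le_max 0 (min v 2) 0 (min w 2)
    have h2 := abs_min_sub_min_le_max v 2 w 2
    simp only [sub_self, abs_zero] at h1 h2
    rw [max_eq_right (abs_nonneg (min v 2 - min w 2))] at h1
    rw [max_eq_left (abs_nonneg (v - w))] at h2
    exact h1.trans h2
  have cl_id : ∀ v ∈ Icc (0:ℝ) 2, cl v = v := by
    intro v hv
    simp only [hcl]
    rw [min_eq_left hv.2, max_eq_right hv.1]
  set hc : ℝ → ℝ → ℝ := fun ρ v => h (min ρ 0) (cl v) with hhc
  have hc_cont : ∀ v : ℝ → ℝ, Continuous v → Continuous (fun ρ => hc ρ (v ρ)) := by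
    intro v hv
    have : Continuous (fun ρ : ℝ => ((min ρ 0, cl (v ρ)) : ℝ × ℝ)) := by
      simp only [hcl]; fun_prop
    exact hcont.comp_continuous this (fun ρ => Set.mem_prod.2 ⟨Set.mem_Iic.2 (min_le_right _ _), cl_mem _⟩)
  have hc_lip : ∀ ρ ≤ 0, ∀ v w, |hc ρ v - hc ρ w| ≤ C * Real.exp (δ * ρ) * |v - w| := by
    intro ρ hρ v w
    simp only [hhc, min_eq_left hρ]
    refine (hl ρ hρ _ (cl_mem v) _ (cl_mem w)).trans ?_
    exact mul_le_mul_of_nonneg_left (cl_lip v w) (by positivity)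
  have hc_bd : ∀ ρ ≤ 0, ∀ v, |hc ρ v| ≤ 2 * C * Real.exp (δ * ρ) := by
    intro ρ hρ v
    simp only [hhc, min_eq_left hρ]
    have := hl ρ hρ _ (cl_mem v) 0 ⟨le_rfl, by norm_num⟩
    rw [h0, sub_zero, sub_zero] at this
    refine this.trans ?_
    have h3 := cl_mem v
    rw [abs_of_nonneg h3.1]
    have : 0 ≤ C * Real.exp (δ * ρ) := by positivity
    nlinarith [h3.2]
  -- the inner integral
  set W : (ℝ → ℝ) → ℝ → ℝ := fun v σ =>
    Real.exp (-(2 * κ) * σ) * ∫ ρ in Iic σ, Real.exp (2 * κ * ρ) * hc ρ (v ρ) with hW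
  have hγ : 0 < 2 * κ + δ := by positivity
  have in_cont : ∀ v : ℝ → ℝ, Continuous v →
      Continuous (fun ρ => Real.exp (2 * κ * ρ) * hc ρ (v ρ)) := by
    intro v hv
    exact (by fun_prop : Continuous fun ρ : ℝ => Real.exp (2 * κ * ρ)).mul (hc_cont v hv)
  have in_bd : ∀ v : ℝ → ℝ, ∀ ρ ≤ 0,
      |Real.exp (2 * κ * ρ) * hc ρ (v ρ)| ≤ 2 * C * Real.exp ((2 * κ + δ) * ρ) := by
    intro v ρ hρ
    rw [abs_mul, abs_of_pos (Real.exp_pos _), add_mul, Real.exp_add]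
    have := hc_bd ρ hρ (v ρ)
    have h4 := Real.exp_pos (2 * κ * ρ)
    nlinarith
  have W_deriv : ∀ v : ℝ → ℝ, Continuous v → ∀ σ,
      HasDerivAt (W v) (-2 * κ * W v σ + hc σ (v σ)) σ := by
    intro v hv σ
    have h1 := tail_hasDerivAt hγ (in_cont v hv) (in_bd v) σ
    have h2 : HasDerivAt (fun σ : ℝ => Real.exp (-(2 * κ) * σ))
        (Real.exp (-(2 * κ) * σ) * (-(2 * κ))) σ := by
      simpa using ((hasDerivAt_id σ).const_mul (-(2 * κ))).exp
    have h3 := h2.mul h1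
    refine h3.congr_deriv ?_
    have : Real.exp (-(2 * κ) * σ) * Real.exp (2 * κ * σ) = 1 := by
      rw [← Real.exp_add]; simp
    simp only [hW]
    linear_combination (hc σ (v σ)) * this
  have W_cont : ∀ v : ℝ → ℝ, Continuous v → Continuous (W v) := fun v hv =>
    continuous_iff_continuousAt.2 fun σ => (W_deriv v hv σ).continuousAt
  have exp_aux : ∀ σ : ℝ, Real.exp (-(2 * κ) * σ) * Real.exp ((2 * κ + δ) * σ)
      = Real.exp (δ * σ) := by
    intro σ; rw [← Real.exp_add]; ring_nf
  have W_bd : ∀ v : ℝ → ℝ, ∀ σ ≤ 0, |W v σ| ≤ 2 * C / (2 * κ + δ) * Real.exp (δ * σ) := by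
    intro v σ hσ
    have := tail_bound hγ (in_bd v) hσ
    simp only [hW]
    rw [abs_mul, abs_of_pos (Real.exp_pos _), ← exp_aux]
    have h4 := Real.exp_pos (-(2 * κ) * σ)
    calc _ ≤ Real.exp (-(2 * κ) * σ) * (2 * C / (2 * κ + δ) * Real.exp ((2 * κ + δ) * σ)) := by
            gcongr
      _ = _ := by ring
  have W_lip : ∀ v w : ℝ → ℝ, Continuous v → Continuous w → ∀ d : ℝ, (∀ ρ, |v ρ - w ρ| ≤ d) →
      ∀ σ ≤ 0, |W v σ - W w σ| ≤ C * d / (2 * κ + δ) * Real.exp (δ * σ) := by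
    intro v w hv hw d hd σ hσ
    have hb : ∀ ρ ≤ 0, |Real.exp (2 * κ * ρ) * hc ρ (v ρ) - Real.exp (2 * κ * ρ) * hc ρ (w ρ)|
        ≤ C * d * Real.exp ((2 * κ + δ) * ρ) := by
      intro ρ hρ
      rw [← mul_sub, abs_mul, abs_of_pos (Real.exp_pos _), add_mul, Real.exp_add]
      have h5 : |hc ρ (v ρ) - hc ρ (w ρ)| ≤ C * Real.exp (δ * ρ) * d :=
        (hc_lip ρ hρ _ _).trans (mul_le_mul_of_nonneg_left (hd ρ) (by positivity))
      calc _ ≤ Real.exp (2 * κ * ρ) * (C * Real.exp (δ * ρ) * d) := by gcongr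
        _ = _ := by ring
    have := tail_bound hγ hb hσ
    rw [integral_sub (tail_integrable hγ (in_cont v hv) (in_bd v) σ)
      (tail_integrable hγ (in_cont w hw) (in_bd w) σ)] at this
    simp only [hW]
    rw [← mul_sub, abs_mul, abs_of_pos (Real.exp_pos _), ← exp_aux]
    have h4 := Real.exp_pos (-(2 * κ) * σ)
    calc _ ≤ Real.exp (-(2 * κ) * σ) * (C * d / (2 * κ + δ) * Real.exp ((2 * κ + δ) * σ)) := by
            gcongr
      _ = _ := by ring
  -- choice of T
  set Q : ℝ := 2 * C / (2 * κ + δ) / δ with hQ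
  have hQ0 : 0 ≤ Q := by positivity
  obtain ⟨T, hT0, hT⟩ : ∃ T ≤ (0:ℝ), Q * Real.exp (δ * T) ≤ 1/2 := by
    have ht : Tendsto (fun T : ℝ => Q * Real.exp (δ * T)) atBot (nhds (Q * 0)) := by
      refine Tendsto.const_mul _ ?_
      exact Real.tendsto_exp_atBot.comp (tendsto_id.const_mul_atBot hδ)
    rw [mul_zero] at ht
    have := (ht.eventually (ge_mem_nhds (show (0:ℝ) < 1/2 by norm_num))).and (eventually_le_atBot 0)
    obtain ⟨T, h1, h2⟩ := this.exists
    exact ⟨T, h2, h1⟩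
  set V : (ℝ → ℝ) → ℝ → ℝ := fun v τ => 1 + ∫ σ in Iic (min τ T), W v σ with hV
  have hmin : ∀ τ : ℝ, min τ T ≤ 0 := fun τ => (min_le_right _ _).trans hT0
  have hexp : ∀ τ : ℝ, Real.exp (δ * min τ T) ≤ Real.exp (δ * T) := by
    intro τ
    apply Real.exp_le_exp.2
    exact mul_le_mul_of_nonneg_left (min_le_right _ _) hδ.le
  have V_cont : ∀ v : ℝ → ℝ, Continuous v → Continuous (V v) := by
    intro v hv
    have h1 : Continuous (fun τ => ∫ σ in Iic τ, W v σ) :=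
      continuous_iff_continuousAt.2 fun σ =>
        (tail_hasDerivAt hδ (W_cont v hv) (W_bd v) σ).continuousAt
    have h2 : Continuous (fun τ : ℝ => min τ T) := by fun_prop
    exact continuous_const.add (h1.comp h2)
  have V_bd : ∀ v : ℝ → ℝ, ∀ τ, |V v τ - 1| ≤ 1/2 := by
    intro v τ
    have := tail_bound hδ (W_bd v) (hmin τ)
    simp only [hV, add_sub_cancel_left]
    refine this.trans (le_trans ?_ hT)
    exact mul_le_mul_of_nonneg_left (hexp τ) hQ0
  have V_lip : ∀ v w : ℝ → ℝ, Continuous v → Continuous w → ∀ d : ℝ, (∀ ρ, |v ρ - w ρ| ≤ d) →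
      0 ≤ d → ∀ τ, |V v τ - V w τ| ≤ 1/2 * d := by
    intro v w hv hw d hd hd0 τ
    have := tail_bound hδ (W_lip v w hv hw d hd) (hmin τ)
    rw [integral_sub (tail_integrable hδ (W_cont v hv) (W_bd v) _)
      (tail_integrable hδ (W_cont w hw) (W_bd w) _)] at this
    simp only [hV, add_sub_add_left_eq_sub]
    refine this.trans ?_
    have e : C * d / (2 * κ + δ) / δ = Q / 2 * d := by simp only [hQ]; ring
    rw [e]
    have h6 := hexp τ
    have h7 : Q * Real.exp (δ * min τ T) ≤ 1 / 2 :=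
      (mul_le_mul_of_nonneg_left h6 hQ0).trans hT
    nlinarith
  let Φ : BoundedContinuousFunction ℝ ℝ → BoundedContinuousFunction ℝ ℝ := fun v =>
    BoundedContinuousFunction.ofNormedAddCommGroup (V v) (V_cont v v.continuous) 2 (by
      intro τ
      have := abs_le.1 (V_bd v τ)
      rw [Real.norm_eq_abs, abs_le]
      constructor <;> linarith)
  have hΦ : ContractingWith (1/2) Φ := by
    refine ⟨by rw [← NNReal.coe_lt_coe]; norm_num, ?_⟩
    refine LipschitzWith.of_dist_le_mul fun v w => ?_
    rw [BoundedContinuousFunction.dist_le (by positivity)]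
    intro τ
    have := V_lip v w v.continuous w.continuous (dist v w)
      (fun ρ => by rw [← Real.dist_eq]; exact BoundedContinuousFunction.dist_coe_le_dist ρ)
      dist_nonneg τ
    rw [Real.dist_eq]
    simpa [Φ] using this
  set v := ContractingWith.fixedPoint Φ hΦ with hvdef
  have hfix : Φ v = v := hΦ.fixedPoint_isFixedPt
  have hv : ∀ τ, V v τ = v τ := fun τ => congrArg (fun f => f τ) hfix
  refine ⟨T, hT0, v, W v, 2 * C / (2 * κ + δ), fun τ hτ => ?_⟩
  have hτ0 : τ ≤ 0 := hτ.le.trans hT0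
  have hvb := abs_le.1 (V_bd v τ)
  rw [hv τ] at hvb
  refine ⟨?_, ?_, by linarith, by linarith, ?_⟩
  · have h1 := (tail_hasDerivAt hδ (W_cont v v.continuous) (W_bd v) τ).const_add 1
    refine h1.congr_of_eventuallyEq ?_
    filter_upwards [Iio_mem_nhds hτ] with σ hσ
    rw [← hv σ]
    simp only [hV]
    rw [min_eq_left (le_of_lt hσ)]
  · have h1 := W_deriv v v.continuous τ
    have h2 : hc τ (v τ) = h τ (v τ) := by
      simp only [hhc]
      rw [min_eq_left hτ0, cl_id]
      constructor <;> linarith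
    rwa [h2] at h1
  · refine (W_bd v τ hτ0).trans ?_
    have : Real.exp (δ * τ) ≤ 1 := Real.exp_le_one_iff.2 (mul_nonpos_of_nonneg_of_nonpos hδ.le hτ0)
    exact mul_le_of_le_one_right (by positivity) this

/-! ## Part 2: global forward existence from a priori bounds -/

theorem lip_ball {F : ℝ → ℝ × ℝ → ℝ × ℝ} (hF : ContDiff ℝ 1 (fun q : ℝ × ℝ × ℝ => F q.1 q.2))
    (t0 T R : ℝ) : ∃ K : NNReal, ∀ t ∈ Icc t0 T, LipschitzOnWith K (F t) (Metric.closedBall 0 R) := by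
  obtain ⟨K, hK⟩ := hF.contDiffOn.exists_lipschitzOnWith (s := Icc t0 T ×ˢ Metric.closedBall 0 R)
    one_ne_zero ((convex_Icc _ _).prod (convex_closedBall _ _)) 
    (isCompact_Icc.prod (isCompact_closedBall _ _))
  refine ⟨K, fun t ht => LipschitzOnWith.of_dist_le_mul fun x hx y hy => ?_⟩
  have := hK.dist_le_mul (t, x) ⟨ht, hx⟩ (t, y) ⟨ht, hy⟩
  simpa [Prod.dist_eq] using this

theorem sol_Icc {F : ℝ → ℝ × ℝ → ℝ × ℝ} (hF : ContDiff ℝ 1 (fun q : ℝ × ℝ × ℝ => F q.1 q.2))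
    {t0 T R : ℝ} {z0 : ℝ × ℝ} (hT : t0 < T)
    (hap : ∀ T' ∈ Ioc t0 T, ∀ z : ℝ → ℝ × ℝ, z t0 = z0 →
      (∀ t ∈ Icc t0 T', HasDerivWithinAt z (F t (z t)) (Icc t0 T') t) → ‖z T'‖ < R) :
    ∃ z : ℝ → ℝ × ℝ, z t0 = z0 ∧ ∀ t ∈ Icc t0 T, HasDerivWithinAt z (F t (z t)) (Icc t0 T) t := by
  set R' : ℝ := max R (‖z0‖ + 1) with hR'
  have hR'0 : 0 < R' := lt_of_lt_of_le (by positivity) (le_max_right _ _)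
  have hz0 : ‖z0‖ < R' := lt_of_lt_of_le (by linarith) (le_max_right _ _)
  set cl : ℝ → ℝ := fun v => max (-R') (min v R') with hcl
  have cl_lip : ∀ v w, |cl v - cl w| ≤ |v - w| := by
    intro v w
    have h1 := abs_max_sub_max_le_max (-R') (min v R') (-R') (min w R')
    have h2 := abs_min_sub_min_le_max v R' w R'
    simp only [sub_self, abs_zero] at h1 h2
    rw [max_eq_right (abs_nonneg (min v R' - min w R'))] at h1
    rw [max_eq_left (abs_nonneg (v - w))] at h2
    exact h1.trans h2
  have cl_mem : ∀ v, |cl v| ≤ R' := fun v => by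
    rw [abs_le]
    exact ⟨le_max_left _ _, max_le (by linarith) (min_le_right _ _)⟩
  have cl_id : ∀ v, |v| ≤ R' → cl v = v := by
    intro v hv
    rw [abs_le] at hv
    simp only [hcl]
    rw [min_eq_left hv.2, max_eq_right hv.1]
  set pr : ℝ × ℝ → ℝ × ℝ := fun z => (cl z.1, cl z.2) with hpr
  have pr_mem : ∀ z, pr z ∈ Metric.closedBall (0 : ℝ × ℝ) R' := by
    intro z
    rw [mem_closedBall_zero_iff, Prod.norm_def]
    exact max_le (cl_mem _) (cl_mem _)
  have pr_lip : ∀ z w, dist (pr z) (pr w) ≤ dist z w := by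
    intro z w
    rw [Prod.dist_eq, Prod.dist_eq]
    exact max_le_max (cl_lip _ _) (cl_lip _ _)
  have pr_id : ∀ z, ‖z‖ ≤ R' → pr z = z := by
    intro z hz
    rw [Prod.norm_def, max_le_iff] at hz
    simp only [hpr]
    rw [cl_id _ hz.1, cl_id _ hz.2]
  obtain ⟨K, hK⟩ := lip_ball hF t0 T R'
  obtain ⟨B, hB⟩ : ∃ B : ℝ, ∀ t ∈ Icc t0 T, ∀ z ∈ Metric.closedBall (0 : ℝ × ℝ) R', ‖F t z‖ ≤ B := by
    obtain ⟨B, hB⟩ := (isCompact_Icc (a := t0) (b := T)).prod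
      (isCompact_closedBall (0 : ℝ × ℝ) R') |>.exists_bound_of_continuousOn hF.continuous.continuousOn
    exact ⟨B, fun t ht z hz => hB (t, z) ⟨ht, hz⟩⟩
  have hB0 : 0 ≤ B := (norm_nonneg _).trans (hB t0 ⟨le_rfl, hT.le⟩ 0 (by simp [hR'0.le]))
  have hPL : IsPicardLindelof (fun t z => F t (pr z)) (⟨t0, le_rfl, hT.le⟩ : Icc t0 T) z0
      ⟨B * (T - t0), by have := sub_pos.2 hT; positivity⟩ 0 ⟨B, hB0⟩ K := by
    constructor
    · intro t ht
      refine LipschitzOnWith.of_dist_le_mul fun x _ y _ => ?_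
      refine ((hK t ht).dist_le_mul _ (pr_mem x) _ (pr_mem y)).trans ?_
      exact mul_le_mul_of_nonneg_left (pr_lip x y) K.2
    · intro x _
      have : Continuous (fun t : ℝ => (t, pr x)) := by fun_prop
      exact (hF.continuous.comp this).continuousOn
    · intro t ht x _
      exact hB t ht _ (pr_mem x)
    · simp only [sub_self, NNReal.coe_zero, sub_zero]
      rw [max_eq_left (by linarith)]
      exact le_rfl
  obtain ⟨z, hz0', hz⟩ := hPL.exists_eq_forall_mem_Icc_hasDerivWithinAt₀
  simp only at hz0' hz
  have hzc : ContinuousOn z (Icc t0 T) := fun t ht => (hz t ht).continuousWithinAt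
  have key : ∀ t ∈ Icc t0 T, ‖z t‖ < R' := by
    by_contra! hcon
    obtain ⟨t1, ht1, hn1⟩ := hcon
    have hclosed : IsClosed (Icc t0 T ∩ (fun t => ‖z t‖) ⁻¹' Ici R') :=
      hzc.norm.preimage_isClosed_of_isClosed isClosed_Icc isClosed_Ici
    have hcpt : IsCompact (Icc t0 T ∩ (fun t => ‖z t‖) ⁻¹' Ici R') :=
      isCompact_Icc.of_isClosed_subset hclosed inter_subset_left
    obtain ⟨ts, ⟨hts, htsn⟩, hleast⟩ := hcpt.exists_isLeast ⟨t1, ht1, hn1⟩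
    have htsn' : R' ≤ ‖z ts‖ := htsn
    have ht0s : t0 < ts := by
      rcases eq_or_lt_of_le hts.1 with h | h
      · rw [← h, hz0'] at htsn'; linarith
      · exact h
    have hsub : Icc t0 ts ⊆ Icc t0 T := Icc_subset_Icc_right hts.2
    have hle : ∀ t ∈ Icc t0 ts, ‖z t‖ ≤ R' := by
      have hcl2 : IsClosed (Icc t0 ts ∩ (fun t => ‖z t‖) ⁻¹' Iic R') :=
        (hzc.mono hsub).norm.preimage_isClosed_of_isClosed isClosed_Icc isClosed_Iic
      have hsub2 : Ico t0 ts ⊆ Icc t0 ts ∩ (fun t => ‖z t‖) ⁻¹' Iic R' := by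
        intro t ht
        refine ⟨Ico_subset_Icc_self ht, ?_⟩
        by_contra hh
        have hh' : R' < ‖z t‖ := not_le.1 hh
        have := hleast ⟨hsub (Ico_subset_Icc_self ht), hh'.le⟩
        exact absurd ht.2 (not_lt.2 this)
      have := closure_minimal hsub2 hcl2
      rw [closure_Ico ht0s.ne] at this
      exact fun t ht => (this ht).2
    have := hap ts ⟨ht0s, hts.2⟩ z hz0' (fun t ht => by
      have h1 := (hz t (hsub ht)).mono hsub
      rwa [pr_id _ (hle t ht)] at h1)
    exact absurd (lt_of_lt_of_le this (le_max_left _ _)) (not_lt.2 htsn')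
  refine ⟨z, hz0', fun t ht => ?_⟩
  have h1 := hz t ht
  rwa [pr_id _ (key t ht).le] at h1

theorem sol_unique {F : ℝ → ℝ × ℝ → ℝ × ℝ} (hF : ContDiff ℝ 1 (fun q : ℝ × ℝ × ℝ => F q.1 q.2))
    {t0 T : ℝ} {z w : ℝ → ℝ × ℝ} (h0 : z t0 = w t0)
    (hz : ∀ t ∈ Icc t0 T, HasDerivWithinAt z (F t (z t)) (Icc t0 T) t)
    (hw : ∀ t ∈ Icc t0 T, HasDerivWithinAt w (F t (w t)) (Icc t0 T) t) : EqOn z w (Icc t0 T) := by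
  have hzc : ContinuousOn z (Icc t0 T) := fun t ht => (hz t ht).continuousWithinAt
  have hwc : ContinuousOn w (Icc t0 T) := fun t ht => (hw t ht).continuousWithinAt
  obtain ⟨R1, hR1⟩ := isCompact_Icc.exists_bound_of_continuousOn hzc
  obtain ⟨R2, hR2⟩ := isCompact_Icc.exists_bound_of_continuousOn hwc
  obtain ⟨K, hK⟩ := lip_ball hF t0 T (max R1 R2)
  have aux : ∀ (y : ℝ → ℝ × ℝ), (∀ t ∈ Icc t0 T, HasDerivWithinAt y (F t (y t)) (Icc t0 T) t) →
      ∀ t ∈ Ico t0 T, HasDerivWithinAt y (F t (y t)) (Ici t) t := by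
    intro y hy t ht
    refine ((hy t (Ico_subset_Icc_self ht)).mono (Icc_subset_Icc_left ht.1)).mono_of_mem_nhdsWithin
      (Icc_mem_nhdsGE ht.2)
  refine ODE_solution_unique_of_mem_Icc_right (v := F) (s := fun _ => Metric.closedBall 0 (max R1 R2))
    (K := K)
    (fun t ht => hK t (Ico_subset_Icc_self ht)) hzc (aux z hz) ?_ hwc (aux w hw) ?_ h0
  · intro t ht
    rw [mem_closedBall_zero_iff]
    exact (hR1 t (Ico_subset_Icc_self ht)).trans (le_max_left _ _)
  · intro t ht
    rw [mem_closedBall_zero_iff]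
    exact (hR2 t (Ico_subset_Icc_self ht)).trans (le_max_right _ _)

theorem sol_global {F : ℝ → ℝ × ℝ → ℝ × ℝ} (hF : ContDiff ℝ 1 (fun q : ℝ × ℝ × ℝ => F q.1 q.2))
    {t0 : ℝ} {z0 : ℝ × ℝ}
    (hap : ∀ T > t0, ∃ R, ∀ T' ∈ Ioc t0 T, ∀ z : ℝ → ℝ × ℝ, z t0 = z0 →
      (∀ t ∈ Icc t0 T', HasDerivWithinAt z (F t (z t)) (Icc t0 T') t) → ‖z T'‖ < R) :
    ∃ z : ℝ → ℝ × ℝ, z t0 = z0 ∧ ∀ t ∈ Ici t0, HasDerivWithinAt z (F t (z t)) (Ici t0) t := by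
  have hex : ∀ n : ℕ, ∃ z : ℝ → ℝ × ℝ, z t0 = z0 ∧
      ∀ t ∈ Icc t0 (t0 + n + 1), HasDerivWithinAt z (F t (z t)) (Icc t0 (t0 + n + 1)) t := by
    intro n
    have hT : t0 < t0 + n + 1 := by have : (0:ℝ) ≤ n := n.cast_nonneg; linarith
    obtain ⟨R, hR⟩ := hap _ hT
    exact sol_Icc hF hT hR
  choose Z hZ0 hZ using hex
  have huniq : ∀ n m : ℕ, n ≤ m → ∀ t ∈ Icc t0 (t0 + n + 1), Z n t = Z m t := by
    intro n m hnm
    have hnm' : (n:ℝ) ≤ m := by exact_mod_cast hnm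
    have hsub : Icc t0 (t0 + n + 1) ⊆ Icc t0 (t0 + m + 1) := Icc_subset_Icc_right (by linarith)
    exact sol_unique hF ((hZ0 n).trans (hZ0 m).symm) (hZ n)
      (fun t ht => (hZ m t (hsub ht)).mono hsub)
  have hfl : ∀ t : ℝ, t ∈ Ici t0 → t ∈ Icc t0 (t0 + (⌊t - t0⌋₊ : ℕ) + 1) := by
    intro t ht
    have := Nat.lt_floor_add_one (t - t0)
    exact ⟨ht, by linarith⟩
  have hany : ∀ m : ℕ, ∀ t ∈ Icc t0 (t0 + m + 1), Z ⌊t - t0⌋₊ t = Z m t := by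
    intro m t ht
    rcases le_total ⌊t - t0⌋₊ m with h | h
    · exact huniq _ _ h t (hfl t ht.1)
    · exact (huniq _ _ h t ht).symm
  refine ⟨fun t => Z ⌊t - t0⌋₊ t, hZ0 _, fun t ht => ?_⟩
  set m := ⌊t - t0⌋₊ with hm
  have htlt : t < t0 + m + 1 := by
    have := Nat.lt_floor_add_one (t - t0)
    linarith
  have h1 := hZ m t ⟨ht, htlt.le⟩
  have h2 : HasDerivWithinAt (Z m) (F t (Z m t)) (Ici t0) t := by
    refine h1.mono_of_mem_nhdsWithin ?_
    rw [← Ici_inter_Iic]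
    exact inter_mem self_mem_nhdsWithin (mem_nhdsWithin_of_mem_nhds (Iic_mem_nhds htlt))
  refine h2.congr_of_eventuallyEq ?_ rfl
  have : Iic (t0 + m + 1) ∈ nhdsWithin t (Ici t0) := mem_nhdsWithin_of_mem_nhds (Iic_mem_nhds htlt)
  filter_upwards [this, self_mem_nhdsWithin] with s hs1 hs2
  exact hany m s ⟨hs2, hs1⟩

/-! ## Part 3: the radial profile equation -/

noncomputable def GG (k c b s : ℝ) : ℝ :=
  Real.sin s * (-c ^ 2 / (1 + Real.cos s) ^ 2 - k * b + 2 * k ^ 2 - 3 * k ^ 2 * Real.cos s)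

noncomputable def GG' (k c b s : ℝ) : ℝ :=
  Real.cos s * (-c ^ 2 / (1 + Real.cos s) ^ 2 - k * b + 2 * k ^ 2 - 3 * k ^ 2 * Real.cos s)
    + Real.sin s ^ 2 * (-2 * c ^ 2 / (1 + Real.cos s) ^ 3 + 3 * k ^ 2)

theorem one_add_cos_pos {s : ℝ} (h0 : 0 ≤ s) (h2 : s ≤ 2) : 0 < 1 + Real.cos s := by
  have h := Real.cos_lt_cos_of_nonneg_of_le_pi h0 le_rfl (by linarith [Real.pi_gt_three])
  rw [Real.cos_pi] at h
  linarith

theorem GG_deriv (k c b : ℝ) {s : ℝ} (h : 1 + Real.cos s ≠ 0) :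
    HasDerivAt (GG k c b) (GG' k c b s) s := by
  have h1 : HasDerivAt (fun s => (1 + Real.cos s) ^ 2) (2 * (1 + Real.cos s) * (-Real.sin s)) s := by
    simpa using ((Real.hasDerivAt_cos s).const_add 1).fun_pow 2
  have h2 := ((hasDerivAt_const s (-c ^ 2)).fun_div h1 (pow_ne_zero 2 h))
  have h3 := ((h2.sub_const (k * b)).add_const (2 * k ^ 2)).fun_sub
    ((Real.hasDerivAt_cos s).const_mul (3 * k ^ 2))
  have h4 := (Real.hasDerivAt_sin s).fun_mul h3
  refine h4.congr_deriv ?_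
  unfold GG'
  field_simp
  ring

theorem GG_lip {k c b κ : ℝ} (hκ2 : κ ^ 2 = -(k ^ 2 + b * k) - c ^ 2 / 4) :
    ∃ C, 0 ≤ C ∧ ∀ r ∈ Icc (0:ℝ) 1, ∀ s ∈ Icc 0 (2 * r), ∀ s' ∈ Icc 0 (2 * r),
      |(GG k c b s - κ ^ 2 * s) - (GG k c b s' - κ ^ 2 * s')| ≤ C * r * |s - s'| := by
  have hne : ∀ x ∈ Icc (0:ℝ) 2, 1 + Real.cos x ≠ 0 := fun x hx => (one_add_cos_pos hx.1 hx.2).ne'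
  have hcd : ContDiffOn ℝ 1 (GG' k c b) (Icc 0 2) := by
    unfold GG'
    have hd : ContDiffOn ℝ 1 (fun x : ℝ => 1 + Real.cos x) (Icc 0 2) := by fun_prop
    refine ContDiffOn.add (ContDiffOn.mul (by fun_prop) ?_) (ContDiffOn.mul (by fun_prop) ?_)
    · refine ContDiffOn.sub (ContDiffOn.add (ContDiffOn.sub ?_ (by fun_prop)) (by fun_prop))
        (by fun_prop)
      exact ContDiffOn.div contDiffOn_const (hd.pow 2) (fun x hx => pow_ne_zero _ (hne x hx))
    · refine ContDiffOn.add ?_ (by fun_prop)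
      exact ContDiffOn.div contDiffOn_const (hd.pow 3) (fun x hx => pow_ne_zero _ (hne x hx))
  obtain ⟨K, hK⟩ := hcd.exists_lipschitzOnWith one_ne_zero (convex_Icc _ _) isCompact_Icc
  refine ⟨2 * K, by positivity, fun r hr s hs s' hs' => ?_⟩
  have hsub : Icc 0 (2 * r) ⊆ Icc (0:ℝ) 2 := Icc_subset_Icc_right (by linarith [hr.2])
  have h0 : GG' k c b 0 = κ ^ 2 := by
    unfold GG'; rw [hκ2]; simp; ring
  have hd : ∀ x ∈ Icc 0 (2 * r), HasDerivWithinAt (fun s => GG k c b s - κ ^ 2 * s)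
      (GG' k c b x - κ ^ 2) (Icc 0 (2 * r)) x := by
    intro x hx
    have h1 := (GG_deriv k c b (hne x (hsub hx))).fun_sub ((hasDerivAt_id x).const_mul (κ ^ 2))
    simpa using h1.hasDerivWithinAt
  have hbd : ∀ x ∈ Icc 0 (2 * r), ‖GG' k c b x - κ ^ 2‖ ≤ 2 * K * r := by
    intro x hx
    have := hK.dist_le_mul x (hsub hx) 0 ⟨le_rfl, by norm_num⟩
    rw [h0, Real.dist_eq, Real.dist_eq, sub_zero, abs_of_nonneg hx.1] at this
    rw [Real.norm_eq_abs]
    have hK0 := K.2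
    refine this.trans ?_
    calc (K:ℝ) * x ≤ K * (2 * r) := by gcongr; exact hx.2
      _ = _ := by ring
  have := Convex.norm_image_sub_le_of_norm_hasDerivWithin_le hd hbd (convex_Icc _ _) hs' hs
  simpa [Real.norm_eq_abs] using this

/-- Local solution near `-∞`. -/
theorem ode_local {k c b κ ν : ℝ} (hκ : 0 < κ) (hκ2 : κ ^ 2 = -(k ^ 2 + b * k) - c ^ 2 / 4) :
    ∃ T ≤ (0:ℝ), ∃ S P : ℝ → ℝ, ∃ D : ℝ, ∀ τ < T,
      HasDerivAt S (P τ) τ ∧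
      HasDerivAt P (GG k c b (S τ) + ν * Real.exp (2 * τ) * Real.sin (S τ)) τ ∧
      0 < S τ ∧ S τ ≤ 3/2 ∧ |S τ| ≤ D * Real.exp (κ * τ) ∧ |P τ| ≤ D * Real.exp (κ * τ) := by
  obtain ⟨C, hC0, hC⟩ := GG_lip hκ2
  set δ := min κ 2 with hδ
  have hδ0 : 0 < δ := lt_min hκ (by norm_num)
  have hexp1 : ∀ ρ ≤ 0, Real.exp (κ * ρ) ≤ Real.exp (δ * ρ) := fun ρ hρ =>
    Real.exp_le_exp.2 (mul_le_mul_of_nonpos_right (min_le_left _ _) hρ)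
  have hexp2 : ∀ ρ ≤ 0, Real.exp (2 * ρ) ≤ Real.exp (δ * ρ) := fun ρ hρ =>
    Real.exp_le_exp.2 (mul_le_mul_of_nonpos_right (min_le_right _ _) hρ)
  have hone : ∀ ρ ≤ 0, Real.exp (κ * ρ) ≤ 1 := fun ρ hρ =>
    Real.exp_le_one_iff.2 (mul_nonpos_of_nonneg_of_nonpos hκ.le hρ)
  have hee : ∀ ρ : ℝ, Real.exp (-κ * ρ) * Real.exp (κ * ρ) = 1 := by
    intro ρ; rw [← Real.exp_add]; simp
  set h : ℝ → ℝ → ℝ := fun ρ v => Real.exp (-κ * ρ) *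
    ((GG k c b (Real.exp (κ * ρ) * v) - κ ^ 2 * (Real.exp (κ * ρ) * v))
      + ν * Real.exp (2 * ρ) * Real.sin (Real.exp (κ * ρ) * v)) with hh
  have hmem : ∀ ρ ≤ 0, ∀ v ∈ Icc (0:ℝ) 2,
      Real.exp (κ * ρ) * v ∈ Icc 0 (2 * Real.exp (κ * ρ)) := by
    intro ρ _ v hv
    have := Real.exp_pos (κ * ρ)
    exact ⟨mul_nonneg this.le hv.1, by nlinarith [hv.2]⟩
  have hcont : ContinuousOn (fun q : ℝ × ℝ => h q.1 q.2) (Iic 0 ×ˢ Icc 0 2) := by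
    have hne : ∀ q ∈ (Iic (0:ℝ) ×ˢ Icc (0:ℝ) 2), 1 + Real.cos (Real.exp (κ * q.1) * q.2) ≠ 0 := by
      intro q hq
      have h1 := hmem q.1 hq.1 q.2 hq.2
      exact (one_add_cos_pos h1.1 (by linarith [h1.2, hone q.1 hq.1])).ne'
    simp only [hh]
    unfold GG
    refine ContinuousOn.mul (by fun_prop) (ContinuousOn.add (ContinuousOn.sub
      (ContinuousOn.mul (by fun_prop) ?_) (by fun_prop)) (by fun_prop))
    refine ContinuousOn.sub (ContinuousOn.add (ContinuousOn.sub ?_ (by fun_prop)) (by fun_prop))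
        (by fun_prop)
    exact ContinuousOn.div continuousOn_const (by fun_prop) (fun x hx => pow_ne_zero _ (hne x hx))
  have hlip : ∀ ρ ≤ 0, ∀ v ∈ Icc (0:ℝ) 2, ∀ w ∈ Icc (0:ℝ) 2,
      |h ρ v - h ρ w| ≤ (C + |ν|) * Real.exp (δ * ρ) * |v - w| := by
    intro ρ hρ v hv w hw
    have e0 := Real.exp_pos (κ * ρ)
    have e1 := Real.exp_pos (-κ * ρ)
    have h1 := hC (Real.exp (κ * ρ)) ⟨e0.le, hone ρ hρ⟩ _ (hmem ρ hρ v hv) _ (hmem ρ hρ w hw)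
    rw [← mul_sub, abs_mul (Real.exp (κ * ρ)), abs_of_pos e0] at h1
    have h2 : |Real.sin (Real.exp (κ * ρ) * v) - Real.sin (Real.exp (κ * ρ) * w)|
        ≤ Real.exp (κ * ρ) * |v - w| := by
      have := Real.abs_sin_sub_sin_le (Real.exp (κ * ρ) * v) (Real.exp (κ * ρ) * w)
      rwa [← mul_sub, abs_mul (Real.exp (κ * ρ)), abs_of_pos e0] at this
    set A := GG k c b (Real.exp (κ * ρ) * v) - κ ^ 2 * (Real.exp (κ * ρ) * v)
    set A' := GG k c b (Real.exp (κ * ρ) * w) - κ ^ 2 * (Real.exp (κ * ρ) * w)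
    have h3 : h ρ v - h ρ w = Real.exp (-κ * ρ) * ((A - A') + ν * Real.exp (2 * ρ) *
      (Real.sin (Real.exp (κ * ρ) * v) - Real.sin (Real.exp (κ * ρ) * w))) := by
      simp only [hh]; ring
    rw [h3, abs_mul, abs_of_pos e1]
    calc Real.exp (-κ * ρ) * |(A - A') + ν * Real.exp (2 * ρ) *
          (Real.sin (Real.exp (κ * ρ) * v) - Real.sin (Real.exp (κ * ρ) * w))|
        ≤ Real.exp (-κ * ρ) * (C * Real.exp (κ * ρ) * (Real.exp (κ * ρ) * |v - w|)
          + |ν| * Real.exp (2 * ρ) * (Real.exp (κ * ρ) * |v - w|)) := by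
          gcongr
          refine (abs_add_le _ _).trans (add_le_add h1 ?_)
          rw [abs_mul, abs_mul, abs_of_pos (Real.exp_pos (2 * ρ))]
          gcongr
      _ = (Real.exp (-κ * ρ) * Real.exp (κ * ρ)) * ((C * Real.exp (κ * ρ)
          + |ν| * Real.exp (2 * ρ)) * |v - w|) := by ring
      _ = (C * Real.exp (κ * ρ) + |ν| * Real.exp (2 * ρ)) * |v - w| := by rw [hee, one_mul]
      _ ≤ (C * Real.exp (δ * ρ) + |ν| * Real.exp (δ * ρ)) * |v - w| := by
          have := hexp1 ρ hρ
          have := hexp2 ρ hρ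
          gcongr
      _ = _ := by ring
  obtain ⟨T, hT0, v, w, D, hD⟩ := local_sol hκ hδ0 (by positivity) h hcont hlip
    (fun ρ => by simp [hh, GG])
  refine ⟨T, hT0, fun τ => Real.exp (κ * τ) * v τ, fun τ => Real.exp (κ * τ) * (κ * v τ + w τ),
    κ * (3/2) + 3/2 + D, fun τ hτ => ?_⟩
  obtain ⟨hv, hw, hv1, hv2, hwD⟩ := hD τ hτ
  have e0 := Real.exp_pos (κ * τ)
  have he : HasDerivAt (fun τ : ℝ => Real.exp (κ * τ)) (Real.exp (κ * τ) * κ) τ := by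
    simpa using ((hasDerivAt_id τ).const_mul κ).exp
  have hD0 : 0 ≤ D := (abs_nonneg _).trans hwD
  refine ⟨?_, ?_, by nlinarith, ?_, ?_, ?_⟩
  · refine (he.fun_mul hv).congr_deriv ?_
    ring
  · refine (he.fun_mul ((hv.const_mul κ).fun_add hw)).congr_deriv ?_
    simp only [hh]
    linear_combination (GG k c b (Real.exp (κ * τ) * v τ) - κ ^ 2 * (Real.exp (κ * τ) * v τ)
      + ν * Real.exp (2 * τ) * Real.sin (Real.exp (κ * τ) * v τ)) * hee τ
  · have := hone τ (hτ.le.trans hT0)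
    nlinarith
  · rw [abs_mul, abs_of_pos e0, mul_comm]
    gcongr
    rw [abs_of_pos (by linarith)]
    nlinarith
  · rw [abs_mul, abs_of_pos e0, mul_comm]
    gcongr
    refine (abs_add_le _ _).trans ?_
    rw [abs_mul, abs_of_pos hκ, abs_of_pos (show 0 < v τ by linarith)]
    nlinarith

theorem glue {f f' g g' : ℝ → ℝ} {t0 : ℝ} (hf : ∀ τ ≤ t0, HasDerivAt f (f' τ) τ)
    (hg : ∀ τ ∈ Ici t0, HasDerivWithinAt g (g' τ) (Ici t0) τ) (h0 : f t0 = g t0)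
    (h1 : f' t0 = g' t0) (τ : ℝ) :
    HasDerivAt (fun τ => if τ ≤ t0 then f τ else g τ) (if τ ≤ t0 then f' τ else g' τ) τ := by
  rcases lt_trichotomy τ t0 with h | h | h
  · rw [if_pos h.le]
    refine (hf τ h.le).congr_of_eventuallyEq ?_
    filter_upwards [Iio_mem_nhds h] with s hs
    rw [if_pos (le_of_lt hs)]
  · subst h
    rw [if_pos le_rfl, ← hasDerivWithinAt_univ, ← Iic_union_Ici (a := τ)]
    refine HasDerivWithinAt.union ?_ ?_
    · refine ((hf τ le_rfl).hasDerivWithinAt (s := Iic τ)).congr (fun s hs => if_pos hs) (if_pos le_rfl)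
    · rw [h1]
      refine (hg τ self_mem_Ici).congr (fun s hs => ?_) ?_
      · rcases eq_or_lt_of_le (show τ ≤ s from hs) with h | h
        · subst h; rw [if_pos le_rfl, h0]
        · rw [if_neg (not_le.2 h)]
      · rw [if_pos le_rfl, h0]
  · rw [if_neg (not_le.2 h)]
    refine ((hg τ h.le).hasDerivAt (Ici_mem_nhds h)).congr_of_eventuallyEq ?_
    filter_upwards [Ioi_mem_nhds h] with s hs
    rw [if_neg (not_le.2 hs)]

theorem cos_two_arctan (y : ℝ) : Real.cos (2 * Real.arctan y) = (1 - y ^ 2) / (1 + y ^ 2) := by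
  have h : (1 + y ^ 2) ≠ 0 := by positivity
  rw [Real.cos_two_mul, Real.cos_sq_arctan]
  field_simp
  ring

theorem sin_two_arctan (y : ℝ) : Real.sin (2 * Real.arctan y) = 2 * y / (1 + y ^ 2) := by
  have h : (1 + y ^ 2) ≠ 0 := by positivity
  have h2 : Real.sin (Real.arctan y) = y * Real.cos (Real.arctan y) := by
    rw [Real.sin_arctan, Real.cos_arctan]; ring
  rw [Real.sin_two_mul, h2, show 2 * (y * Real.cos (Real.arctan y)) * Real.cos (Real.arctan y)
    = 2 * y * Real.cos (Real.arctan y) ^ 2 by ring, Real.cos_sq_arctan]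
  field_simp

noncomputable def FF (k c b ν : ℝ) (t : ℝ) (z : ℝ × ℝ) : ℝ × ℝ :=
  ((1 + z.1 ^ 2) * z.2 / 2,
    2 * z.1 / (1 + z.1 ^ 2) * (-c ^ 2 * (1 + z.1 ^ 2) ^ 2 / 4 - k * b + 2 * k ^ 2
      - 3 * k ^ 2 * ((1 - z.1 ^ 2) / (1 + z.1 ^ 2)) + ν * Real.exp (2 * t)))

theorem FF_snd (k c b ν t : ℝ) (z : ℝ × ℝ) : (FF k c b ν t z).2 =
    GG k c b (2 * Real.arctan z.1) + ν * Real.exp (2 * t) * Real.sin (2 * Real.arctan z.1) := by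
  unfold GG FF
  have h : (1 + z.1 ^ 2) ≠ 0 := by positivity
  rw [cos_two_arctan, sin_two_arctan]
  have h3 : 1 + (1 - z.1 ^ 2) / (1 + z.1 ^ 2) = 2 / (1 + z.1 ^ 2) := by field_simp; ring
  rw [h3]
  field_simp
  ring

theorem FF_contDiff (k c b ν : ℝ) : ContDiff ℝ 1 (fun q : ℝ × ℝ × ℝ => FF k c b ν q.1 q.2) := by
  have h : ∀ q : ℝ × ℝ × ℝ, 1 + q.2.1 ^ 2 ≠ 0 := fun q => by positivity
  unfold FF
  fun_prop (disch := exact h)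

theorem hdw_fst {z : ℝ → ℝ × ℝ} {z' : ℝ × ℝ} {s : Set ℝ} {t : ℝ} (h : HasDerivWithinAt z z' s t) :
    HasDerivWithinAt (fun x => (z x).1) z'.1 s t :=
  (ContinuousLinearMap.fst ℝ ℝ ℝ).hasFDerivAt.comp_hasDerivWithinAt t h

theorem hdw_snd {z : ℝ → ℝ × ℝ} {z' : ℝ × ℝ} {s : Set ℝ} {t : ℝ} (h : HasDerivWithinAt z z' s t) :
    HasDerivWithinAt (fun x => (z x).2) z'.2 s t :=
  (ContinuousLinearMap.snd ℝ ℝ ℝ).hasFDerivAt.comp_hasDerivWithinAt t h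

theorem abs_le_one_add_sq (y : ℝ) : |y| ≤ 1 + y ^ 2 := by
  rw [abs_le]; constructor <;> nlinarith [sq_nonneg (y - 1), sq_nonneg (y + 1)]

set_option maxHeartbeats 1000000 in
theorem FF_apriori {k c b ν : ℝ} (hc : c ≠ 0) (t0 : ℝ) (z0 : ℝ × ℝ) :
    ∀ T > t0, ∃ R, ∀ T' ∈ Ioc t0 T, ∀ z : ℝ → ℝ × ℝ, z t0 = z0 →
      (∀ t ∈ Icc t0 T', HasDerivWithinAt z (FF k c b ν t (z t)) (Icc t0 T') t) → ‖z T'‖ < R := by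
  intro T hT
  set K : ℝ := |k * b| + 2 * k ^ 2 + 3 * k ^ 2 + |ν| * Real.exp (2 * T) with hK
  set M : ℝ := (z0.2 ^ 2 / 2 + c ^ 2 * (1 + z0.1 ^ 2) / 2 + K ^ 2 / 2) * Real.exp (T - t0) with hM
  have hc2 : 0 < c ^ 2 := by positivity
  have hM0 : 0 ≤ M := by positivity
  refine ⟨2 + 2 * M + 2 * M / c ^ 2, fun T' hT' z hz0 hz => ?_⟩
  set E : ℝ → ℝ := fun t => ((z t).2 ^ 2 / 2 + c ^ 2 * (1 + (z t).1 ^ 2) / 2 + K ^ 2 / 2)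
    * Real.exp (-t) with hE
  set E' : ℝ → ℝ := fun t => ((z t).2 * (FF k c b ν t (z t)).2
      + c ^ 2 * (z t).1 * (FF k c b ν t (z t)).1) * Real.exp (-t)
    - ((z t).2 ^ 2 / 2 + c ^ 2 * (1 + (z t).1 ^ 2) / 2 + K ^ 2 / 2) * Real.exp (-t) with hE'
  have hd : ∀ t ∈ Icc t0 T', HasDerivWithinAt E (E' t) (Icc t0 T') t := by
    intro t ht
    have h1 := hdw_fst (hz t ht)
    have h2 := hdw_snd (hz t ht)
    have h3 := ((((h2.fun_pow 2).div_const 2).fun_add ((((h1.fun_pow 2).const_add 1).const_mul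
      (c ^ 2)).div_const 2)).add_const (K ^ 2 / 2)).fun_mul
      ((hasDerivAt_neg t).exp.hasDerivWithinAt (s := Icc t0 T'))
    refine h3.congr_deriv ?_
    simp only [hE']
    push_cast
    ring
  have hneg : ∀ t ∈ Icc t0 T', E' t ≤ 0 := by
    intro t ht
    set y := (z t).1
    set p := (z t).2
    have hy : 0 < 1 + y ^ 2 := by positivity
    set X := 2 * y / (1 + y ^ 2) with hX
    set Y := (1 - y ^ 2) / (1 + y ^ 2) with hY
    have hX1 : |X| ≤ 1 := by
      rw [hX, abs_div, abs_of_pos hy, div_le_one hy, abs_le]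
      constructor <;> nlinarith [sq_nonneg (y - 1), sq_nonneg (y + 1)]
    have hY1 : |Y| ≤ 1 := by
      rw [hY, abs_div, abs_of_pos hy, div_le_one hy, abs_le]
      constructor <;> nlinarith [sq_nonneg y]
    set Z := X * (-(k * b) + 2 * k ^ 2 - 3 * k ^ 2 * Y + ν * Real.exp (2 * t)) with hZ
    have hZK : |Z| ≤ K := by
      rw [hZ, abs_mul]
      have hb : |-(k * b) + 2 * k ^ 2 - 3 * k ^ 2 * Y + ν * Real.exp (2 * t)| ≤ K := by
        have e1 : |3 * k ^ 2 * Y| ≤ 3 * k ^ 2 := by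
          rw [abs_mul, abs_of_nonneg (by positivity)]
          exact mul_le_of_le_one_right (by positivity) hY1
        have e2 : |ν * Real.exp (2 * t)| ≤ |ν| * Real.exp (2 * T) := by
          rw [abs_mul, abs_of_pos (Real.exp_pos _)]
          have : t ≤ T := ht.2.trans hT'.2
          gcongr
        have e3 := neg_abs_le (k * b)
        have e4 := le_abs_self (k * b)
        have e5 := sq_nonneg k
        rw [abs_le] at e1 e2 ⊢
        simp only [hK]
        constructor <;> linarith [e1.1, e1.2, e2.1, e2.2]
      calc |X| * _ ≤ 1 * K := by gcongr
        _ = K := one_mul K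
    have hval : p * (FF k c b ν t (z t)).2 + c ^ 2 * y * (FF k c b ν t (z t)).1 = p * Z := by
      have hy' := hy.ne'
      simp only [FF, hZ, hX, hY]
      change p * (2 * y / (1 + y ^ 2) * (-c ^ 2 * (1 + y ^ 2) ^ 2 / 4 - k * b + 2 * k ^ 2
        - 3 * k ^ 2 * ((1 - y ^ 2) / (1 + y ^ 2)) + ν * Real.exp (2 * t)))
        + c ^ 2 * y * ((1 + y ^ 2) * p / 2) = _
      field_simp
      ring
    simp only [hE']
    rw [hval, ← sub_mul]
    refine mul_nonpos_of_nonpos_of_nonneg ?_ (Real.exp_pos _).le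
    have h5 : p * Z ≤ p ^ 2 / 2 + K ^ 2 / 2 := by
      have : Z ^ 2 ≤ K ^ 2 := sq_le_sq' (abs_le.1 hZK).1 (abs_le.1 hZK).2
      nlinarith [sq_nonneg (p - Z)]
    have h6 : 0 ≤ c ^ 2 * (1 + y ^ 2) / 2 := by positivity
    linarith
  have hanti : AntitoneOn E (Icc t0 T') := by
    refine antitoneOn_of_hasDerivWithinAt_nonpos (f' := E') (convex_Icc _ _)
      (fun t ht => (hd t ht).continuousWithinAt) ?_ ?_
    · intro t ht
      exact (hd t (interior_subset ht)).mono interior_subset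
    · intro t ht
      exact hneg t (interior_subset ht)
  have hfin := hanti (left_mem_Icc.2 hT'.1.le) (right_mem_Icc.2 hT'.1.le) hT'.1.le
  simp only [hE] at hfin
  rw [hz0] at hfin
  set y := (z T').1 with hy
  set p := (z T').2 with hp
  have hfin2 : p ^ 2 / 2 + c ^ 2 * (1 + y ^ 2) / 2 + K ^ 2 / 2 ≤ M := by
    have e1 : Real.exp (-T') * Real.exp T' = 1 := by rw [← Real.exp_add]; simp
    have e2 : Real.exp (-t0) * Real.exp T' ≤ Real.exp (T - t0) := by
      rw [← Real.exp_add]; exact Real.exp_le_exp.2 (by linarith [hT'.2])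
    have := mul_le_mul_of_nonneg_right hfin (Real.exp_pos T').le
    rw [mul_assoc, e1, mul_one, mul_assoc] at this
    refine this.trans ?_
    exact mul_le_mul_of_nonneg_left e2 (by positivity)
  have hK2 := sq_nonneg K
  have hp2 : p ^ 2 ≤ 2 * M := by
    have : 0 ≤ c ^ 2 * (1 + y ^ 2) / 2 := by positivity
    linarith
  have hy2 : y ^ 2 ≤ 2 * M / c ^ 2 := by
    rw [le_div_iff₀ hc2]
    nlinarith [sq_nonneg p]
  have hMc : 0 ≤ 2 * M / c ^ 2 := by positivity
  rw [Prod.norm_def, max_lt_iff]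
  constructor
  · change |y| < _
    have : |y| ≤ 1 + y ^ 2 := abs_le_one_add_sq y
    linarith
  · change |p| < _
    have : |p| ≤ 1 + p ^ 2 := abs_le_one_add_sq p
    linarith

/-- The global profile in the logarithmic variable `τ = log a`. -/
theorem ode_main {k c b κ : ℝ} (ν : ℝ) (hc : c ≠ 0) (hκ : 0 < κ)
    (hκ2 : κ ^ 2 = -(k ^ 2 + b * k) - c ^ 2 / 4) :
    ∃ S P : ℝ → ℝ, (∀ τ, HasDerivAt S (P τ) τ) ∧
      (∀ τ, HasDerivAt P (GG k c b (S τ) + ν * Real.exp (2 * τ) * Real.sin (S τ)) τ) ∧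
      (∀ τ, 0 < 1 + Real.cos (S τ)) ∧ (∃ τ, S τ ≠ 0) ∧
      ∀ T, ∃ C, 0 < C ∧ ∀ τ ≤ T, |S τ| ≤ C * Real.exp (κ * τ) ∧ |P τ| ≤ C * Real.exp (κ * τ) := by
  obtain ⟨T, hT0, S, P, D, hloc⟩ := ode_local (k := k) (c := c) (b := b) (ν := ν) hκ hκ2
  set t0 : ℝ := T - 1 with ht0
  have hlt : ∀ τ ≤ t0, τ < T := fun τ h => by linarith
  have hS0 := (hloc t0 (hlt t0 le_rfl))
  obtain ⟨z, hz0, hz⟩ := sol_global (FF_contDiff k c b ν)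
    (FF_apriori (k := k) (b := b) (ν := ν) hc t0 (Real.tan (S t0 / 2), P t0))
  have hSt0 : S t0 = 2 * Real.arctan (z t0).1 := by
    rw [hz0]
    simp only
    rw [Real.arctan_tan]
    · ring
    · linarith [hS0.2.2.1, Real.pi_gt_three]
    · linarith [hS0.2.2.2.1, Real.pi_gt_three]
  have hPt0 : P t0 = (z t0).2 := by rw [hz0]
  have hgS : ∀ τ ∈ Ici t0, HasDerivWithinAt (fun τ => 2 * Real.arctan (z τ).1) ((z τ).2) (Ici t0) τ := by
    intro τ hτ
    have h1 := ((hdw_fst (hz τ hτ)).arctan).const_mul 2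
    refine h1.congr_deriv ?_
    have : 1 + (z τ).1 ^ 2 ≠ 0 := by positivity
    simp only [FF]
    field_simp
  have hgP : ∀ τ ∈ Ici t0, HasDerivWithinAt (fun τ => (z τ).2)
      (GG k c b (2 * Real.arctan (z τ).1)
        + ν * Real.exp (2 * τ) * Real.sin (2 * Real.arctan (z τ).1)) (Ici t0) τ := by
    intro τ hτ
    have h1 := hdw_snd (hz τ hτ)
    rwa [FF_snd] at h1
  set S1 : ℝ → ℝ := fun τ => if τ ≤ t0 then S τ else 2 * Real.arctan (z τ).1 with hS1
  set P1 : ℝ → ℝ := fun τ => if τ ≤ t0 then P τ else (z τ).2 with hP1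
  have hdS : ∀ τ, HasDerivAt S1 (P1 τ) τ := glue (fun τ hτ => (hloc τ (hlt τ hτ)).1) hgS hSt0 hPt0
  have hdP : ∀ τ, HasDerivAt P1 (GG k c b (S1 τ) + ν * Real.exp (2 * τ) * Real.sin (S1 τ)) τ := by
    intro τ
    have := glue (fun τ hτ => (hloc τ (hlt τ hτ)).2.1) hgP hPt0 (by rw [hSt0]) τ
    refine this.congr_deriv ?_
    simp only [hS1]
    split_ifs <;> rfl
  refine ⟨S1, P1, hdS, hdP, ?_, ⟨t0, ?_⟩, ?_⟩
  · intro τ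
    simp only [hS1]
    split_ifs with h
    · have := hloc τ (hlt τ h)
      exact one_add_cos_pos this.2.2.1.le (by linarith [this.2.2.2.1])
    · rw [cos_two_arctan]
      have h3 : 1 + (1 - (z τ).1 ^ 2) / (1 + (z τ).1 ^ 2) = 2 / (1 + (z τ).1 ^ 2) := by
        have : 1 + (z τ).1 ^ 2 ≠ 0 := by positivity
        field_simp; ring
      rw [h3]; positivity
  · simp only [hS1, le_refl, if_true]
    exact hS0.2.2.1.ne'
  · intro T1
    have hSc : Continuous S1 := continuous_iff_continuousAt.2 fun τ => (hdS τ).continuousAt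
    have hPc : Continuous P1 := continuous_iff_continuousAt.2 fun τ => (hdP τ).continuousAt
    obtain ⟨B1, hB1⟩ := (isCompact_Icc (a := t0) (b := T1)).exists_bound_of_continuousOn hSc.continuousOn
    obtain ⟨B2, hB2⟩ := (isCompact_Icc (a := t0) (b := T1)).exists_bound_of_continuousOn hPc.continuousOn
    have aux : ∀ B x τ : ℝ, t0 ≤ τ → |x| ≤ B → |x| ≤ |B| * Real.exp (-κ * t0) * Real.exp (κ * τ) := by
      intro B x τ hτ hx
      rw [mul_assoc, ← Real.exp_add]
      have : 1 ≤ Real.exp (-κ * t0 + κ * τ) := Real.one_le_exp (by nlinarith)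
      have h2 : |x| ≤ |B| := hx.trans (le_abs_self B)
      nlinarith [abs_nonneg B]
    refine ⟨|D| + |B1| * Real.exp (-κ * t0) + |B2| * Real.exp (-κ * t0) + 1, by positivity,
      fun τ hτ => ?_⟩
    have e0 := Real.exp_pos (κ * τ)
    have e1 : 0 ≤ |B1| * Real.exp (-κ * t0) := by positivity
    have e2 : 0 ≤ |B2| * Real.exp (-κ * t0) := by positivity
    have e3 := abs_nonneg D
    have e4 := le_abs_self D
    rcases le_or_gt τ t0 with h | h
    · have := hloc τ (hlt τ h)
      simp only [hS1, hP1, h, if_true]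
      constructor
      · exact this.2.2.2.2.1.trans (mul_le_mul_of_nonneg_right (by linarith) e0.le)
      · exact this.2.2.2.2.2.trans (mul_le_mul_of_nonneg_right (by linarith) e0.le)
    · constructor
      · exact (aux B1 _ τ h.le (hB1 τ ⟨h.le, hτ⟩)).trans
          (mul_le_mul_of_nonneg_right (by linarith) e0.le)
      · exact (aux B2 _ τ h.le (hB2 τ ⟨h.le, hτ⟩)).trans
          (mul_le_mul_of_nonneg_right (by linarith) e0.le)

theorem ext_bound {f : ℝ → ℝ} (hf : Continuous f) {κ T0 C : ℝ} (hκ : 0 ≤ κ)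
    (h : ∀ τ ≤ T0, |f τ| ≤ C * Real.exp (κ * τ)) (T : ℝ) :
    ∃ C', 0 < C' ∧ ∀ τ ≤ T, |f τ| ≤ C' * Real.exp (κ * τ) := by
  obtain ⟨B1, hB1⟩ := (isCompact_Icc (a := T0) (b := T)).exists_bound_of_continuousOn hf.continuousOn
  refine ⟨|C| + |B1| * Real.exp (-κ * T0) + 1, by positivity, fun τ hτ => ?_⟩
  have e0 := Real.exp_pos (κ * τ)
  have e1 : 0 ≤ |B1| * Real.exp (-κ * T0) := by positivity
  have e3 := abs_nonneg C
  rcases le_or_gt τ T0 with h1 | h1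
  · exact (h τ h1).trans (mul_le_mul_of_nonneg_right (by linarith [le_abs_self C]) e0.le)
  · have h2 := hB1 τ ⟨h1.le, hτ⟩
    rw [Real.norm_eq_abs] at h2
    have h3 : |f τ| ≤ |B1| * Real.exp (-κ * T0) * Real.exp (κ * τ) := by
      rw [mul_assoc, ← Real.exp_add]
      have : 1 ≤ Real.exp (-κ * T0 + κ * τ) := Real.one_le_exp (by nlinarith)
      have h2 : |f τ| ≤ |B1| := h2.trans (le_abs_self B1)
      nlinarith [abs_nonneg B1]
    exact h3.trans (mul_le_mul_of_nonneg_right (by linarith) e0.le)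

theorem one_sub_cos_le_abs (s : ℝ) : |1 - Real.cos s| ≤ 2 * |s| := by
  rw [abs_of_nonneg (by linarith [Real.cos_le_one s])]
  have h1 := Real.one_sub_sq_div_two_le_cos (x := s)
  have h2 := Real.neg_one_le_cos s
  rcases le_total (|s|) 1 with h | h
  · nlinarith [sq_abs s, abs_nonneg s]
  · linarith

/-- A profile in the variable `τ = log a`. -/
structure Prof (k c b κ : ℝ) where
  ν : ℝ
  S : ℝ → ℝ
  P : ℝ → ℝ
  A : ℝ → ℝ
  B : ℝ → ℝ
  B1 : ℝ → ℝ
  B2 : ℝ → ℝ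
  F : ℝ → ℝ
  hS : ∀ τ, HasDerivAt S (P τ) τ
  hP : ∀ τ, HasDerivAt P (A τ) τ
  hB : ∀ τ, HasDerivAt B (B1 τ) τ
  hB1 : ∀ τ, HasDerivAt B1 (B2 τ) τ
  hF : ∀ τ, HasDerivAt F (2 * k * (1 - Real.cos (S τ))) τ
  pos : ∀ τ, 0 < 1 + Real.cos (S τ)
  hA : ∀ τ, A τ = GG k c b (S τ) + ν * Real.exp (2 * τ) * Real.sin (S τ)
  hB1e : ∀ τ, B1 τ = -c / (1 + Real.cos (S τ))
  hB2e : ∀ τ, B2 τ = -c * Real.sin (S τ) * P τ / (1 + Real.cos (S τ)) ^ 2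
  ne : ∃ τ, S τ ≠ 0
  bd : ∀ T, ∃ C, 0 < C ∧ ∀ τ ≤ T, |S τ| ≤ C * Real.exp (κ * τ) ∧ |P τ| ≤ C * Real.exp (κ * τ) ∧
    |A τ| ≤ C * Real.exp (κ * τ) ∧ |F τ| ≤ C * Real.exp (κ * τ) ∧ |B1 τ| ≤ C ∧ |B2 τ| ≤ C
  smS : ContDiff ℝ (⊤ : ℕ∞) S
  smB : ContDiff ℝ (⊤ : ℕ∞) B
  smF : ContDiff ℝ (⊤ : ℕ∞) F

theorem cont_of_hd {f f' : ℝ → ℝ} (h : ∀ τ, HasDerivAt f (f' τ) τ) : Continuous f :=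
  continuous_iff_continuousAt.2 fun τ => (h τ).continuousAt

theorem cd_succ {f f' : ℝ → ℝ} (h : ∀ τ, HasDerivAt f (f' τ) τ) {n : ℕ} (h' : ContDiff ℝ n f') :
    ContDiff ℝ (n + 1 : ℕ) f := by
  push_cast
  rw [contDiff_succ_iff_deriv]
  refine ⟨fun τ => (h τ).differentiableAt, ?_, ?_⟩
  · intro h; exact absurd h (by simp)
  · have : deriv f = f' := funext fun τ => (h τ).deriv
    rwa [this]

theorem prof_exists {k c b κ : ℝ} (ν : ℝ) (hc : c ≠ 0) (hκ : 0 < κ)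
    (hκ2 : κ ^ 2 = -(k ^ 2 + b * k) - c ^ 2 / 4) : ∃ Q : Prof k c b κ, Q.ν = ν := by
  obtain ⟨S, P, hS, hP, hpos, hne, hbd⟩ := ode_main (k := k) (b := b) ν hc hκ hκ2
  have hpos' : ∀ τ, 1 + Real.cos (S τ) ≠ 0 := fun τ => (hpos τ).ne'
  have hSc := cont_of_hd hS
  have hPc := cont_of_hd hP
  have hcd : ∀ n : ℕ, ContDiff ℝ n S ∧ ContDiff ℝ n P := by
    intro n
    induction n with
    | zero =>
      constructor
      · exact contDiff_zero.2 hSc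
      · exact contDiff_zero.2 hPc
    | succ n ih =>
      refine ⟨cd_succ hS ih.2, cd_succ hP ?_⟩
      have h1 := ih.1
      unfold GG
      have h2 : ContDiff ℝ n (fun τ => 1 + Real.cos (S τ)) := by fun_prop
      have h3 : ContDiff ℝ n (fun τ => -c ^ 2 / (1 + Real.cos (S τ)) ^ 2) :=
        contDiff_const.div (h2.pow 2) (fun τ => pow_ne_zero _ (hpos' τ))
      fun_prop
  have smS : ContDiff ℝ (⊤ : ℕ∞) S := contDiff_infty.2 fun n => (hcd n).1
  have smB1 : ContDiff ℝ (⊤ : ℕ∞) (fun τ => -c / (1 + Real.cos (S τ))) :=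
    contDiff_const.div (by fun_prop) hpos'
  set B : ℝ → ℝ := fun τ => ∫ σ in (0:ℝ)..τ, -c / (1 + Real.cos (S σ)) with hBdef
  have hB : ∀ τ, HasDerivAt B (-c / (1 + Real.cos (S τ))) τ := fun τ =>
    (smB1.continuous.integral_hasStrictDerivAt 0 τ).hasDerivAt
  have hB1 : ∀ τ, HasDerivAt (fun τ => -c / (1 + Real.cos (S τ)))
      (-c * Real.sin (S τ) * P τ / (1 + Real.cos (S τ)) ^ 2) τ := by
    intro τ
    have := (hasDerivAt_const τ (-c)).fun_div ((hS τ).cos.const_add 1) (hpos' τ)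
    refine this.congr_deriv ?_
    ring
  -- F
  have hfc : Continuous (fun τ => 2 * k * (1 - Real.cos (S τ))) := by fun_prop
  obtain ⟨C0, hC0, hC0b⟩ := hbd 0
  have hfb : ∀ τ ≤ 0, |2 * k * (1 - Real.cos (S τ))| ≤ (4 * |k| * C0) * Real.exp (κ * τ) := by
    intro τ hτ
    rw [abs_mul, abs_mul, abs_two]
    have h1 := one_sub_cos_le_abs (S τ)
    have h2 := (hC0b τ hτ).1
    calc 2 * |k| * |1 - Real.cos (S τ)| ≤ 2 * |k| * (2 * (C0 * Real.exp (κ * τ))) := by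
          gcongr; linarith
      _ = _ := by ring
  set F : ℝ → ℝ := fun τ => ∫ σ in Iic τ, 2 * k * (1 - Real.cos (S σ)) with hFdef
  have hF : ∀ τ, HasDerivAt F (2 * k * (1 - Real.cos (S τ))) τ := fun τ =>
    tail_hasDerivAt hκ hfc hfb τ
  have hFb : ∀ τ ≤ 0, |F τ| ≤ (4 * |k| * C0) / κ * Real.exp (κ * τ) := fun τ hτ =>
    tail_bound hκ hfb hτ
  -- 1/(1+cos)
  obtain ⟨T0, hT0⟩ : ∃ T0, ∀ τ ≤ T0, 1 / 2 ≤ 1 + Real.cos (S τ) := by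
    have : Tendsto (fun τ => C0 * Real.exp (κ * τ)) atBot (nhds (C0 * 0)) :=
      (Real.tendsto_exp_atBot.comp (tendsto_id.const_mul_atBot hκ)).const_mul C0
    rw [mul_zero] at this
    obtain ⟨T0, h⟩ := eventually_atBot.1 ((this.eventually (gt_mem_nhds one_pos)).and
      (eventually_le_atBot 0))
    refine ⟨T0, fun τ hτ => ?_⟩
    have h1 := h τ hτ
    have h2 := (hC0b τ h1.2).1
    have h3 : |S τ| ≤ 1 := by linarith [h1.1]
    have h4 := Real.one_sub_sq_div_two_le_cos (x := S τ)
    nlinarith [sq_abs (S τ), abs_nonneg (S τ)]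
  have hic : Continuous (fun τ => (1 + Real.cos (S τ))⁻¹) :=
    Continuous.inv₀ (by fun_prop) hpos'
  have hib : ∀ τ ≤ T0, |(1 + Real.cos (S τ))⁻¹| ≤ 2 * Real.exp (0 * τ) := by
    intro τ hτ
    have h1 := hT0 τ hτ
    rw [zero_mul, Real.exp_zero, mul_one, abs_of_pos (inv_pos.2 (hpos τ))]
    rw [inv_le_comm₀ (hpos τ) two_pos]
    linarith
  refine ⟨⟨ν, S, P, fun τ => GG k c b (S τ) + ν * Real.exp (2 * τ) * Real.sin (S τ), B,
    fun τ => -c / (1 + Real.cos (S τ)),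
    fun τ => -c * Real.sin (S τ) * P τ / (1 + Real.cos (S τ)) ^ 2, F, hS, hP, hB, hB1, hF, hpos,
    fun τ => rfl, fun τ => rfl, fun τ => rfl, hne, ?_, smS, ?_, ?_⟩, rfl⟩
  · intro T
    obtain ⟨C1, hC1, hb1⟩ := hbd T
    obtain ⟨C2, hC2, hb2⟩ := ext_bound (cont_of_hd hF) hκ.le hFb T
    obtain ⟨C3, hC3, hb3⟩ := ext_bound hic le_rfl hib T
    have hb3' : ∀ τ ≤ T, (1 + Real.cos (S τ))⁻¹ ≤ C3 := by
      intro τ hτ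
      have := hb3 τ hτ
      rw [zero_mul, Real.exp_zero, mul_one] at this
      exact (le_abs_self _).trans this
    set K : ℝ := c ^ 2 * C3 ^ 2 + |k * b| + 2 * k ^ 2 + 3 * k ^ 2 + |ν| * Real.exp (2 * T) with hK
    have hK0 : 0 ≤ K := by positivity
    set C := C1 + K * C1 + C2 + |c| * C3 + |c| * (C1 * Real.exp (κ * T)) * C3 ^ 2 with hCdef
    have p1 : 0 ≤ K * C1 := by positivity
    have p2 : 0 ≤ |c| * C3 := by positivity
    have p3 : 0 ≤ |c| * (C1 * Real.exp (κ * T)) * C3 ^ 2 := by positivity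
    refine ⟨C, by positivity, fun τ hτ => ?_⟩
    have e0 := (Real.exp_pos (κ * τ)).le
    have hi := hb3' τ hτ
    have hi0 := inv_pos.2 (hpos τ)
    have hsS : |Real.sin (S τ)| ≤ |S τ| := Real.abs_sin_le_abs
    refine ⟨(hb1 τ hτ).1.trans (mul_le_mul_of_nonneg_right (by linarith) e0),
      (hb1 τ hτ).2.trans (mul_le_mul_of_nonneg_right (by linarith) e0), ?_,
      (hb2 τ hτ).trans (mul_le_mul_of_nonneg_right (by linarith) e0), ?_, ?_⟩
    · have e1 : GG k c b (S τ) + ν * Real.exp (2 * τ) * Real.sin (S τ) = Real.sin (S τ) *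
        (-(c ^ 2 * (1 + Real.cos (S τ))⁻¹ ^ 2) - k * b + 2 * k ^ 2 - 3 * k ^ 2 * Real.cos (S τ)
          + ν * Real.exp (2 * τ)) := by
        unfold GG; rw [inv_pow]; ring
      rw [e1, abs_mul]
      have e2 : |(-(c ^ 2 * (1 + Real.cos (S τ))⁻¹ ^ 2) - k * b + 2 * k ^ 2
          - 3 * k ^ 2 * Real.cos (S τ) + ν * Real.exp (2 * τ))| ≤ K := by
        have f1 : c ^ 2 * (1 + Real.cos (S τ))⁻¹ ^ 2 ≤ c ^ 2 * C3 ^ 2 := by gcongr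
        have f1' : 0 ≤ c ^ 2 * (1 + Real.cos (S τ))⁻¹ ^ 2 := by positivity
        have f2 : |3 * k ^ 2 * Real.cos (S τ)| ≤ 3 * k ^ 2 := by
          rw [abs_mul, abs_of_nonneg (by positivity)]
          exact mul_le_of_le_one_right (by positivity) (Real.abs_cos_le_one _)
        have f3 : |ν * Real.exp (2 * τ)| ≤ |ν| * Real.exp (2 * T) := by
          rw [abs_mul, abs_of_pos (Real.exp_pos _)]
          gcongr
        have f4 := neg_abs_le (k * b)
        have f5 := le_abs_self (k * b)
        have f6 := sq_nonneg k
        rw [abs_le] at f2 f3 ⊢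
        simp only [hK]
        constructor <;> linarith [f2.1, f2.2, f3.1, f3.2]
      calc _ ≤ (C1 * Real.exp (κ * τ)) * K := by
            gcongr
            exact hsS.trans (hb1 τ hτ).1
        _ = K * C1 * Real.exp (κ * τ) := by ring
        _ ≤ _ := mul_le_mul_of_nonneg_right (by linarith) e0
    · rw [div_eq_mul_inv, abs_mul, abs_neg, abs_of_pos hi0]
      calc |c| * _ ≤ |c| * C3 := by gcongr
        _ ≤ C := by linarith
    · rw [div_eq_mul_inv, ← inv_pow, abs_mul, abs_mul, abs_mul, abs_neg, abs_pow, abs_of_pos hi0]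
      have g1 : |P τ| ≤ C1 * Real.exp (κ * T) := (hb1 τ hτ).2.trans (by gcongr)
      have g2 := Real.abs_sin_le_one (S τ)
      calc _ ≤ |c| * 1 * (C1 * Real.exp (κ * T)) * C3 ^ 2 := by gcongr
        _ ≤ C := by linarith
  · exact contDiff_infty.2 fun n => (cd_succ hB (smB1.of_le (by exact_mod_cast le_top))).of_le
      (by exact_mod_cast Nat.le_succ n)
  · have sm : ContDiff ℝ (⊤ : ℕ∞) (fun τ => 2 * k * (1 - Real.cos (S τ))) := by fun_prop
    exact contDiff_infty.2 fun n => (cd_succ hF (sm.of_le (by exact_mod_cast le_top))).of_le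
      (by exact_mod_cast Nat.le_succ n)

theorem Prof.F_eq {k c b κ : ℝ} (hκ : 0 < κ) (Q : Prof k c b κ) {a : ℝ} (ha : 0 < a) :
    (∫ a' in (0:ℝ)..a, 2 * k / a' * (1 - Real.cos (Q.S (Real.log a')))) = Q.F (Real.log a) := by
  obtain ⟨C, hC, hb⟩ := Q.bd (Real.log a)
  have hS := cont_of_hd Q.hS
  have hF := cont_of_hd Q.hF
  have hrp : ∀ x : ℝ, 0 < x → Real.exp (κ * Real.log x) = x ^ κ := by
    intro x hx; rw [Real.rpow_def_of_pos hx]; ring_nf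
  have := intervalIntegral.integral_eq_sub_of_hasDerivAt_of_tendsto (a := 0) (b := a)
    (f := fun x => Q.F (Real.log x)) (fa := 0) (fb := Q.F (Real.log a))
    (f' := fun a' => 2 * k / a' * (1 - Real.cos (Q.S (Real.log a')))) ha ?_ ?_ ?_ ?_
  · rw [this, sub_zero]
  · intro x hx
    have h := (Q.hF (Real.log x)).comp x (Real.hasDerivAt_log hx.1.ne')
    refine h.congr_deriv ?_
    field_simp
  · have h1 : IntervalIntegrable (fun x : ℝ => 4 * |k| * C * x ^ (κ - 1)) volume 0 a :=
      (intervalIntegral.intervalIntegrable_rpow' (by linarith)).const_mul _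
    refine h1.mono_fun ?_ ?_
    · refine Measurable.aestronglyMeasurable ?_
      have hm := hS.measurable
      fun_prop
    · rw [uIoc_of_le ha.le]
      refine (ae_restrict_iff' measurableSet_Ioc).2 (Eventually.of_forall ?_)
      intro x hx
      have hx0 := hx.1
      have h2 := (hb (Real.log x) (Real.log_le_log hx0 hx.2)).1
      rw [hrp x hx0] at h2
      have h3 := one_sub_cos_le_abs (Q.S (Real.log x))
      have h4 : 0 ≤ x ^ κ := by positivity
      beta_reduce
      rw [Real.norm_eq_abs, Real.norm_eq_abs, abs_mul, abs_div, abs_mul, abs_two, abs_of_pos hx0]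
      rw [abs_of_nonneg (by positivity : 0 ≤ 4 * |k| * C * x ^ (κ - 1)), Real.rpow_sub_one hx0.ne']
      calc _ ≤ 2 * |k| / x * (2 * (C * x ^ κ)) := by gcongr; linarith
        _ = _ := by field_simp; ring
  · have hz : Tendsto (fun x : ℝ => C * x ^ κ) (nhdsWithin 0 (Ioi 0)) (nhds 0) := by
      have : ContinuousAt (fun x : ℝ => C * x ^ κ) 0 :=
        (Real.continuousAt_rpow_const 0 κ (Or.inr hκ.le)).const_mul C
      have h := this.tendsto
      simp only [Real.zero_rpow hκ.ne', mul_zero] at h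
      exact h.mono_left nhdsWithin_le_nhds
    refine squeeze_zero_norm' ?_ hz
    filter_upwards [Ioo_mem_nhdsGT ha] with x hx
    have := (hb (Real.log x) (Real.log_le_log hx.1 hx.2.le)).2.2.2.1
    rwa [hrp x hx.1] at this
  · exact ((hF.continuousAt.comp (Real.continuousAt_log ha.ne')).tendsto).mono_left
      nhdsWithin_le_nhds

/-- Rotating frame. -/
noncomputable def fr (θ p q r : ℝ) : Fin 3 → ℝ :=
  ![p, q * Real.cos θ - r * Real.sin θ, q * Real.sin θ + r * Real.cos θ]

theorem fr_add (θ p q r p' q' r' : ℝ) :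
    fr θ p q r + fr θ p' q' r' = fr θ (p + p') (q + q') (r + r') := by
  ext i; fin_cases i <;> simp [fr] <;> ring

theorem fr_smul (θ a p q r : ℝ) : a • fr θ p q r = fr θ (a * p) (a * q) (a * r) := by
  ext i; fin_cases i <;> simp [fr] <;> ring

theorem fr_sub (θ p q r p' q' r' : ℝ) :
    fr θ p q r - fr θ p' q' r' = fr θ (p - p') (q - q') (r - r') := by
  ext i; fin_cases i <;> simp [fr] <;> ring

theorem cross_fr (θ p q r p' q' r' : ℝ) :
    cross3 (fr θ p q r) (fr θ p' q' r')
      = fr θ (q * r' - r * q') (r * p' - p * r') (p * q' - q * p') := by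
  have h := Real.sin_sq_add_cos_sq θ
  ext i; fin_cases i <;> simp [fr, cross3]
  · linear_combination (q * r' - r * q') * h
  · ring
  · ring

theorem dot_fr (θ p q r p' q' r' : ℝ) :
    dot3 (fr θ p q r) (fr θ p' q' r') = p * p' + q * q' + r * r' := by
  have h := Real.sin_sq_add_cos_sq θ
  simp [fr, dot3]
  linear_combination (q * q' + r * r') * h

theorem norm_fr_le (θ p q r : ℝ) : ‖fr θ p q r‖ ≤ |p| + |q| + |r| := by
  have hc := Real.abs_cos_le_one θ
  have hs := Real.abs_sin_le_one θ
  have a1 : |q * Real.cos θ| ≤ |q| := by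
    rw [abs_mul]; exact mul_le_of_le_one_right (abs_nonneg _) hc
  have a2 : |q * Real.sin θ| ≤ |q| := by
    rw [abs_mul]; exact mul_le_of_le_one_right (abs_nonneg _) hs
  have a3 : |r * Real.cos θ| ≤ |r| := by
    rw [abs_mul]; exact mul_le_of_le_one_right (abs_nonneg _) hc
  have a4 : |r * Real.sin θ| ≤ |r| := by
    rw [abs_mul]; exact mul_le_of_le_one_right (abs_nonneg _) hs
  have hp := abs_nonneg p
  rw [pi_norm_le_iff_of_nonneg (by positivity)]
  intro i
  fin_cases i <;> simp [fr]
  · linarith [abs_nonneg q, abs_nonneg r]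
  · linarith [abs_sub (q * Real.cos θ) (r * Real.sin θ)]
  · linarith [abs_add_le (q * Real.sin θ) (r * Real.cos θ)]

theorem hasDerivAt_fr {θ p q r : ℝ → ℝ} {θ' p' q' r' x : ℝ} (hθ : HasDerivAt θ θ' x)
    (hp : HasDerivAt p p' x) (hq : HasDerivAt q q' x) (hr : HasDerivAt r r' x) :
    HasDerivAt (fun x => fr (θ x) (p x) (q x) (r x))
      (fr (θ x) p' (q' - r x * θ') (r' + q x * θ')) x := by
  rw [hasDerivAt_pi]
  intro i
  fin_cases i
  · simpa [fr] using hp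
  · have := (hq.fun_mul hθ.cos).fun_sub (hr.fun_mul hθ.sin)
    simp only [fr]
    refine this.congr_deriv ?_
    simp; ring
  · have := (hq.fun_mul hθ.sin).fun_add (hr.fun_mul hθ.cos)
    simp only [fr]
    refine this.congr_deriv ?_
    simp; ring

theorem norm_cross_le (v w : Fin 3 → ℝ) : ‖cross3 v w‖ ≤ 2 * ‖v‖ * ‖w‖ := by
  have hv := fun i => norm_le_pi_norm v i
  have hw := fun i => norm_le_pi_norm w i
  simp only [Real.norm_eq_abs] at hv hw
  have key : ∀ i j i' j', |v i * w j - v i' * w j'| ≤ 2 * ‖v‖ * ‖w‖ := by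
    intro i j i' j'
    have h1 : |v i * w j| ≤ ‖v‖ * ‖w‖ := by
      rw [abs_mul]; exact mul_le_mul (hv i) (hw j) (abs_nonneg _) (norm_nonneg _)
    have h2 : |v i' * w j'| ≤ ‖v‖ * ‖w‖ := by
      rw [abs_mul]; exact mul_le_mul (hv i') (hw j') (abs_nonneg _) (norm_nonneg _)
    linarith [abs_sub (v i * w j) (v i' * w j')]
  rw [pi_norm_le_iff_of_nonneg (by positivity)]
  intro i
  fin_cases i <;> simp [cross3] <;> exact key _ _ _ _

theorem abs_dot_le (v w : Fin 3 → ℝ) : |dot3 v w| ≤ 3 * ‖v‖ * ‖w‖ := by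
  have hv := fun i => norm_le_pi_norm v i
  have hw := fun i => norm_le_pi_norm w i
  simp only [Real.norm_eq_abs] at hv hw
  have key : ∀ i, |v i * w i| ≤ ‖v‖ * ‖w‖ := by
    intro i
    rw [abs_mul]; exact mul_le_mul (hv i) (hw i) (abs_nonneg _) (norm_nonneg _)
  unfold dot3
  linarith [abs_add_le (v 0 * w 0 + v 1 * w 1) (v 2 * w 2), abs_add_le (v 0 * w 0) (v 1 * w 1),
    key 0, key 1, key 2]

theorem hasDerivAt_cross {v w : ℝ → Fin 3 → ℝ} {v' w' : Fin 3 → ℝ} {x : ℝ}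
    (hv : HasDerivAt v v' x) (hw : HasDerivAt w w' x) :
    HasDerivAt (fun x => cross3 (v x) (w x)) (cross3 v' (w x) + cross3 (v x) w') x := by
  rw [hasDerivAt_pi] at hv hw ⊢
  intro i
  have key : ∀ i j i' j', HasDerivAt (fun x => v x i * w x j - v x i' * w x j')
      (v' i * w x j + v x i * w' j - (v' i' * w x j' + v x i' * w' j')) x := fun i j i' j' =>
    ((hv i).fun_mul (hw j)).fun_sub ((hv i').fun_mul (hw j'))
  fin_cases i
  · refine (key 1 2 2 1).congr_deriv ?_
    simp [cross3]; ring
  · refine (key 2 0 0 2).congr_deriv ?_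
    simp [cross3]; ring
  · refine (key 0 1 1 0).congr_deriv ?_
    simp [cross3]; ring

theorem hasDerivAt_dot {v w : ℝ → Fin 3 → ℝ} {v' w' : Fin 3 → ℝ} {x : ℝ}
    (hv : HasDerivAt v v' x) (hw : HasDerivAt w w' x) :
    HasDerivAt (fun x => dot3 (v x) (w x)) (dot3 v' (w x) + dot3 (v x) w') x := by
  rw [hasDerivAt_pi] at hv hw
  have := (((hv 0).fun_mul (hw 0)).fun_add ((hv 1).fun_mul (hw 1))).fun_add ((hv 2).fun_mul (hw 2))
  refine this.congr_deriv ?_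
  simp only [dot3]; ring

theorem continuous_dot3 : Continuous (fun q : (Fin 3 → ℝ) × (Fin 3 → ℝ) => dot3 q.1 q.2) := by
  unfold dot3; fun_prop

theorem continuous_cross3 : Continuous (fun q : (Fin 3 → ℝ) × (Fin 3 → ℝ) => cross3 q.1 q.2) := by
  unfold cross3
  refine continuous_pi fun i => ?_
  fin_cases i <;> simp <;> fun_prop

theorem continuous_fr : Continuous (fun q : ℝ × ℝ × ℝ × ℝ => fr q.1 q.2.1 q.2.2.1 q.2.2.2) := by
  unfold fr
  refine continuous_pi fun i => ?_
  fin_cases i <;> simp <;> fun_prop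

namespace Prof
variable {k c b κ : ℝ} (Q : Prof k c b κ)

noncomputable def ta (ξ η : ℝ) : ℝ := (Real.log ξ + Real.log η) / 2
noncomputable def al (ξ η : ℝ) : ℝ := (Real.log ξ - Real.log η) / 2

noncomputable def th (μ t ξ η : ℝ) : ℝ := Q.B (ta ξ η) + k * al ξ η + μ * t

/-- The spin in null coordinates. -/
noncomputable def U (μ t ξ η : ℝ) : Fin 3 → ℝ :=
  fr (Q.th μ t ξ η) (Real.cos (Q.S (ta ξ η))) (Real.sin (Q.S (ta ξ η))) 0

/-- Numerator of the first derivative, with sign parameter `j = ± k`. -/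
noncomputable def X (μ t ξ η j : ℝ) : Fin 3 → ℝ :=
  fr (Q.th μ t ξ η) (-(Q.P (ta ξ η)) * Real.sin (Q.S (ta ξ η)))
    (Q.P (ta ξ η) * Real.cos (Q.S (ta ξ η))) ((Q.B1 (ta ξ η) + j) * Real.sin (Q.S (ta ξ η)))

/-- Numerator of the mixed second derivative. -/
noncomputable def N (μ t ξ η : ℝ) : Fin 3 → ℝ :=
  fr (Q.th μ t ξ η)
    (-(Q.A (ta ξ η)) * Real.sin (Q.S (ta ξ η)) - Q.P (ta ξ η) ^ 2 * Real.cos (Q.S (ta ξ η)))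
    (Q.A (ta ξ η) * Real.cos (Q.S (ta ξ η)) - Q.P (ta ξ η) ^ 2 * Real.sin (Q.S (ta ξ η))
      - (Q.B1 (ta ξ η) ^ 2 - k ^ 2) * Real.sin (Q.S (ta ξ η)))
    (Q.B2 (ta ξ η) * Real.sin (Q.S (ta ξ η))
      + 2 * Q.B1 (ta ξ η) * Real.cos (Q.S (ta ξ η)) * Q.P (ta ξ η))

noncomputable def Ut (μ t ξ η : ℝ) : Fin 3 → ℝ :=
  fr (Q.th μ t ξ η) 0 0 (μ * Real.sin (Q.S (ta ξ η)))

noncomputable def Uξ (μ t ξ η : ℝ) : Fin 3 → ℝ := (1 / (2 * ξ)) • Q.X μ t ξ η k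
noncomputable def Uη (μ t ξ η : ℝ) : Fin 3 → ℝ := (1 / (2 * η)) • Q.X μ t ξ η (-k)
noncomputable def Uξη (μ t ξ η : ℝ) : Fin 3 → ℝ := (1 / (4 * ξ * η)) • Q.N μ t ξ η

noncomputable def Φ (ξ η : ℝ) : ℝ := c * al ξ η + b * ta ξ η - Q.F (ta ξ η)
noncomputable def Fξ (ξ η : ℝ) : ℝ := (1 / (2 * ξ)) * (2 * k * (1 - Real.cos (Q.S (ta ξ η))))
noncomputable def Fη (ξ η : ℝ) : ℝ := (1 / (2 * η)) * (2 * k * (1 - Real.cos (Q.S (ta ξ η))))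
noncomputable def Fξη (ξ η : ℝ) : ℝ :=
  (1 / (4 * ξ * η)) * (2 * k * (Real.sin (Q.S (ta ξ η)) * Q.P (ta ξ η)))
noncomputable def Φξ (ξ η : ℝ) : ℝ := (c + b) * (1 / (2 * ξ)) - Q.Fξ ξ η
noncomputable def Φη (ξ η : ℝ) : ℝ := (b - c) * (1 / (2 * η)) - Q.Fη ξ η

theorem ta_ξ {ξ η : ℝ} (h : ξ ≠ 0) : HasDerivAt (fun ξ => ta ξ η) (1 / (2 * ξ)) ξ := by
  refine (((Real.hasDerivAt_log h).add_const (Real.log η)).div_const 2).congr_deriv ?_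
  field_simp
theorem ta_η {ξ η : ℝ} (h : η ≠ 0) : HasDerivAt (fun η => ta ξ η) (1 / (2 * η)) η := by
  refine (((Real.hasDerivAt_log h).const_add (Real.log ξ)).div_const 2).congr_deriv ?_
  field_simp
theorem al_ξ {ξ η : ℝ} (h : ξ ≠ 0) : HasDerivAt (fun ξ => al ξ η) (1 / (2 * ξ)) ξ := by
  refine (((Real.hasDerivAt_log h).sub_const (Real.log η)).div_const 2).congr_deriv ?_
  field_simp
theorem al_η {ξ η : ℝ} (h : η ≠ 0) : HasDerivAt (fun η => al ξ η) (-(1 / (2 * η))) η := by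
  refine (((Real.hasDerivAt_log h).const_sub (Real.log ξ)).div_const 2).congr_deriv ?_
  field_simp

/-- General one-variable chain rule facts along a curve. -/
theorem along {T Al : ℝ → ℝ} {s m j : ℝ} (hT : HasDerivAt T m s) (hAl : HasDerivAt Al (j * m) s)
    (C : ℝ) : HasDerivAt (fun s => Q.B (T s) + k * Al s + C) (m * (Q.B1 (T s) + k * j)) s := by
  have := (((Q.hB (T s)).comp s hT).fun_add (hAl.const_mul k)).add_const C
  refine this.congr_deriv ?_
  ring

theorem along_cos {T : ℝ → ℝ} {s m : ℝ} (hT : HasDerivAt T m s) :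
    HasDerivAt (fun s => Real.cos (Q.S (T s))) (m * (-(Q.P (T s)) * Real.sin (Q.S (T s)))) s := by
  refine (((Q.hS (T s)).comp s hT).cos).congr_deriv ?_
  simp only [Function.comp]; ring
theorem along_sin {T : ℝ → ℝ} {s m : ℝ} (hT : HasDerivAt T m s) :
    HasDerivAt (fun s => Real.sin (Q.S (T s))) (m * (Q.P (T s) * Real.cos (Q.S (T s)))) s := by
  refine (((Q.hS (T s)).comp s hT).sin).congr_deriv ?_
  simp only [Function.comp]; ring

theorem along_U {T Al : ℝ → ℝ} {s m j : ℝ} (hT : HasDerivAt T m s) (hAl : HasDerivAt Al (j * m) s)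
    (C : ℝ) : HasDerivAt (fun s => fr (Q.B (T s) + k * Al s + C) (Real.cos (Q.S (T s)))
      (Real.sin (Q.S (T s))) 0)
      (m • fr (Q.B (T s) + k * Al s + C) (-(Q.P (T s)) * Real.sin (Q.S (T s)))
        (Q.P (T s) * Real.cos (Q.S (T s))) ((Q.B1 (T s) + k * j) * Real.sin (Q.S (T s)))) s := by
  have := hasDerivAt_fr (Q.along hT hAl C) (Q.along_cos hT) (Q.along_sin hT) (hasDerivAt_const s 0)
  refine this.congr_deriv ?_
  rw [fr_smul]
  congr 1 <;> ring

theorem along_X {T Al : ℝ → ℝ} {s m j j' : ℝ} (hj : j ^ 2 = 1) (hj' : j' = -(k * j)) (hT : HasDerivAt T m s)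
    (hAl : HasDerivAt Al (j * m) s)
    (C : ℝ) : HasDerivAt (fun s => fr (Q.B (T s) + k * Al s + C)
      (-(Q.P (T s)) * Real.sin (Q.S (T s)))
        (Q.P (T s) * Real.cos (Q.S (T s))) ((Q.B1 (T s) + j') * Real.sin (Q.S (T s))))
      (m • fr (Q.B (T s) + k * Al s + C)
    (-(Q.A (T s)) * Real.sin (Q.S (T s)) - Q.P (T s) ^ 2 * Real.cos (Q.S (T s)))
    (Q.A (T s) * Real.cos (Q.S (T s)) - Q.P (T s) ^ 2 * Real.sin (Q.S (T s))
      - (Q.B1 (T s) ^ 2 - k ^ 2) * Real.sin (Q.S (T s)))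
    (Q.B2 (T s) * Real.sin (Q.S (T s))
      + 2 * Q.B1 (T s) * Real.cos (Q.S (T s)) * Q.P (T s))) s := by
  have hP := (Q.hP (T s)).comp s hT
  have hB1 := ((Q.hB1 (T s)).comp s hT).add_const j'
  have := hasDerivAt_fr (Q.along hT hAl C) (hP.fun_neg.fun_mul (Q.along_sin hT))
    (hP.fun_mul (Q.along_cos hT)) (hB1.fun_mul (Q.along_sin hT))
  refine this.congr_deriv ?_
  rw [fr_smul]
  simp only [Function.comp]
  subst hj'
  congr 1
  · ring
  · linear_combination (m * k ^ 2 * Real.sin (Q.S (T s))) * hj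
  · ring

theorem hUξ (μ t : ℝ) {ξ η : ℝ} (h : ξ ≠ 0) :
    HasDerivAt (fun ξ => Q.U μ t ξ η) (Q.Uξ μ t ξ η) ξ := by
  have := Q.along_U (j := 1) (ta_ξ (η := η) h) (by simpa using al_ξ (η := η) h) (μ * t)
  simpa [U, Uξ, X, th] using this
theorem hUη (μ t : ℝ) {ξ η : ℝ} (h : η ≠ 0) :
    HasDerivAt (fun η => Q.U μ t ξ η) (Q.Uη μ t ξ η) η := by
  have := Q.along_U (j := -1) (ta_η (ξ := ξ) h) (by simpa using al_η (ξ := ξ) h) (μ * t)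
  simpa [U, Uη, X, th] using this
theorem hUt (μ t ξ η : ℝ) :
    HasDerivAt (fun t => Q.U μ t ξ η) (Q.Ut μ t ξ η) t := by
  have h1 : HasDerivAt (fun t => Q.th μ t ξ η) μ t := by
    simpa [th] using ((hasDerivAt_id t).const_mul μ).const_add (Q.B (ta ξ η) + k * al ξ η)
  have := hasDerivAt_fr h1 (hasDerivAt_const t (Real.cos (Q.S (ta ξ η))))
    (hasDerivAt_const t (Real.sin (Q.S (ta ξ η)))) (hasDerivAt_const t 0)
  refine this.congr_deriv ?_
  simp only [Ut]; congr 1 <;> ring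
theorem hUξη (μ t : ℝ) {ξ η : ℝ} (h : η ≠ 0) :
    HasDerivAt (fun η => Q.Uξ μ t ξ η) (Q.Uξη μ t ξ η) η := by
  have := Q.along_X (j := -1) (j' := k) (by norm_num) (by ring) (ta_η (ξ := ξ) h) (by simpa using al_η (ξ := ξ) h) (μ * t)
  refine (this.fun_const_smul (1 / (2 * ξ))).congr_deriv ?_
  simp only [Uξη, N, th]
  rw [smul_smul]
  congr 1
  field_simp
  norm_num
theorem hUηξ (μ t : ℝ) {ξ η : ℝ} (h : ξ ≠ 0) :
    HasDerivAt (fun ξ => Q.Uη μ t ξ η) (Q.Uξη μ t ξ η) ξ := by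
  have := Q.along_X (j := 1) (j' := -k) (by norm_num) (by ring) (ta_ξ (η := η) h) (by simpa using al_ξ (η := η) h) (μ * t)
  refine (this.fun_const_smul (1 / (2 * η))).congr_deriv ?_
  simp only [Uξη, N, th]
  rw [smul_smul]
  congr 1
  field_simp
  norm_num

theorem hFξ {ξ η : ℝ} (h : ξ ≠ 0) : HasDerivAt (fun ξ => Q.F (ta ξ η)) (Q.Fξ ξ η) ξ := by
  refine ((Q.hF (ta ξ η)).comp ξ (ta_ξ h)).congr_deriv ?_
  simp only [Fξ]; ring
theorem hFη {ξ η : ℝ} (h : η ≠ 0) : HasDerivAt (fun η => Q.F (ta ξ η)) (Q.Fη ξ η) η := by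
  refine ((Q.hF (ta ξ η)).comp η (ta_η h)).congr_deriv ?_
  simp only [Fη]; ring
theorem hFξη {ξ η : ℝ} (h : η ≠ 0) : HasDerivAt (fun η => Q.Fξ ξ η) (Q.Fξη ξ η) η := by
  refine ((((Q.along_cos (ta_η (ξ := ξ) h)).const_sub 1).const_mul (2 * k)).const_mul
    (1 / (2 * ξ))).congr_deriv ?_
  simp only [Fξη]; ring

theorem hΦξ {ξ η : ℝ} (h : ξ ≠ 0) : HasDerivAt (fun ξ => Q.Φ ξ η) (Q.Φξ ξ η) ξ := by
  refine ((((al_ξ h).const_mul c).fun_add ((ta_ξ h).const_mul b)).fun_sub (Q.hFξ h)).congr_deriv ?_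
  simp only [Φξ]; ring
theorem hΦη {ξ η : ℝ} (h : η ≠ 0) : HasDerivAt (fun η => Q.Φ ξ η) (Q.Φη ξ η) η := by
  refine ((((al_η h).const_mul c).fun_add ((ta_η h).const_mul b)).fun_sub (Q.hFη h)).congr_deriv ?_
  simp only [Φη]; ring
theorem hΦξη {ξ η : ℝ} (h : η ≠ 0) : HasDerivAt (fun η => Q.Φξ ξ η) (-Q.Fξη ξ η) η := by
  exact (Q.hFξη h).const_sub _

theorem exp_ta {ξ η : ℝ} (hξ : ξ ≠ 0) (hη : η ≠ 0) : Real.exp (2 * ta ξ η) = |ξ * η| := by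
  unfold ta
  rw [show 2 * ((Real.log ξ + Real.log η) / 2) = Real.log ξ + Real.log η by ring,
    ← Real.log_mul hξ hη, Real.exp_log_eq_abs (mul_ne_zero hξ hη)]

theorem pde1 {μ : ℝ} (t : ℝ) {ξ η : ℝ} (hξ : ξ ≠ 0) (hη : η ≠ 0) (hν : Q.ν * |ξ * η| = μ * (ξ * η)) :
    Q.Ut μ t ξ η = (4:ℝ) • cross3 (Q.U μ t ξ η) (Q.Uξη μ t ξ η)
      + (2 * Q.Φη ξ η) • Q.Uξ μ t ξ η - (2 * Q.Φξ ξ η) • Q.Uη μ t ξ η := by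
  have hA := Q.hA (ta ξ η)
  rw [exp_ta hξ hη, hν] at hA
  have hp := (Q.pos (ta ξ η)).ne'
  have hsc := Real.sin_sq_add_cos_sq (Q.S (ta ξ η))
  have hB1 := Q.hB1e (ta ξ η)
  have hB2 := Q.hB2e (ta ξ η)
  simp only [Ut, U, Uξη, Uξ, Uη, N, X, fr_smul, cross_fr, fr_add, fr_sub, Φξ, Φη, Fξ, Fη]
  unfold GG at hA
  generalize Q.S (ta ξ η) = S at *
  generalize Q.P (ta ξ η) = P at *
  generalize Q.A (ta ξ η) = A at *
  generalize Q.B1 (ta ξ η) = B1 at *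
  generalize Q.B2 (ta ξ η) = B2 at *
  generalize Q.th μ t ξ η = θ at *
  generalize Real.sin S = s at *
  generalize Real.cos S = C at *
  have h3 : B2 * s + 2 * B1 * C * P = -c * P := by
    rw [hB1, hB2]; field_simp
    linear_combination (-c * P) * hsc
  have h4 : A = s * (μ * (ξ * η) + (B1 ^ 2 - k ^ 2) * C - b * k + 2 * k ^ 2 * (1 - C) + c * B1) := by
    rw [hA, hB1]; field_simp; ring
  rw [h3]
  congr 1
  · field_simp; ring
  · field_simp; ring
  · rw [h4]
    field_simp
    linear_combination (-2 * k ^ 2 * s - 2 * s * (μ * ξ * η - k * b + k ^ 2 - 3 * k ^ 2 * C + C * B1 ^ 2 + B1 * c)) * hsc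

theorem pde2 (μ t : ℝ) {ξ η : ℝ} :
    -Q.Fξη ξ η = dot3 (Q.U μ t ξ η) (cross3 (Q.Uξ μ t ξ η) (Q.Uη μ t ξ η)) := by
  have hsc := Real.sin_sq_add_cos_sq (Q.S (ta ξ η))
  simp only [U, Uξ, Uη, X, Fξη, fr_smul, cross_fr, dot_fr]
  generalize Q.S (ta ξ η) = S at *
  generalize Q.P (ta ξ η) = P at *
  generalize Q.B1 (ta ξ η) = B1 at *
  generalize Real.sin S = s at *
  generalize Real.cos S = C at *
  simp only [one_div, mul_inv]
  linear_combination (1 / 2 * ξ⁻¹ * η⁻¹ * k * s * P) * hsc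

end Prof

/-- Complement of the cross, in null coordinates `(t, ξ, η)`. -/
def offS : Set (ℝ × ℝ × ℝ) := {w | w.2.1 ≠ 0 ∧ w.2.2 ≠ 0}

theorem isOpen_offS : IsOpen offS :=
  (isOpen_ne.preimage (continuous_fst.comp continuous_snd)).inter
    (isOpen_ne.preimage (continuous_snd.comp continuous_snd))

theorem ae_offS : ∀ᵐ w : ℝ × ℝ × ℝ, w ∈ offS := by
  have h0 : ∀ᵐ x : ℝ, x ≠ 0 := by
    exact compl_mem_ae_iff.2 (measure_singleton (0:ℝ))
  have h1 : ∀ᵐ w : ℝ × ℝ × ℝ, w.2.1 ≠ 0 :=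
    (Measure.quasiMeasurePreserving_snd (μ := (volume : Measure ℝ))
      (ν := (volume : Measure (ℝ × ℝ)))).ae
      ((Measure.quasiMeasurePreserving_fst (μ := (volume : Measure ℝ))
      (ν := (volume : Measure ℝ))).ae h0)
  have h2 : ∀ᵐ w : ℝ × ℝ × ℝ, w.2.2 ≠ 0 :=
    (Measure.quasiMeasurePreserving_snd (μ := (volume : Measure ℝ))
      (ν := (volume : Measure (ℝ × ℝ)))).ae
      ((Measure.quasiMeasurePreserving_snd (μ := (volume : Measure ℝ))
      (ν := (volume : Measure ℝ))).ae h0)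
  filter_upwards [h1, h2] with w a b using ⟨a, b⟩

/-- Continuous off the cross, with a power bound at the cross. -/
def Good {E : Type*} [NormedAddCommGroup E] (f : ℝ × ℝ × ℝ → E) (α β : ℝ) : Prop :=
  ContinuousOn f offS ∧ ∀ M > 0, ∃ C, 0 ≤ C ∧ ∀ w ∈ offS, |w.2.1| ≤ M → |w.2.2| ≤ M →
    ‖f w‖ ≤ C * (|w.2.1| ^ α * |w.2.2| ^ β)

namespace Good
variable {E : Type*} [NormedAddCommGroup E] {f g : ℝ × ℝ × ℝ → E} {α β α' β' : ℝ}

theorem weaken (h : Good f α β) (ha : α' ≤ α) (hb : β' ≤ β) : Good f α' β' := by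
  refine ⟨h.1, fun M hM => ?_⟩
  obtain ⟨C, hC, hb2⟩ := h.2 M hM
  refine ⟨C * (M ^ (α - α') * M ^ (β - β')), by positivity, fun w hw h1 h2 => ?_⟩
  refine (hb2 w hw h1 h2).trans ?_
  have key : ∀ x a a' : ℝ, x ≠ 0 → |x| ≤ M → a' ≤ a → |x| ^ a ≤ M ^ (a - a') * |x| ^ a' := by
    intro x a a' hx hxM ha
    have hx' : 0 < |x| := abs_pos.2 hx
    have : |x| ^ a = |x| ^ (a - a') * |x| ^ a' := by rw [← Real.rpow_add hx']; ring_nf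
    rw [this]
    gcongr
  calc C * (|w.2.1| ^ α * |w.2.2| ^ β) ≤ C * ((M ^ (α - α') * |w.2.1| ^ α') * (M ^ (β - β') * |w.2.2| ^ β')) := by
        gcongr
        · exact key _ _ _ hw.1 h1 ha
        · exact key _ _ _ hw.2 h2 hb
    _ = _ := by ring

theorem add (hf : Good f α β) (hg : Good g α β) : Good (fun w => f w + g w) α β := by
  refine ⟨hf.1.add hg.1, fun M hM => ?_⟩
  obtain ⟨C, hC, h1⟩ := hf.2 M hM
  obtain ⟨D, hD, h2⟩ := hg.2 M hM
  refine ⟨C + D, by positivity, fun w hw a b => (norm_add_le _ _).trans ?_⟩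
  rw [add_mul]
  exact add_le_add (h1 w hw a b) (h2 w hw a b)

theorem neg (hf : Good f α β) : Good (fun w => -f w) α β :=
  ⟨hf.1.neg, fun M hM => by simpa using hf.2 M hM⟩

theorem sub (hf : Good f α β) (hg : Good g α β) : Good (fun w => f w - g w) α β := by
  simpa [sub_eq_add_neg] using hf.add hg.neg

/-- General bilinear-type bound. -/
theorem bil {E₁ E₂ : Type*} [NormedAddCommGroup E₁] [NormedAddCommGroup E₂]
    {f : ℝ × ℝ × ℝ → E₁} {g : ℝ × ℝ × ℝ → E₂} (m : E₁ → E₂ → E)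
    (hm : Continuous (fun q : E₁ × E₂ => m q.1 q.2)) (K : ℝ) (hK : 0 ≤ K)
    (hmb : ∀ x y, ‖m x y‖ ≤ K * ‖x‖ * ‖y‖) (hf : Good f α β) (hg : Good g α' β') :
    Good (fun w => m (f w) (g w)) (α + α') (β + β') := by
  refine ⟨hm.comp_continuousOn (hf.1.prodMk hg.1), fun M hM => ?_⟩
  obtain ⟨C, hC, h1⟩ := hf.2 M hM
  obtain ⟨D, hD, h2⟩ := hg.2 M hM
  refine ⟨K * C * D, by positivity, fun w hw a b => (hmb _ _).trans ?_⟩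
  have p1 := abs_pos.2 hw.1
  have p2 := abs_pos.2 hw.2
  rw [Real.rpow_add p1, Real.rpow_add p2]
  calc _ ≤ K * (C * (|w.2.1| ^ α * |w.2.2| ^ β)) * (D * (|w.2.1| ^ α' * |w.2.2| ^ β')) := by
        gcongr
        · exact h1 w hw a b
        · exact h2 w hw a b
    _ = _ := by ring

theorem mul {f g : ℝ × ℝ × ℝ → ℝ} (hf : Good f α β) (hg : Good g α' β') :
    Good (fun w => f w * g w) (α + α') (β + β') :=
  bil (fun x y => x * y) continuous_mul 1 zero_le_one
    (fun x y => by rw [one_mul, norm_mul]) hf hg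

theorem smul [NormedSpace ℝ E] {f : ℝ × ℝ × ℝ → ℝ} (hf : Good f α β) (hg : Good g α' β') :
    Good (fun w => f w • g w) (α + α') (β + β') :=
  bil (fun x y => x • y) continuous_smul 1 zero_le_one
    (fun x y => by rw [one_mul, norm_smul]) hf hg

theorem cross {f g : ℝ × ℝ × ℝ → Fin 3 → ℝ} (hf : Good f α β) (hg : Good g α' β') :
    Good (fun w => cross3 (f w) (g w)) (α + α') (β + β') :=
  bil cross3 continuous_cross3 2 zero_le_two norm_cross_le hf hg

theorem dot {f g : ℝ × ℝ × ℝ → Fin 3 → ℝ} (hf : Good f α β) (hg : Good g α' β') :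
    Good (fun w => dot3 (f w) (g w)) (α + α') (β + β') :=
  bil dot3 continuous_dot3 3 (by norm_num) abs_dot_le hf hg

theorem of_bdd (hf : Continuous f) {C : ℝ} (h : ∀ w, ‖f w‖ ≤ C) : Good f 0 0 := by
  refine ⟨hf.continuousOn, fun M hM => ⟨C, (norm_nonneg _).trans (h 0), fun w hw a b => ?_⟩⟩
  simpa using h w

theorem of_cpt (hf : Continuous f) (h : HasCompactSupport f) : Good f 0 0 := by
  obtain ⟨C, hC⟩ := h.exists_bound_of_continuous hf
  exact of_bdd hf hC

theorem const (e : E) : Good (fun _ => e) 0 0 := of_bdd continuous_const (fun _ => le_rfl)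

theorem const_mul {f : ℝ × ℝ × ℝ → ℝ} (a : ℝ) (hf : Good f α β) : Good (fun w => a * f w) α β := by
  simpa using (const a).mul hf

theorem ξ_pow {f : ℝ × ℝ × ℝ → ℝ} (hf : Good f α β) : Good (fun w => (1 / (2 * w.2.1)) * f w) (-1 + α) β := by
  have : Good (fun w : ℝ × ℝ × ℝ => 1 / (2 * w.2.1)) (-1) 0 := by
    constructor
    · intro w hw
      have : 2 * w.2.1 ≠ 0 := mul_ne_zero two_ne_zero hw.1
      exact ContinuousAt.continuousWithinAt (ContinuousAt.div (by fun_prop) (by fun_prop) this)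
    · intro M hM
      refine ⟨1, zero_le_one, fun w hw a b => ?_⟩
      have := abs_pos.2 hw.1
      rw [Real.rpow_neg_one, Real.rpow_zero, Real.norm_eq_abs, abs_div, abs_mul, abs_two, abs_one]
      rw [mul_one, one_mul, one_div]
      exact inv_anti₀ this (by linarith)
  simpa using this.mul hf

theorem locallyIntegrable {δ : ℝ} (hδ : 0 < δ) (hf : Good f (δ - 1) (δ - 1)) :
    LocallyIntegrable f := by
  have h1 : ∀ a b : ℝ, IntervalIntegrable (fun x : ℝ => |x| ^ (δ - 1)) volume a b := by
    have hp : ∀ R : ℝ, 0 ≤ R → IntervalIntegrable (fun x : ℝ => |x| ^ (δ - 1)) volume 0 R := by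
      intro R hR
      have := intervalIntegral.intervalIntegrable_rpow' (a := 0) (b := R) (r := δ - 1) (by linarith)
      refine this.congr ?_
      intro x hx
      rw [uIoc_of_le hR] at hx
      simp [abs_of_pos hx.1]
    have h0 : ∀ R : ℝ, IntervalIntegrable (fun x : ℝ => |x| ^ (δ - 1)) volume 0 R := by
      intro R
      rcases le_total 0 R with h | h
      · exact hp R h
      · rw [IntervalIntegrable.iff_comp_neg]
        simpa using hp (-R) (by linarith)
    intro a b
    exact (h0 a).symm.trans (h0 b)
  rw [locallyIntegrable_iff]
  intro K hK
  obtain ⟨R, hR⟩ := hK.isBounded.subset_closedBall 0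
  set R' := max R 1 with hR'
  have hR'0 : 0 < R' := lt_max_of_lt_right one_pos
  have hsub : K ⊆ Icc (-R') R' ×ˢ (Icc (-R') R' ×ˢ Icc (-R') R') := by
    intro w hw
    have h2 := hR hw
    rw [mem_closedBall_zero_iff, Prod.norm_def, Prod.norm_def] at h2
    have h3 : R ≤ R' := le_max_left _ _
    have a1 := (le_max_left _ _).trans (h2.trans h3)
    have a2 := (le_max_right _ _).trans (h2.trans h3)
    have a3 := (le_max_left _ _).trans a2
    have a4 := (le_max_right _ _).trans a2
    exact ⟨abs_le.1 a1, abs_le.1 a3, abs_le.1 a4⟩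
  refine IntegrableOn.mono_set ?_ hsub
  obtain ⟨C, hC, hb⟩ := hf.2 R' hR'0
  have hI : IntegrableOn (fun x : ℝ => |x| ^ (δ - 1)) (Icc (-R') R') := by
    rw [integrableOn_Icc_iff_integrableOn_Ioc]
    exact (intervalIntegrable_iff_integrableOn_Ioc_of_le (by linarith)).1 (h1 _ _)
  have hI2 : IntegrableOn (fun w : ℝ × ℝ × ℝ => C * (|w.2.1| ^ (δ - 1) * |w.2.2| ^ (δ - 1)))
      (Icc (-R') R' ×ˢ (Icc (-R') R' ×ˢ Icc (-R') R')) := by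
    have h3 := Integrable.mul_prod hI hI
    have h4 : Integrable (fun _ : ℝ => C) (volume.restrict (Icc (-R') R')) := integrable_const C
    have h5 := Integrable.mul_prod h4 h3
    rw [Measure.prod_restrict, Measure.prod_restrict] at h5
    exact h5
  refine Integrable.mono' hI2 ?_ ?_
  · have h6 : AEStronglyMeasurable f (volume : Measure (ℝ × ℝ × ℝ)) := by
      have := hf.1.aestronglyMeasurable (μ := (volume : Measure (ℝ × ℝ × ℝ))) isOpen_offS.measurableSet
      rwa [Measure.restrict_eq_self_of_ae_mem ae_offS] at this
    exact h6.restrict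
  · refine (ae_restrict_iff' (measurableSet_Icc.prod (measurableSet_Icc.prod measurableSet_Icc))).2 ?_
    filter_upwards [ae_offS] with w hw hw2
    exact hb w hw (abs_le.2 hw2.2.1) (abs_le.2 hw2.2.2)

theorem integrable {δ : ℝ} (hδ : 0 < δ) (hf : Good f (δ - 1) (δ - 1)) {K : Set (ℝ × ℝ × ℝ)}
    (hK : IsCompact K) (h0 : ∀ w, w ∉ K → f w = 0) : Integrable f := by
  have := (locallyIntegrable_iff.1 (hf.locallyIntegrable hδ)) K hK
  exact (integrableOn_iff_integrable_of_support_subset (fun w hw => by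
    by_contra h; exact hw (h0 w h))).1 this

theorem cont_η (hf : Good f α β) (hβ : 0 < β) {t ξ : ℝ} (hξ : ξ ≠ 0) (h0 : f (t, ξ, 0) = 0) :
    Continuous (fun η => f (t, ξ, η)) := by
  rw [continuous_iff_continuousAt]
  intro η
  by_cases hη : η = 0
  · subst hη
    obtain ⟨C, hC, hb⟩ := hf.2 (max |ξ| 1) (lt_max_of_lt_right one_pos)
    have hz : ContinuousAt (fun η : ℝ => C * (|ξ| ^ α * |η| ^ β)) 0 := by
      have : Continuous (fun η : ℝ => C * (|ξ| ^ α * |η| ^ β)) := by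
        have := (continuous_abs (G := ℝ)).rpow_const (p := β) (fun _ => Or.inr hβ.le)
        fun_prop
      exact this.continuousAt
    have hz2 := hz.tendsto
    simp only [abs_zero, Real.zero_rpow hβ.ne', mul_zero] at hz2
    have : Tendsto (fun η => f (t, ξ, η)) (nhds 0) (nhds 0) := by
      refine squeeze_zero_norm' ?_ hz2
      filter_upwards [Metric.ball_mem_nhds (0:ℝ) one_pos] with η hη
      rw [mem_ball_zero_iff] at hη
      by_cases h : η = 0
      · subst h; simp [h0, Real.zero_rpow hβ.ne']
      · exact hb (t, ξ, η) ⟨hξ, h⟩ (le_max_left _ _) (hη.le.trans (le_max_right _ _))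
    rw [ContinuousAt, h0]
    exact this
  · have h1 : ContinuousAt f (t, ξ, η) := hf.1.continuousAt (isOpen_offS.mem_nhds ⟨hξ, hη⟩)
    exact ContinuousAt.comp (f := fun η => (t, ξ, η)) h1 (by fun_prop)

theorem cont_ξ (hf : Good f α β) (hα : 0 < α) {t η : ℝ} (hη : η ≠ 0) (h0 : f (t, 0, η) = 0) :
    Continuous (fun ξ => f (t, ξ, η)) := by
  have hs : Good (fun w : ℝ × ℝ × ℝ => f (w.1, w.2.2, w.2.1)) β α := by
    constructor
    · refine hf.1.comp (by fun_prop) ?_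
      intro w hw; exact ⟨hw.2, hw.1⟩
    · intro M hM
      obtain ⟨C, hC, hb⟩ := hf.2 M hM
      refine ⟨C, hC, fun w hw a b => ?_⟩
      rw [mul_comm (|w.2.1| ^ β)]
      exact hb (w.1, w.2.2, w.2.1) ⟨hw.2, hw.1⟩ b a
  exact hs.cont_η hα (t := t) hη h0

end Good

/-- Vanishing of the integral of a derivative in the last variable. -/
theorem zero_gen {X : Type*} [MeasureSpace X] [SFinite (volume : Measure X)] (V g : X × ℝ → ℝ)
    (hg : Integrable g) {R : ℝ} (hR : ∀ x s, R ≤ |s| → V (x, s) = 0)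
    (h : ∀ᵐ x : X, Continuous (fun s => V (x, s)) ∧ ∀ s ≠ 0, HasDerivAt (fun s => V (x, s)) (g (x, s)) s) :
    ∫ q, g q = 0 := by
  have hg' : Integrable g ((volume : Measure X).prod (volume : Measure ℝ)) := hg
  change ∫ q, g q ∂((volume : Measure X).prod (volume : Measure ℝ)) = 0
  rw [integral_prod g hg']
  refine integral_eq_zero_of_ae ?_
  filter_upwards [hg'.prod_right_ae, h] with x hx hV
  have h1 := intervalIntegral_tendsto_integral hx tendsto_neg_atTop_atBot (tendsto_id (α := ℝ))
  refine tendsto_nhds_unique h1 ?_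
  refine tendsto_const_nhds.congr' ?_
  filter_upwards [eventually_ge_atTop R, eventually_ge_atTop 0] with r hr hr0
  have := integral_eq_of_hasDerivAt_off_countable (fun s => V (x, s)) (fun s => g (x, s))
    (a := -r) (b := r) (s := {0}) (countable_singleton 0) hV.1.continuousOn
    (fun s hs => hV.2 s (by simpa using hs.2)) hx.intervalIntegrable
  simp only [id]
  rw [this, hR x r (hr.trans (le_abs_self r)), hR x (-r) (by rw [abs_neg]; exact hr.trans (le_abs_self r))]
  simp

theorem ae_snd_ne : ∀ᵐ q : ℝ × ℝ, q.2 ≠ 0 := by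
  have h0 : ∀ᵐ x : ℝ, x ≠ 0 := by
    exact compl_mem_ae_iff.2 (measure_singleton (0:ℝ))
  exact (Measure.quasiMeasurePreserving_snd (μ := (volume : Measure ℝ))
      (ν := (volume : Measure ℝ))).ae h0

theorem zero_η (V g : ℝ × ℝ × ℝ → ℝ) (hg : Integrable g) {R : ℝ}
    (hR : ∀ w : ℝ × ℝ × ℝ, R ≤ ‖w‖ → V w = 0)
    (h : ∀ t ξ : ℝ, ξ ≠ 0 → Continuous (fun η => V (t, ξ, η)) ∧
      ∀ η ≠ 0, HasDerivAt (fun η => V (t, ξ, η)) (g (t, ξ, η)) η) : ∫ w, g w = 0 := by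
  have mp := measurePreserving_prodAssoc (volume : Measure ℝ) (volume : Measure ℝ) (volume : Measure ℝ)
  have e1 := mp.integral_comp MeasurableEquiv.prodAssoc.measurableEmbedding g
  have i1 := (mp.integrable_comp_emb MeasurableEquiv.prodAssoc.measurableEmbedding).2 hg
  change ∫ w, g w ∂_ = 0
  refine e1.symm.trans ?_
  refine zero_gen (X := ℝ × ℝ) (fun q => V (q.1.1, q.1.2, q.2)) (fun q => g (q.1.1, q.1.2, q.2)) i1
    (R := R) ?_ ?_
  · intro x s hs
    refine hR _ (hs.trans ?_)
    exact (le_max_right _ _).trans (le_max_right _ _)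
  · filter_upwards [ae_snd_ne] with x hx
    exact h x.1 x.2 hx

theorem zero_t (V g : ℝ × ℝ × ℝ → ℝ) (hg : Integrable g) {R : ℝ}
    (hR : ∀ w : ℝ × ℝ × ℝ, R ≤ ‖w‖ → V w = 0)
    (h : ∀ t ξ η : ℝ, HasDerivAt (fun t => V (t, ξ, η)) (g (t, ξ, η)) t) : ∫ w, g w = 0 := by
  have mp := Measure.measurePreserving_swap (μ := (volume : Measure (ℝ × ℝ))) (ν := (volume : Measure ℝ))
  have e1 := mp.integral_comp MeasurableEquiv.prodComm.measurableEmbedding g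
  have i1 := (mp.integrable_comp_emb MeasurableEquiv.prodComm.measurableEmbedding).2 hg
  change ∫ w, g w ∂_ = 0
  refine e1.symm.trans ?_
  refine zero_gen (X := ℝ × ℝ) (fun q => V (q.2, q.1)) (fun q => g (q.2, q.1)) i1
    (R := R) ?_ ?_
  · intro x s hs
    refine hR _ (hs.trans ?_)
    exact (le_max_left _ _)
  · refine Eventually.of_forall fun x => ⟨?_, fun s _ => h s x.1 x.2⟩
    exact continuous_iff_continuousAt.2 fun s => (h s x.1 x.2).continuousAt

theorem zero_ξ (V g : ℝ × ℝ × ℝ → ℝ) (hg : Integrable g) {R : ℝ}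
    (hR : ∀ w : ℝ × ℝ × ℝ, R ≤ ‖w‖ → V w = 0)
    (h : ∀ t η : ℝ, η ≠ 0 → Continuous (fun ξ => V (t, ξ, η)) ∧
      ∀ ξ ≠ 0, HasDerivAt (fun ξ => V (t, ξ, η)) (g (t, ξ, η)) ξ) : ∫ w, g w = 0 := by
  have mp := (MeasurePreserving.id (volume : Measure ℝ)).prod
    (Measure.measurePreserving_swap (μ := (volume : Measure ℝ)) (ν := (volume : Measure ℝ)))
  have me : MeasurableEmbedding (Prod.map id Prod.swap : ℝ × ℝ × ℝ → ℝ × ℝ × ℝ) :=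
    (MeasurableEquiv.prodCongr (MeasurableEquiv.refl ℝ) MeasurableEquiv.prodComm).measurableEmbedding
  have e1 := mp.integral_comp me g
  have i1 := (mp.integrable_comp_emb me).2 hg
  change ∫ w, g w ∂_ = 0
  refine e1.symm.trans ?_
  refine zero_η (fun w => V (w.1, w.2.2, w.2.1)) (fun w => g (w.1, w.2.2, w.2.1)) i1 (R := R) ?_ ?_
  · intro w hw
    refine hR _ (hw.trans (le_of_eq ?_))
    simp only [Prod.norm_def, max_comm]
  · intro t η hη
    exact h t η hη

namespace Good

theorem congr_fun' {E : Type*} [NormedAddCommGroup E] {f g : ℝ × ℝ × ℝ → E} {α β α' β' : ℝ} (h : Good f α β)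
    (hfg : ∀ w ∈ offS, g w = f w) (ha : α = α') (hb : β = β') : Good g α' β' := by
  subst ha hb
  refine ⟨h.1.congr hfg, fun M hM => ?_⟩
  obtain ⟨C, hC, h1⟩ := h.2 M hM
  exact ⟨C, hC, fun w hw a b => by rw [hfg w hw]; exact h1 w hw a b⟩

theorem inv_ξ : Good (fun w : ℝ × ℝ × ℝ => 1 / (2 * w.2.1)) (-1) 0 := by
  constructor
  · intro w hw
    have : 2 * w.2.1 ≠ 0 := mul_ne_zero two_ne_zero hw.1
    exact ContinuousAt.continuousWithinAt (ContinuousAt.div (by fun_prop) (by fun_prop) this)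
  · intro M hM
    refine ⟨1, zero_le_one, fun w hw a b => ?_⟩
    have := abs_pos.2 hw.1
    rw [Real.rpow_neg_one, Real.rpow_zero, Real.norm_eq_abs, abs_div, abs_mul, abs_two, abs_one]
    rw [mul_one, one_mul, one_div]
    exact inv_anti₀ this (by linarith)

theorem inv_η : Good (fun w : ℝ × ℝ × ℝ => 1 / (2 * w.2.2)) 0 (-1) := by
  constructor
  · intro w hw
    have : 2 * w.2.2 ≠ 0 := mul_ne_zero two_ne_zero hw.2
    exact ContinuousAt.continuousWithinAt (ContinuousAt.div (by fun_prop) (by fun_prop) this)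
  · intro M hM
    refine ⟨1, zero_le_one, fun w hw a b => ?_⟩
    have := abs_pos.2 hw.2
    rw [Real.rpow_neg_one, Real.rpow_zero, Real.norm_eq_abs, abs_div, abs_mul, abs_two, abs_one]
    rw [one_mul, one_mul, one_div]
    exact inv_anti₀ this (by linarith)

theorem abs_log_le {δ x M : ℝ} (hδ : 0 < δ) (hM : x ≤ M) (hx : 0 < x) :
    |Real.log x| ≤ (M ^ (2 * δ) / δ + 1 / δ) * x ^ (-δ) := by
  have h1 := Real.log_le_rpow_div hx.le hδ
  have h2 := Real.log_le_rpow_div (inv_pos.2 hx).le hδ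
  rw [Real.log_inv, Real.inv_rpow hx.le, ← Real.rpow_neg hx.le] at h2
  have h3 : x ^ δ ≤ M ^ (2 * δ) * x ^ (-δ) := by
    have : x ^ δ = x ^ (2 * δ) * x ^ (-δ) := by rw [← Real.rpow_add hx]; ring_nf
    rw [this]; gcongr
  have h4 : 0 ≤ x ^ (-δ) / δ := by positivity
  have h5 : 0 ≤ x ^ δ / δ := by positivity
  have h6 : x ^ δ / δ ≤ M ^ (2 * δ) * x ^ (-δ) / δ := by gcongr
  have h7 : (M ^ (2 * δ) / δ + 1 / δ) * x ^ (-δ) = M ^ (2 * δ) * x ^ (-δ) / δ + x ^ (-δ) / δ := by ring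
  rw [h7, abs_le]
  constructor <;> linarith

theorem log_ξ {δ : ℝ} (hδ : 0 < δ) : Good (fun w : ℝ × ℝ × ℝ => Real.log w.2.1) (-δ) 0 := by
  constructor
  · intro w hw
    exact ContinuousAt.continuousWithinAt (ContinuousAt.log (by fun_prop) hw.1)
  · intro M hM
    refine ⟨M ^ (2 * δ) / δ + 1 / δ, by positivity, fun w hw a b => ?_⟩
    simp only [Real.rpow_zero, mul_one, Real.norm_eq_abs]
    rw [← Real.log_abs]
    exact abs_log_le hδ a (abs_pos.2 hw.1)

theorem log_η {δ : ℝ} (hδ : 0 < δ) : Good (fun w : ℝ × ℝ × ℝ => Real.log w.2.2) 0 (-δ) := by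
  constructor
  · intro w hw
    exact ContinuousAt.continuousWithinAt (ContinuousAt.log (by fun_prop) hw.2)
  · intro M hM
    refine ⟨M ^ (2 * δ) / δ + 1 / δ, by positivity, fun w hw a b => ?_⟩
    simp only [Real.rpow_zero, one_mul, Real.norm_eq_abs]
    rw [← Real.log_abs]
    exact abs_log_le hδ b (abs_pos.2 hw.2)

theorem frG {θ p q r : ℝ × ℝ × ℝ → ℝ} {α β : ℝ} (hθ : ContinuousOn θ offS) (hp : Good p α β)
    (hq : Good q α β) (hr : Good r α β) : Good (fun w => fr (θ w) (p w) (q w) (r w)) α β := by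
  refine ⟨continuous_fr.comp_continuousOn (hθ.prodMk (hp.1.prodMk (hq.1.prodMk hr.1))), fun M hM => ?_⟩
  obtain ⟨C, hC, h1⟩ := hp.2 M hM
  obtain ⟨D, hD, h2⟩ := hq.2 M hM
  obtain ⟨E, hE, h3⟩ := hr.2 M hM
  refine ⟨C + D + E, by positivity, fun w hw a b => (norm_fr_le _ _ _ _).trans ?_⟩
  have := h1 w hw a b
  have := h2 w hw a b
  have := h3 w hw a b
  simp only [Real.norm_eq_abs] at *
  linarith

theorem zero {α β : ℝ} : Good (fun _ : ℝ × ℝ × ℝ => (0:ℝ)) α β :=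
  ⟨continuousOn_const, fun M hM => ⟨0, le_rfl, fun w hw a b => by simp⟩⟩

end Good

namespace Prof
variable {k c b κ : ℝ} (Q : Prof k c b κ)

theorem smP : ContDiff ℝ (⊤ : ℕ∞) Q.P := by
  have := (contDiff_infty_iff_deriv.1 Q.smS).2
  rwa [show deriv Q.S = Q.P from funext fun τ => (Q.hS τ).deriv] at this
theorem smA : ContDiff ℝ (⊤ : ℕ∞) Q.A := by
  have := (contDiff_infty_iff_deriv.1 Q.smP).2
  rwa [show deriv Q.P = Q.A from funext fun τ => (Q.hP τ).deriv] at this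
theorem smB1 : ContDiff ℝ (⊤ : ℕ∞) Q.B1 := by
  have := (contDiff_infty_iff_deriv.1 Q.smB).2
  rwa [show deriv Q.B = Q.B1 from funext fun τ => (Q.hB τ).deriv] at this
theorem smB2 : ContDiff ℝ (⊤ : ℕ∞) Q.B2 := by
  have := (contDiff_infty_iff_deriv.1 Q.smB1).2
  rwa [show deriv Q.B1 = Q.B2 from funext fun τ => (Q.hB1 τ).deriv] at this

theorem cont_ta : ContinuousOn (fun w : ℝ × ℝ × ℝ => ta w.2.1 w.2.2) offS := by
  intro w hw
  refine ContinuousAt.continuousWithinAt ?_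
  unfold ta
  have h1 : ContinuousAt (fun w : ℝ × ℝ × ℝ => Real.log w.2.1) w := ContinuousAt.log (by fun_prop) hw.1
  have h2 : ContinuousAt (fun w : ℝ × ℝ × ℝ => Real.log w.2.2) w := ContinuousAt.log (by fun_prop) hw.2
  exact (h1.add h2).div_const _

theorem cont_al : ContinuousOn (fun w : ℝ × ℝ × ℝ => al w.2.1 w.2.2) offS := by
  intro w hw
  refine ContinuousAt.continuousWithinAt ?_
  unfold al
  have h1 : ContinuousAt (fun w : ℝ × ℝ × ℝ => Real.log w.2.1) w := ContinuousAt.log (by fun_prop) hw.1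
  have h2 : ContinuousAt (fun w : ℝ × ℝ × ℝ => Real.log w.2.2) w := ContinuousAt.log (by fun_prop) hw.2
  exact (h1.sub h2).div_const _

theorem cont_th (μ : ℝ) : ContinuousOn (fun w : ℝ × ℝ × ℝ => Q.th μ w.1 w.2.1 w.2.2) offS := by
  unfold th
  exact ((Q.smB.continuous.comp_continuousOn cont_ta).add (cont_al.const_smul k)).add (by fun_prop)

theorem ta_le {M : ℝ} {w : ℝ × ℝ × ℝ} (hw : w ∈ offS) (h1 : |w.2.1| ≤ M) (h2 : |w.2.2| ≤ M) :
    ta w.2.1 w.2.2 ≤ Real.log M := by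
  unfold ta
  have a := Real.log_le_log (abs_pos.2 hw.1) h1
  have b := Real.log_le_log (abs_pos.2 hw.2) h2
  rw [Real.log_abs] at a b
  linarith

theorem exp_kta {κ : ℝ} {w : ℝ × ℝ × ℝ} (hw : w ∈ offS) :
    Real.exp (κ * ta w.2.1 w.2.2) = |w.2.1| ^ (κ / 2) * |w.2.2| ^ (κ / 2) := by
  rw [Real.rpow_def_of_pos (abs_pos.2 hw.1), Real.rpow_def_of_pos (abs_pos.2 hw.2), ← Real.exp_add,
    Real.log_abs, Real.log_abs]
  unfold ta; congr 1; ring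

theorem gexp {h : ℝ → ℝ} (hc : Continuous h)
    (hb : ∀ T, ∃ C, 0 < C ∧ ∀ τ ≤ T, |h τ| ≤ C * Real.exp (κ * τ)) :
    Good (fun w => h (ta w.2.1 w.2.2)) (κ / 2) (κ / 2) := by
  refine ⟨hc.comp_continuousOn cont_ta, fun M hM => ?_⟩
  obtain ⟨C, hC, h1⟩ := hb (Real.log M)
  refine ⟨C, hC.le, fun w hw a b => ?_⟩
  rw [← exp_kta hw]
  exact h1 _ (ta_le hw a b)

theorem gbd {h : ℝ → ℝ} (hc : Continuous h)
    (hb : ∀ T, ∃ C, 0 < C ∧ ∀ τ ≤ T, |h τ| ≤ C) :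
    Good (fun w => h (ta w.2.1 w.2.2)) 0 0 := by
  refine ⟨hc.comp_continuousOn cont_ta, fun M hM => ?_⟩
  obtain ⟨C, hC, h1⟩ := hb (Real.log M)
  refine ⟨C, hC.le, fun w hw a b => ?_⟩
  simpa using h1 _ (ta_le hw a b)

theorem gS : Good (fun w => Q.S (ta w.2.1 w.2.2)) (κ / 2) (κ / 2) :=
  gexp Q.smS.continuous fun T => by
    obtain ⟨C, hC, h⟩ := Q.bd T
    exact ⟨C, hC, fun τ hτ => (h τ hτ).1⟩
theorem gP : Good (fun w => Q.P (ta w.2.1 w.2.2)) (κ / 2) (κ / 2) :=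
  gexp Q.smP.continuous fun T => by
    obtain ⟨C, hC, h⟩ := Q.bd T
    exact ⟨C, hC, fun τ hτ => (h τ hτ).2.1⟩
theorem gA : Good (fun w => Q.A (ta w.2.1 w.2.2)) (κ / 2) (κ / 2) :=
  gexp Q.smA.continuous fun T => by
    obtain ⟨C, hC, h⟩ := Q.bd T
    exact ⟨C, hC, fun τ hτ => (h τ hτ).2.2.1⟩
theorem gF : Good (fun w => Q.F (ta w.2.1 w.2.2)) (κ / 2) (κ / 2) :=
  gexp Q.smF.continuous fun T => by
    obtain ⟨C, hC, h⟩ := Q.bd T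
    exact ⟨C, hC, fun τ hτ => (h τ hτ).2.2.2.1⟩
theorem gB1 : Good (fun w => Q.B1 (ta w.2.1 w.2.2)) 0 0 :=
  gbd Q.smB1.continuous fun T => by
    obtain ⟨C, hC, h⟩ := Q.bd T
    exact ⟨C, hC, fun τ hτ => (h τ hτ).2.2.2.2.1⟩
theorem gB2 : Good (fun w => Q.B2 (ta w.2.1 w.2.2)) 0 0 :=
  gbd Q.smB2.continuous fun T => by
    obtain ⟨C, hC, h⟩ := Q.bd T
    exact ⟨C, hC, fun τ hτ => (h τ hτ).2.2.2.2.2⟩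
theorem gsin : Good (fun w => Real.sin (Q.S (ta w.2.1 w.2.2))) (κ / 2) (κ / 2) :=
  gexp (h := fun τ => Real.sin (Q.S τ)) (Real.continuous_sin.comp Q.smS.continuous) fun T => by
    obtain ⟨C, hC, h⟩ := Q.bd T
    exact ⟨C, hC, fun τ hτ => Real.abs_sin_le_abs.trans (h τ hτ).1⟩
theorem gcos1 : Good (fun w => 1 - Real.cos (Q.S (ta w.2.1 w.2.2))) (κ / 2) (κ / 2) :=
  gexp (h := fun τ => 1 - Real.cos (Q.S τ)) (continuous_const.sub (Real.continuous_cos.comp Q.smS.continuous)) fun T => by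
    obtain ⟨C, hC, h⟩ := Q.bd T
    refine ⟨2 * C, by positivity, fun τ hτ => (one_sub_cos_le_abs _).trans ?_⟩
    linarith [(h τ hτ).1]
theorem gcos : Good (fun w => Real.cos (Q.S (ta w.2.1 w.2.2))) 0 0 :=
  gbd (h := fun τ => Real.cos (Q.S τ)) (Real.continuous_cos.comp Q.smS.continuous) fun T =>
    ⟨1, one_pos, fun τ hτ => Real.abs_cos_le_one _⟩


theorem sq_weak (hκ : 0 < κ) {f g : ℝ × ℝ × ℝ → ℝ} (hf : Good f (κ / 2) (κ / 2)) (hg : Good g (κ / 2) (κ / 2)) :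
    Good (fun w => f w * g w) (κ / 2) (κ / 2) := (hf.mul hg).weaken (by linarith) (by linarith)

theorem mulb {e : ℝ} {f g : ℝ × ℝ × ℝ → ℝ} (hf : Good f e e) (hg : Good g 0 0) :
    Good (fun w => f w * g w) e e := by simpa using hf.mul hg
theorem bmul {e : ℝ} {f g : ℝ × ℝ × ℝ → ℝ} (hf : Good f 0 0) (hg : Good g e e) :
    Good (fun w => f w * g w) e e := by simpa using hf.mul hg

theorem gU (hκ : 0 < κ) (μ : ℝ) : Good (fun w => Q.U μ w.1 w.2.1 w.2.2) 0 0 :=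
  Good.frG (Q.cont_th μ) Q.gcos (Q.gsin.weaken (by linarith) (by linarith)) Good.zero

theorem gU0 (μ : ℝ) : Good (fun w => Q.U μ w.1 w.2.1 w.2.2 - e0) (κ / 2) (κ / 2) := by
  refine (Good.frG (Q.cont_th μ) Q.gcos1.neg Q.gsin Good.zero).congr_fun' ?_ rfl rfl
  intro w hw
  ext i; fin_cases i <;> simp [U, fr, e0]

theorem gUt (μ : ℝ) : Good (fun w => Q.Ut μ w.1 w.2.1 w.2.2) (κ / 2) (κ / 2) :=
  Good.frG (Q.cont_th μ) Good.zero Good.zero (Q.gsin.const_mul μ)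

theorem gX (hκ : 0 < κ) (μ : ℝ) (j : ℝ) : Good (fun w => Q.X μ w.1 w.2.1 w.2.2 j) (κ / 2) (κ / 2) :=
  Good.frG (Q.cont_th μ) (sq_weak hκ Q.gP.neg Q.gsin) (mulb Q.gP Q.gcos)
    (bmul (Q.gB1.add (Good.const j)) Q.gsin)

theorem gN (hκ : 0 < κ) (μ : ℝ) : Good (fun w => Q.N μ w.1 w.2.1 w.2.2) (κ / 2) (κ / 2) := by
  have hP2 : Good (fun w => Q.P (ta w.2.1 w.2.2) ^ 2) (κ / 2) (κ / 2) := by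
    simpa [sq] using sq_weak hκ Q.gP Q.gP
  have hB2 : Good (fun w => Q.B1 (ta w.2.1 w.2.2) ^ 2) 0 0 := by
    simpa [sq] using Q.gB1.mul Q.gB1
  exact Good.frG (Q.cont_th μ) ((sq_weak hκ Q.gA.neg Q.gsin).sub (mulb hP2 Q.gcos))
    (((mulb Q.gA Q.gcos).sub (sq_weak hκ hP2 Q.gsin)).sub (bmul (hB2.sub (Good.const _)) Q.gsin))
    ((bmul Q.gB2 Q.gsin).add (bmul (mulb (Q.gB1.const_mul 2) Q.gcos) Q.gP))

theorem gUξ (hκ : 0 < κ) (μ : ℝ) : Good (fun w => Q.Uξ μ w.1 w.2.1 w.2.2) (κ / 2 - 1) (κ / 2) :=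
  (Good.inv_ξ.smul (Q.gX hκ μ k)).congr_fun' (fun _ _ => rfl) (by ring) (by ring)
theorem gUη (hκ : 0 < κ) (μ : ℝ) : Good (fun w => Q.Uη μ w.1 w.2.1 w.2.2) (κ / 2) (κ / 2 - 1) :=
  (Good.inv_η.smul (Q.gX hκ μ (-k))).congr_fun' (fun _ _ => rfl) (by ring) (by ring)
theorem gUξη (hκ : 0 < κ) (μ : ℝ) : Good (fun w => Q.Uξη μ w.1 w.2.1 w.2.2) (κ / 2 - 1) (κ / 2 - 1) :=
  ((Good.inv_ξ.mul Good.inv_η).smul (Q.gN hκ μ)).congr_fun'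
    (fun w hw => by
      have := hw.1; have := hw.2
      simp only [Uξη]; congr 1; field_simp; norm_num) (by ring) (by ring)

theorem gFξ : Good (fun w => Q.Fξ w.2.1 w.2.2) (κ / 2 - 1) (κ / 2) :=
  (Good.inv_ξ.mul (Q.gcos1.const_mul (2 * k))).congr_fun' (fun _ _ => rfl) (by ring) (by ring)
theorem gFη : Good (fun w => Q.Fη w.2.1 w.2.2) (κ / 2) (κ / 2 - 1) :=
  (Good.inv_η.mul (Q.gcos1.const_mul (2 * k))).congr_fun' (fun _ _ => rfl) (by ring) (by ring)
theorem gFξη (hκ : 0 < κ) : Good (fun w => Q.Fξη w.2.1 w.2.2) (κ / 2 - 1) (κ / 2 - 1) :=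
  ((Good.inv_ξ.mul Good.inv_η).mul ((sq_weak hκ Q.gsin Q.gP).const_mul (2 * k))).congr_fun'
    (fun w hw => by
      have := hw.1; have := hw.2
      simp only [Fξη]; congr 1; field_simp; norm_num) (by ring) (by ring)
theorem gΦξ (hκ : 0 < κ) : Good (fun w => Q.Φξ w.2.1 w.2.2) (-1) 0 :=
  (Good.inv_ξ.const_mul (c + b)).sub (Q.gFξ.weaken (by linarith) (by linarith))
theorem gΦη (hκ : 0 < κ) : Good (fun w => Q.Φη w.2.1 w.2.2) 0 (-1) :=
  (Good.inv_η.const_mul (b - c)).sub (Q.gFη.weaken (by linarith) (by linarith))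

theorem Φ_eq (ξ η : ℝ) :
    Q.Φ ξ η = (c + b) / 2 * Real.log ξ + (b - c) / 2 * Real.log η - Q.F (ta ξ η) := by
  simp only [Φ, al, ta]; ring

theorem gΦ (hκ : 0 < κ) : Good (fun w => Q.Φ w.2.1 w.2.2) (-(κ / 4)) (-(κ / 4)) := by
  have h4 : 0 < κ / 4 := by positivity
  simp only [Φ_eq]
  exact ((((Good.log_ξ h4).const_mul ((c + b) / 2)).weaken le_rfl (by linarith)).add
    (((Good.log_η h4).const_mul ((b - c) / 2)).weaken (by linarith) le_rfl)).sub
    (Q.gF.weaken (by linarith) (by linarith))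

/-- Choice of the profile according to the cone. -/
noncomputable def sel (Qh Qv : Prof k c b κ) (ξ η : ℝ) : Prof k c b κ :=
  open Classical in if 0 < ξ * η then Qh else Qv

/-- Glueing over the cones, with value `z` on the cross. -/
noncomputable def gl {E : Type*} (Qh Qv : Prof k c b κ) (G : Prof k c b κ → ℝ → ℝ → ℝ → E) (z : E)
    (w : ℝ × ℝ × ℝ) : E :=
  open Classical in
  if w.2.1 * w.2.2 = 0 then z else G (sel Qh Qv w.2.1 w.2.2) w.1 w.2.1 w.2.2

variable {E : Type*} (Qh Qv : Prof k c b κ) (G G' : Prof k c b κ → ℝ → ℝ → ℝ → E) (z z' : E)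

theorem gl_eq {w : ℝ × ℝ × ℝ} (hw : w ∈ offS) :
    gl Qh Qv G z w = G (sel Qh Qv w.2.1 w.2.2) w.1 w.2.1 w.2.2 := by
  simp [gl, hw.1, hw.2]

theorem gl_cross {w : ℝ × ℝ × ℝ} (hw : w ∉ offS) : gl Qh Qv G z w = z := by
  have : w.2.1 * w.2.2 = 0 := by
    by_contra h
    exact hw (mul_ne_zero_iff.1 h)
  simp [gl, this]

theorem sel_ev {w : ℝ × ℝ × ℝ} (hw : w ∈ offS) :
    ∀ᶠ w' in nhds w, sel Qh Qv w'.2.1 w'.2.2 = sel Qh Qv w.2.1 w.2.2 := by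
  have hc : Continuous (fun w : ℝ × ℝ × ℝ => w.2.1 * w.2.2) := by fun_prop
  rcases lt_or_gt_of_ne (mul_ne_zero hw.1 hw.2) with h | h
  · filter_upwards [hc.continuousAt.eventually_lt_const h] with w' h'
    simp [sel, h.not_gt, h'.not_gt]
  · filter_upwards [hc.continuousAt.eventually_const_lt h] with w' h'
    simp [sel, h, h']

theorem gl_ev {w : ℝ × ℝ × ℝ} (hw : w ∈ offS) :
    gl Qh Qv G z =ᶠ[nhds w] fun w' => G (sel Qh Qv w.2.1 w.2.2) w'.1 w'.2.1 w'.2.2 := by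
  filter_upwards [sel_ev Qh Qv hw, isOpen_offS.mem_nhds hw] with w' h1 h2
  rw [gl_eq Qh Qv G z h2, h1]

variable {G G' z z'}

theorem gl_good [NormedAddCommGroup E] {α β : ℝ} (h : ∀ Q : Prof k c b κ, Good (fun w => G Q w.1 w.2.1 w.2.2) α β) :
    Good (gl Qh Qv G z) α β := by
  constructor
  · intro w hw
    refine ContinuousAt.continuousWithinAt ?_
    refine ContinuousAt.congr ?_ (gl_ev Qh Qv G z hw).symm
    exact (h _).1.continuousAt (isOpen_offS.mem_nhds hw)
  · intro M hM
    obtain ⟨C, hC, h1⟩ := (h Qh).2 M hM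
    obtain ⟨D, hD, h2⟩ := (h Qv).2 M hM
    refine ⟨C + D, by positivity, fun w hw a b => ?_⟩
    rw [gl_eq Qh Qv G z hw, add_mul]
    have h1 := h1 w hw a b
    have h2 := h2 w hw a b
    have p : 0 ≤ |w.2.1| ^ α * |w.2.2| ^ β := by positivity
    by_cases hs : 0 < w.2.1 * w.2.2
    · simp only [sel, hs, if_true]; nlinarith
    · simp only [sel, hs, if_false]; nlinarith

variable [NormedAddCommGroup E] [NormedSpace ℝ E]

theorem gl_dξ {t ξ η : ℝ} (hξ : ξ ≠ 0) (hη : η ≠ 0)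
    (h : ∀ Q : Prof k c b κ, HasDerivAt (fun ξ => G Q t ξ η) (G' Q t ξ η) ξ) :
    HasDerivAt (fun ξ => gl Qh Qv G z (t, ξ, η)) (gl Qh Qv G' z' (t, ξ, η)) ξ := by
  have hw : (t, ξ, η) ∈ offS := ⟨hξ, hη⟩
  rw [gl_eq Qh Qv G' z' hw]
  refine (h _).congr_of_eventuallyEq ?_
  exact (show ContinuousAt (fun ξ : ℝ => (t, ξ, η)) ξ by fun_prop).eventually (gl_ev Qh Qv G z hw)

theorem gl_dη {t ξ η : ℝ} (hξ : ξ ≠ 0) (hη : η ≠ 0)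
    (h : ∀ Q : Prof k c b κ, HasDerivAt (fun η => G Q t ξ η) (G' Q t ξ η) η) :
    HasDerivAt (fun η => gl Qh Qv G z (t, ξ, η)) (gl Qh Qv G' z' (t, ξ, η)) η := by
  have hw : (t, ξ, η) ∈ offS := ⟨hξ, hη⟩
  rw [gl_eq Qh Qv G' z' hw]
  refine (h _).congr_of_eventuallyEq ?_
  exact (show ContinuousAt (fun η : ℝ => (t, ξ, η)) η by fun_prop).eventually (gl_ev Qh Qv G z hw)

theorem gl_dt {t ξ η : ℝ}
    (h : ∀ Q : Prof k c b κ, HasDerivAt (fun t => G Q t ξ η) (G' Q t ξ η) t) :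
    HasDerivAt (fun t => gl Qh Qv G z (t, ξ, η)) (gl Qh Qv G' 0 (t, ξ, η)) t := by
  by_cases hw : (t, ξ, η) ∈ offS
  · rw [gl_eq Qh Qv G' 0 hw]
    refine (h _).congr_of_eventuallyEq ?_
    exact (show ContinuousAt (fun t : ℝ => (t, ξ, η)) t by fun_prop).eventually (gl_ev Qh Qv G z hw)
  · rw [gl_cross Qh Qv G' 0 hw]
    have : (fun t => gl Qh Qv G z (t, ξ, η)) = fun _ => z := by
      funext s
      exact gl_cross Qh Qv G z (fun h => hw h)
    rw [this]
    exact hasDerivAt_const _ _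

end Prof

namespace Prof
variable {k c b κ : ℝ} (Qh Qv : Prof k c b κ) (μ : ℝ)

noncomputable def uu := gl Qh Qv (fun Q t ξ η => Q.U μ t ξ η) e0
noncomputable def ux := gl Qh Qv (fun Q t ξ η => Q.Uξ μ t ξ η) 0
noncomputable def uy := gl Qh Qv (fun Q t ξ η => Q.Uη μ t ξ η) 0
noncomputable def uxy := gl Qh Qv (fun Q t ξ η => Q.Uξη μ t ξ η) 0
noncomputable def ut := gl Qh Qv (fun Q t ξ η => Q.Ut μ t ξ η) 0
noncomputable def ph := gl Qh Qv (fun Q _ ξ η => Q.Φ ξ η) 0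
noncomputable def phx := gl Qh Qv (fun Q _ ξ η => Q.Φξ ξ η) 0
noncomputable def phy := gl Qh Qv (fun Q _ ξ η => Q.Φη ξ η) 0
noncomputable def ff := gl Qh Qv (fun Q _ ξ η => Q.F (ta ξ η)) 0
noncomputable def fx := gl Qh Qv (fun Q _ ξ η => Q.Fξ ξ η) 0
noncomputable def fxy := gl Qh Qv (fun Q _ ξ η => Q.Fξη ξ η) 0

theorem guu (hκ : 0 < κ) : Good (uu Qh Qv μ) 0 0 := gl_good _ _ fun Q => Q.gU hκ μ
theorem gux (hκ : 0 < κ) : Good (ux Qh Qv μ) (κ / 2 - 1) (κ / 2) := gl_good _ _ fun Q => Q.gUξ hκ μ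
theorem guy (hκ : 0 < κ) : Good (uy Qh Qv μ) (κ / 2) (κ / 2 - 1) := gl_good _ _ fun Q => Q.gUη hκ μ
theorem guxy (hκ : 0 < κ) : Good (uxy Qh Qv μ) (κ / 2 - 1) (κ / 2 - 1) := gl_good _ _ fun Q => Q.gUξη hκ μ
theorem gut : Good (ut Qh Qv μ) (κ / 2) (κ / 2) := gl_good _ _ fun Q => Q.gUt μ
theorem gph (hκ : 0 < κ) : Good (ph Qh Qv) (-(κ / 4)) (-(κ / 4)) := gl_good _ _ fun Q => Q.gΦ hκ
theorem gphx (hκ : 0 < κ) : Good (phx Qh Qv) (-1) 0 := gl_good _ _ fun Q => Q.gΦξ hκ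
theorem gphy (hκ : 0 < κ) : Good (phy Qh Qv) 0 (-1) := gl_good _ _ fun Q => Q.gΦη hκ
theorem gff : Good (ff Qh Qv) (κ / 2) (κ / 2) := gl_good _ _ fun Q => Q.gF
theorem gfx : Good (fx Qh Qv) (κ / 2 - 1) (κ / 2) := gl_good _ _ fun Q => Q.gFξ
theorem gfxy (hκ : 0 < κ) : Good (fxy Qh Qv) (κ / 2 - 1) (κ / 2 - 1) := gl_good _ _ fun Q => Q.gFξη hκ

variable {Qh Qv μ}

theorem pde1_gl (hh : Qh.ν = μ) (hv : Qv.ν = -μ) {w : ℝ × ℝ × ℝ} (hw : w ∈ offS) :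
    ut Qh Qv μ w = (4:ℝ) • cross3 (uu Qh Qv μ w) (uxy Qh Qv μ w)
      + (2 * phy Qh Qv w) • ux Qh Qv μ w - (2 * phx Qh Qv w) • uy Qh Qv μ w := by
  simp only [ut, uu, uxy, phy, ux, phx, uy, gl_eq _ _ _ _ hw]
  refine pde1 _ _ hw.1 hw.2 ?_
  by_cases h : 0 < w.2.1 * w.2.2
  · simp only [sel, h, if_true]; rw [hh, abs_of_pos h]
  · simp only [sel, h, if_false]; rw [hv, abs_of_nonpos (not_lt.1 h)]; ring

theorem pde2_gl {w : ℝ × ℝ × ℝ} (hw : w ∈ offS) :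
    -fxy Qh Qv w = dot3 (uu Qh Qv μ w) (cross3 (ux Qh Qv μ w) (uy Qh Qv μ w)) := by
  simp only [uu, fxy, ux, uy, gl_eq _ _ _ _ hw]
  exact pde2 _ _ _

theorem ph_gl {w : ℝ × ℝ × ℝ} (hw : w ∈ offS) :
    ph Qh Qv w = (c + b) / 2 * Real.log w.2.1 + (b - c) / 2 * Real.log w.2.2 - ff Qh Qv w := by
  simp only [ph, ff, gl_eq _ _ _ _ hw]
  exact Φ_eq _ _ _

theorem cross3_zero (v : Fin 3 → ℝ) : cross3 v 0 = 0 := by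
  ext i; fin_cases i <;> simp [cross3]
theorem dot3_zero (v : Fin 3 → ℝ) : dot3 v 0 = 0 := by simp [dot3]
theorem zero_dot3 (v : Fin 3 → ℝ) : dot3 0 v = 0 := by simp [dot3]

/-- A continuous function with compact support inside `K`. -/
def Tst {E : Type*} [NormedAddCommGroup E] (f : ℝ × ℝ × ℝ → E) (K : Set (ℝ × ℝ × ℝ)) : Prop :=
  Continuous f ∧ IsCompact K ∧ ∀ w, w ∉ K → f w = 0

theorem Tst.good {E : Type*} [NormedAddCommGroup E] {f : ℝ × ℝ × ℝ → E} {K : Set (ℝ × ℝ × ℝ)}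
    (h : Tst f K) : Good f 0 0 :=
  Good.of_cpt h.1 (HasCompactSupport.intro h.2.1 (fun {w} hw => h.2.2 w hw))

theorem exists_R {K : Set (ℝ × ℝ × ℝ)} (hK : IsCompact K) : ∃ R : ℝ, ∀ w, R ≤ ‖w‖ → w ∉ K := by
  obtain ⟨R, hR⟩ := hK.isBounded.subset_closedBall 0
  refine ⟨R + 1, fun w hw h => ?_⟩
  have := hR h
  rw [mem_closedBall_zero_iff] at this
  linarith

theorem weak1 (hκ : 0 < κ) (hh : Qh.ν = μ) (hv : Qv.ν = -μ)
    {ψ ψt ψξ ψη : ℝ × ℝ × ℝ → Fin 3 → ℝ} {K : Set (ℝ × ℝ × ℝ)}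
    (h0 : Tst ψ K) (ht : Tst ψt K) (hξ : Tst ψξ K) (hη : Tst ψη K)
    (dt : ∀ t ξ η, HasDerivAt (fun t => ψ (t, ξ, η)) (ψt (t, ξ, η)) t)
    (dξ : ∀ t ξ η, HasDerivAt (fun ξ => ψ (t, ξ, η)) (ψξ (t, ξ, η)) ξ)
    (dη : ∀ t ξ η, HasDerivAt (fun η => ψ (t, ξ, η)) (ψη (t, ξ, η)) η) :
    ∫ w, (dot3 (uu Qh Qv μ w) (ψt w)
      - 2 * dot3 (cross3 (uu Qh Qv μ w) (ux Qh Qv μ w) + ph Qh Qv w • ux Qh Qv μ w) (ψη w)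
      - 2 * dot3 (cross3 (uu Qh Qv μ w) (uy Qh Qv μ w) - ph Qh Qv w • uy Qh Qv μ w) (ψξ w)) = 0 := by
  obtain ⟨d, hd, hd4, hd1⟩ : ∃ d : ℝ, 0 < d ∧ d ≤ κ / 4 ∧ d ≤ 1 :=
    ⟨min (κ / 4) 1, lt_min (by positivity) one_pos, min_le_left _ _, min_le_right _ _⟩
  obtain ⟨R, hR⟩ := exists_R h0.2.1
  have hK := h0.2.1
  set u := uu Qh Qv μ with hu
  set v := ux Qh Qv μ with hvd
  set y := uy Qh Qv μ with hyd
  set xy := uxy Qh Qv μ with hxyd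
  set f := ph Qh Qv with hfd
  have gu : Good u 0 0 := guu Qh Qv μ hκ
  have gv : Good v _ _ := gux Qh Qv μ hκ
  have gy : Good y _ _ := guy Qh Qv μ hκ
  have gxy : Good xy _ _ := guxy Qh Qv μ hκ
  have gf : Good f _ _ := gph Qh Qv hκ
  -- the fluxes
  have gA : Good (fun w => cross3 (u w) (v w) + f w • v w) (d - 1) d :=
    ((gu.cross gv).weaken (by linarith) (by linarith)).add
      ((gf.smul gv).weaken (by linarith) (by linarith))
  have gB : Good (fun w => cross3 (u w) (y w) - f w • y w) d (d - 1) :=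
    ((gu.cross gy).weaken (by linarith) (by linarith)).sub
      ((gf.smul gy).weaken (by linarith) (by linarith))
  have gAη : Good (fun w => (cross3 (y w) (v w) + cross3 (u w) (xy w)) + (f w • xy w + phy Qh Qv w • v w))
      (d - 1) (d - 1) :=
    (((gy.cross gv).weaken (by linarith) (by linarith)).add
      ((gu.cross gxy).weaken (by linarith) (by linarith))).add
      (((gf.smul gxy).weaken (by linarith) (by linarith)).add
        (((gphy Qh Qv hκ).smul gv).weaken (by linarith) (by linarith)))
  have gBξ : Good (fun w => (cross3 (v w) (y w) + cross3 (u w) (xy w)) - (f w • xy w + phx Qh Qv w • y w))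
      (d - 1) (d - 1) :=
    (((gv.cross gy).weaken (by linarith) (by linarith)).add
      ((gu.cross gxy).weaken (by linarith) (by linarith))).sub
      (((gf.smul gxy).weaken (by linarith) (by linarith)).add
        (((gphx Qh Qv hκ).smul gy).weaken (by linarith) (by linarith)))
  have e1 : Good (fun w => dot3 (ut Qh Qv μ w) (ψ w) + dot3 (u w) (ψt w)) (d - 1) (d - 1) :=
    (((gut Qh Qv μ).dot h0.good).weaken (by linarith) (by linarith)).add
        ((gu.dot ht.good).weaken (by linarith) (by linarith))
  have e2 : Good (fun w => dot3 ((cross3 (y w) (v w) + cross3 (u w) (xy w))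
      + (f w • xy w + phy Qh Qv w • v w)) (ψ w)
      + dot3 (cross3 (u w) (v w) + f w • v w) (ψη w)) (d - 1) (d - 1) :=
    ((gAη.dot h0.good).weaken (by linarith) (by linarith)).add
      ((gA.dot hη.good).weaken (by linarith) (by linarith))
  have e3 : Good (fun w => dot3 ((cross3 (v w) (y w) + cross3 (u w) (xy w))
      - (f w • xy w + phx Qh Qv w • y w)) (ψ w)
      + dot3 (cross3 (u w) (y w) - f w • y w) (ψξ w)) (d - 1) (d - 1) :=
    ((gBξ.dot h0.good).weaken (by linarith) (by linarith)).add
      ((gB.dot hξ.good).weaken (by linarith) (by linarith))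
  have i1 := e1.integrable hd hK (fun w hw => by simp [h0.2.2 w hw, ht.2.2 w hw, dot3_zero])
  have i2 := e2.integrable hd hK (fun w hw => by simp [h0.2.2 w hw, hη.2.2 w hw, dot3_zero])
  have i3 := e3.integrable hd hK (fun w hw => by simp [h0.2.2 w hw, hξ.2.2 w hw, dot3_zero])
  have z1 := zero_t (fun w => dot3 (u w) (ψ w)) _ i1 (R := R)
    (fun w hw => by simp [h0.2.2 w (hR w hw), dot3_zero])
    (fun t ξ η => hasDerivAt_dot (gl_dt Qh Qv (fun Q => Q.hUt μ t ξ η)) (dt t ξ η))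
  have z2 := zero_η (fun w => dot3 (cross3 (u w) (v w) + f w • v w) (ψ w)) _ i2 (R := R)
    (fun w hw => by simp [h0.2.2 w (hR w hw), dot3_zero])
    (fun t ξ hx => by
      have hz : (t, ξ, (0:ℝ)) ∉ offS := fun h => h.2 rfl
      refine ⟨Good.cont_η ((gA.dot h0.good).congr_fun' (fun _ _ => rfl) (add_zero _) (add_zero _)) hd hx ?_, fun η hy => ?_⟩
      · have : v (t, ξ, 0) = 0 := gl_cross _ _ _ _ hz
        simp [this, cross3_zero, zero_dot3]
      · have du : HasDerivAt (fun η => u (t, ξ, η)) (y (t, ξ, η)) η :=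
          gl_dη Qh Qv hx hy (fun Q => Q.hUη μ t hy)
        have dv : HasDerivAt (fun η => v (t, ξ, η)) (xy (t, ξ, η)) η :=
          gl_dη Qh Qv hx hy (fun Q => Q.hUξη μ t hy)
        have df : HasDerivAt (fun η => f (t, ξ, η)) (phy Qh Qv (t, ξ, η)) η :=
          gl_dη Qh Qv hx hy (fun Q => Q.hΦη hy)
        exact hasDerivAt_dot ((hasDerivAt_cross du dv).fun_add (df.fun_smul dv)) (dη t ξ η))
  have z3 := zero_ξ (fun w => dot3 (cross3 (u w) (y w) - f w • y w) (ψ w)) _ i3 (R := R)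
    (fun w hw => by simp [h0.2.2 w (hR w hw), dot3_zero])
    (fun t η hy => by
      have hz : (t, (0:ℝ), η) ∉ offS := fun h => h.1 rfl
      refine ⟨Good.cont_ξ ((gB.dot h0.good).congr_fun' (fun _ _ => rfl) (add_zero _) (add_zero _)) hd hy ?_, fun ξ hx => ?_⟩
      · have : y (t, 0, η) = 0 := gl_cross _ _ _ _ hz
        simp [this, cross3_zero, zero_dot3]
      · have du : HasDerivAt (fun ξ => u (t, ξ, η)) (v (t, ξ, η)) ξ :=
          gl_dξ Qh Qv hx hy (fun Q => Q.hUξ μ t hx)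
        have dv : HasDerivAt (fun ξ => y (t, ξ, η)) (xy (t, ξ, η)) ξ :=
          gl_dξ Qh Qv hx hy (fun Q => Q.hUηξ μ t hx)
        have df : HasDerivAt (fun ξ => f (t, ξ, η)) (phx Qh Qv (t, ξ, η)) ξ :=
          gl_dξ Qh Qv hx hy (fun Q => Q.hΦξ hx)
        exact hasDerivAt_dot ((hasDerivAt_cross du dv).fun_sub (df.fun_smul dv)) (dξ t ξ η))
  have tot := integral_sub (i1.sub (i2.const_mul 2)) (i3.const_mul 2)
  simp only [Pi.sub_apply] at tot
  rw [integral_sub i1 (i2.const_mul 2), integral_const_mul, integral_const_mul, z1, z2, z3] at tot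
  simp only [mul_zero, sub_zero] at tot
  rw [← tot]
  refine integral_congr_ae ?_
  filter_upwards [ae_offS] with w hw
  have P := pde1_gl hh hv hw
  rw [← hu, ← hvd, ← hyd, ← hxyd] at P
  rw [P]
  simp only [dot3, cross3, Pi.add_apply, Pi.sub_apply, Pi.smul_apply, smul_eq_mul]
  simp
  ring

theorem weak2 (hκ : 0 < κ)
    {ρ ρξ ρη ρ12 : ℝ × ℝ × ℝ → ℝ} {K : Set (ℝ × ℝ × ℝ)}
    (h0 : Tst ρ K) (hξ : Tst ρξ K) (hη : Tst ρη K) (h12 : Tst ρ12 K)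
    (dη : ∀ t ξ η, HasDerivAt (fun η => ρ (t, ξ, η)) (ρη (t, ξ, η)) η)
    (d12 : ∀ t ξ η, HasDerivAt (fun η => ρξ (t, ξ, η)) (ρ12 (t, ξ, η)) η)
    (d21 : ∀ t ξ η, HasDerivAt (fun ξ => ρη (t, ξ, η)) (ρ12 (t, ξ, η)) ξ)
    (dξ : ∀ t ξ η, HasDerivAt (fun ξ => ρ (t, ξ, η)) (ρξ (t, ξ, η)) ξ) :
    ∫ w, (4 * ρ12 w * ph Qh Qv w + 4 * ρ w * fxy Qh Qv w) = 0 := by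
  obtain ⟨d, hd, hd4, hd1⟩ : ∃ d : ℝ, 0 < d ∧ d ≤ κ / 4 ∧ d ≤ 1 / 2 :=
    ⟨min (κ / 4) (1 / 2), lt_min (by positivity) (by norm_num), min_le_left _ _, min_le_right _ _⟩
  obtain ⟨R, hR⟩ := exists_R h0.2.1
  have hK := h0.2.1
  have lx := Good.log_ξ hd
  have ly := Good.log_η hd
  set f := ff Qh Qv with hf
  set g := fx Qh Qv with hg
  set h := fxy Qh Qv with hh
  have gf : Good f _ _ := gff Qh Qv
  have gg : Good g _ _ := gfx Qh Qv
  have gh : Good h _ _ := gfxy Qh Qv hκ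
  have e1 : Good (fun w => 2 * (c + b) * (ρ12 w * Real.log w.2.1) + 4 * (ρη w * g w + ρ w * h w)) (d - 1) (d - 1) :=
    (((h12.good.mul lx).const_mul (2 * (c + b))).weaken (by linarith) (by linarith)).add
      ((((hη.good.mul gg).weaken (by linarith) (by linarith)).add
        ((h0.good.mul gh).weaken (by linarith) (by linarith))).const_mul 4)
  have e2 : Good (fun w => 2 * (b - c) * (ρ12 w * Real.log w.2.2) - 4 * (ρ12 w * f w + ρη w * g w)) (d - 1) (d - 1) :=
    (((h12.good.mul ly).const_mul (2 * (b - c))).weaken (by linarith) (by linarith)).sub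
      ((((h12.good.mul gf).weaken (by linarith) (by linarith)).add
        ((hη.good.mul gg).weaken (by linarith) (by linarith))).const_mul 4)
  have i1 := e1.integrable hd hK (fun w hw => by simp [h0.2.2 w hw, hη.2.2 w hw, h12.2.2 w hw])
  have i2 := e2.integrable hd hK (fun w hw => by simp [hη.2.2 w hw, h12.2.2 w hw])
  have z1 := zero_η (fun w => 2 * (c + b) * (ρξ w * Real.log w.2.1) + 4 * (ρ w * g w)) _ i1 (R := R)
    (fun w hw => by simp [h0.2.2 w (hR w hw), hξ.2.2 w (hR w hw)])
    (fun t ξ hx => by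
      have hz : (t, ξ, (0:ℝ)) ∉ offS := fun h => h.2 rfl
      constructor
      · have c1 : Continuous (fun η => g (t, ξ, η)) :=
          gg.cont_η (by positivity) hx (gl_cross _ _ _ _ hz)
        have c2 : Continuous (fun η => ρ (t, ξ, η)) := h0.1.comp (by fun_prop)
        have c3 : Continuous (fun η => ρξ (t, ξ, η)) := hξ.1.comp (by fun_prop)
        exact (continuous_const.mul (c3.mul (continuous_const (y := Real.log ξ)))).add
          (continuous_const.mul (c2.mul c1))
      · intro η hy
        have dg : HasDerivAt (fun η => g (t, ξ, η)) (h (t, ξ, η)) η :=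
          gl_dη Qh Qv hx hy (fun Q => Q.hFξη hy)
        exact ((((d12 t ξ η).mul_const (Real.log ξ)).const_mul (2 * (c + b))).fun_add
          (((dη t ξ η).fun_mul dg).const_mul 4)))
  have z2 := zero_ξ (fun w => 2 * (b - c) * (ρη w * Real.log w.2.2) - 4 * (ρη w * f w)) _ i2 (R := R)
    (fun w hw => by simp [hη.2.2 w (hR w hw)])
    (fun t η hy => by
      have hz : (t, (0:ℝ), η) ∉ offS := fun h => h.1 rfl
      constructor
      · have c1 : Continuous (fun ξ => f (t, ξ, η)) :=
          gf.cont_ξ (by positivity) hy (gl_cross _ _ _ _ hz)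
        have c2 : Continuous (fun ξ => ρη (t, ξ, η)) := hη.1.comp (by fun_prop)
        exact (continuous_const.mul (c2.mul (continuous_const (y := Real.log η)))).sub
          (continuous_const.mul (c2.mul c1))
      · intro ξ hx
        have dg : HasDerivAt (fun ξ => f (t, ξ, η)) (g (t, ξ, η)) ξ :=
          gl_dξ Qh Qv hx hy (fun Q => Q.hFξ hx)
        exact ((((d21 t ξ η).mul_const (Real.log η)).const_mul (2 * (b - c))).fun_sub
          (((d21 t ξ η).fun_mul dg).const_mul 4)))
  have tot := integral_add i1 i2
  rw [z1, z2, add_zero] at tot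
  rw [← tot]
  refine integral_congr_ae ?_
  filter_upwards [ae_offS] with w hw
  rw [ph_gl hw, ← hf]
  ring

end Prof

/-- The passage to null coordinates. -/
noncomputable def Lam : (ℝ × ℝ × ℝ) ≃L[ℝ] (ℝ × ℝ × ℝ) :=
  LinearEquiv.toContinuousLinearEquiv
    { toFun := fun p => (p.1, p.2.1 + p.2.2, p.2.1 - p.2.2)
      invFun := fun w => (w.1, (w.2.1 + w.2.2) / 2, (w.2.1 - w.2.2) / 2)
      map_add' := fun p q => by ext <;> simp <;> ring
      map_smul' := fun a q => by ext <;> simp <;> ring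
      left_inv := fun p => by ext <;> simp
      right_inv := fun p => by ext <;> simp <;> ring }

theorem Lam_apply (p : ℝ × ℝ × ℝ) : Lam p = (p.1, p.2.1 + p.2.2, p.2.1 - p.2.2) := rfl

theorem map_Lam : ∃ c : ENNReal, c ≠ ⊤ ∧
    Measure.map Lam (volume : Measure (ℝ × ℝ × ℝ)) = c • (volume : Measure (ℝ × ℝ × ℝ)) := by
  have i2 : (volume : Measure (ℝ × ℝ)).IsAddHaarMeasure :=
    inferInstanceAs (((volume : Measure ℝ).prod (volume : Measure ℝ)).IsAddHaarMeasure)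
  have i3 : (volume : Measure (ℝ × ℝ × ℝ)).IsAddHaarMeasure :=
    inferInstanceAs (((volume : Measure ℝ).prod (volume : Measure (ℝ × ℝ))).IsAddHaarMeasure)
  have h := Measure.map_linearMap_addHaar_eq_smul_addHaar (volume : Measure (ℝ × ℝ × ℝ))
    (f := (Lam.toLinearEquiv : (ℝ × ℝ × ℝ) →ₗ[ℝ] (ℝ × ℝ × ℝ)))
    (LinearEquiv.isUnit_det' Lam.toLinearEquiv).ne_zero
  exact ⟨_, ENNReal.ofReal_ne_top, h⟩

theorem integral_Lam {H : ℝ × ℝ × ℝ → ℝ} (h : ∫ w, H w = 0) : ∫ p, H (Lam p) = 0 := by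
  obtain ⟨c, hc, hm⟩ := map_Lam
  have := Lam.toHomeomorph.measurableEmbedding.integral_map (μ := volume) H
  change ∫ y, H y ∂(Measure.map Lam volume) = ∫ x, H (Lam x) at this
  rw [← this, hm, integral_smul_measure, h, smul_zero]

theorem ae_Lam {P : ℝ × ℝ × ℝ → Prop} (h : ∀ᵐ w, P w) : ∀ᵐ p, P (Lam p) := by
  obtain ⟨c, hc, hm⟩ := map_Lam
  refine ae_of_ae_map (Lam.continuous.aemeasurable) ?_
  rw [hm]
  exact Measure.ae_smul_measure h c

theorem locInt_Lam {E : Type*} [NormedAddCommGroup E] {H : ℝ × ℝ × ℝ → E} (h : LocallyIntegrable H) :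
    LocallyIntegrable (fun p => H (Lam p)) := by
  obtain ⟨c, hc, hm⟩ := map_Lam
  have := (MeasureTheory.locallyIntegrable_map_homeomorph Lam.toHomeomorph (f := H) (μ := volume)).1
  refine this ?_
  change LocallyIntegrable H (Measure.map Lam volume)
  rw [hm]
  intro x
  obtain ⟨s, hs, hi⟩ := h x
  refine ⟨s, hs, ?_⟩
  unfold IntegrableOn at *
  rw [Measure.restrict_smul]
  exact hi.smul_measure hc

section box
variable {E : Type*} [NormedAddCommGroup E] [NormedSpace ℝ E]

theorem fd_comp (f : ℝ × ℝ × ℝ → E) (p v : ℝ × ℝ × ℝ) :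
    fderiv ℝ (fun q => f (Lam q)) p v = fderiv ℝ f (Lam p) (Lam v) := by
  have := Lam.comp_right_fderiv (f := f) (x := p)
  change fderiv ℝ (f ∘ Lam) p v = _
  rw [this]; rfl

theorem line_ξ {f : ℝ × ℝ × ℝ → E} {f' : E} {t ξ η : ℝ} (hf : DifferentiableAt ℝ f (t, ξ, η))
    (h : HasDerivAt (fun ξ => f (t, ξ, η)) f' ξ) : fderiv ℝ f (t, ξ, η) (0, 1, 0) = f' := by
  have h1 : HasDerivAt (fun ξ : ℝ => ((t, ξ, η) : ℝ × ℝ × ℝ)) (0, 1, 0) ξ :=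
    (hasDerivAt_const ξ t).prodMk ((hasDerivAt_id ξ).prodMk (hasDerivAt_const ξ η))
  exact (hf.hasFDerivAt.comp_hasDerivAt ξ h1).unique h

theorem line_η {f : ℝ × ℝ × ℝ → E} {f' : E} {t ξ η : ℝ} (hf : DifferentiableAt ℝ f (t, ξ, η))
    (h : HasDerivAt (fun η => f (t, ξ, η)) f' η) : fderiv ℝ f (t, ξ, η) (0, 0, 1) = f' := by
  have h1 : HasDerivAt (fun η : ℝ => ((t, ξ, η) : ℝ × ℝ × ℝ)) (0, 0, 1) η :=
    (hasDerivAt_const η t).prodMk ((hasDerivAt_const η ξ).prodMk (hasDerivAt_id η))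
  exact (hf.hasFDerivAt.comp_hasDerivAt η h1).unique h

theorem line_t {f : ℝ × ℝ × ℝ → E} {f' : E} {t ξ η : ℝ} (hf : DifferentiableAt ℝ f (t, ξ, η))
    (h : HasDerivAt (fun t => f (t, ξ, η)) f' t) : fderiv ℝ f (t, ξ, η) (1, 0, 0) = f' := by
  have h1 : HasDerivAt (fun t : ℝ => ((t, ξ, η) : ℝ × ℝ × ℝ)) (1, 0, 0) t :=
    (hasDerivAt_id t).prodMk ((hasDerivAt_const t ξ).prodMk (hasDerivAt_const t η))
  exact (hf.hasFDerivAt.comp_hasDerivAt t h1).unique h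

theorem line_ξ' {f : ℝ × ℝ × ℝ → E} {t ξ η : ℝ} (hf : DifferentiableAt ℝ f (t, ξ, η)) :
    HasDerivAt (fun ξ => f (t, ξ, η)) (fderiv ℝ f (t, ξ, η) (0, 1, 0)) ξ := by
  have h1 : HasDerivAt (fun ξ : ℝ => ((t, ξ, η) : ℝ × ℝ × ℝ)) (0, 1, 0) ξ :=
    (hasDerivAt_const ξ t).prodMk ((hasDerivAt_id ξ).prodMk (hasDerivAt_const ξ η))
  exact hf.hasFDerivAt.comp_hasDerivAt ξ h1

theorem line_η' {f : ℝ × ℝ × ℝ → E} {t ξ η : ℝ} (hf : DifferentiableAt ℝ f (t, ξ, η)) :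
    HasDerivAt (fun η => f (t, ξ, η)) (fderiv ℝ f (t, ξ, η) (0, 0, 1)) η := by
  have h1 : HasDerivAt (fun η : ℝ => ((t, ξ, η) : ℝ × ℝ × ℝ)) (0, 0, 1) η :=
    (hasDerivAt_const η t).prodMk ((hasDerivAt_const η ξ).prodMk (hasDerivAt_id η))
  exact hf.hasFDerivAt.comp_hasDerivAt η h1

theorem line_t' {f : ℝ × ℝ × ℝ → E} {t ξ η : ℝ} (hf : DifferentiableAt ℝ f (t, ξ, η)) :
    HasDerivAt (fun t => f (t, ξ, η)) (fderiv ℝ f (t, ξ, η) (1, 0, 0)) t := by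
  have h1 : HasDerivAt (fun t : ℝ => ((t, ξ, η) : ℝ × ℝ × ℝ)) (1, 0, 0) t :=
    (hasDerivAt_id t).prodMk ((hasDerivAt_const t ξ).prodMk (hasDerivAt_const t η))
  exact hf.hasFDerivAt.comp_hasDerivAt t h1

theorem Lam_ex : Lam ex = (0, 1, 0) + (0, 0, 1) := by simp [Lam_apply, ex]
theorem Lam_ey : Lam ey = (0, 1, 0) - (0, 0, 1) := by simp [Lam_apply, ey]
theorem Lam_et : Lam et = (1, 0, 0) := by simp [Lam_apply, et]

theorem smooth_dir {f : ℝ × ℝ × ℝ → E} {w : ℝ × ℝ × ℝ} (hf : ContDiffAt ℝ (⊤ : ℕ∞) f w) (v : ℝ × ℝ × ℝ) :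
    ContDiffAt ℝ (⊤ : ℕ∞) (fun w => fderiv ℝ f w v) w :=
  (hf.fderiv_right (m := (⊤ : ℕ∞)) (by exact_mod_cast le_rfl)).clm_apply contDiffAt_const

theorem smooth_diff {f : ℝ × ℝ × ℝ → E} {w : ℝ × ℝ × ℝ} (hf : ContDiffAt ℝ (⊤ : ℕ∞) f w) :
    DifferentiableAt ℝ f w := hf.differentiableAt (by simp)

theorem grad_box {f f1 f2 f12 : ℝ × ℝ × ℝ → E} {O : Set (ℝ × ℝ × ℝ)} (hO : IsOpen O)
    (hf : ∀ w ∈ O, ContDiffAt ℝ (⊤ : ℕ∞) f w)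
    (d1 : ∀ t ξ η, (t, ξ, η) ∈ O → HasDerivAt (fun ξ => f (t, ξ, η)) (f1 (t, ξ, η)) ξ)
    (d2 : ∀ t ξ η, (t, ξ, η) ∈ O → HasDerivAt (fun η => f (t, ξ, η)) (f2 (t, ξ, η)) η)
    (d12 : ∀ t ξ η, (t, ξ, η) ∈ O → HasDerivAt (fun η => f1 (t, ξ, η)) (f12 (t, ξ, η)) η)
    (d21 : ∀ t ξ η, (t, ξ, η) ∈ O → HasDerivAt (fun ξ => f2 (t, ξ, η)) (f12 (t, ξ, η)) ξ)
    {p : ℝ × ℝ × ℝ} (hp : Lam p ∈ O) :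
    fderiv ℝ (fun q => f (Lam q)) p ex = f1 (Lam p) + f2 (Lam p) ∧
    fderiv ℝ (fun q => f (Lam q)) p ey = f1 (Lam p) - f2 (Lam p) ∧
    fderiv ℝ (fun r => fderiv ℝ (fun q => f (Lam q)) r ex) p ex
      - fderiv ℝ (fun r => fderiv ℝ (fun q => f (Lam q)) r ey) p ey = (4:ℝ) • f12 (Lam p) := by
  have e1 : ∀ w ∈ O, fderiv ℝ f w (0, 1, 0) = f1 w := fun w hw =>
    line_ξ (smooth_diff (hf w hw)) (d1 _ _ _ hw)
  have e2 : ∀ w ∈ O, fderiv ℝ f w (0, 0, 1) = f2 w := fun w hw =>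
    line_η (smooth_diff (hf w hw)) (d2 _ _ _ hw)
  have ev1 : (fun w => fderiv ℝ f w (0, 1, 0)) =ᶠ[nhds (Lam p)] f1 := by
    filter_upwards [hO.mem_nhds hp] with w hw using e1 w hw
  have ev2 : (fun w => fderiv ℝ f w (0, 0, 1)) =ᶠ[nhds (Lam p)] f2 := by
    filter_upwards [hO.mem_nhds hp] with w hw using e2 w hw
  have D1 : DifferentiableAt ℝ f1 (Lam p) :=
    (smooth_diff (smooth_dir (hf _ hp) (0, 1, 0))).congr_of_eventuallyEq ev1.symm
  have D2 : DifferentiableAt ℝ f2 (Lam p) :=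
    (smooth_diff (smooth_dir (hf _ hp) (0, 0, 1))).congr_of_eventuallyEq ev2.symm
  have E12 : fderiv ℝ f1 (Lam p) (0, 0, 1) = f12 (Lam p) := line_η D1 (d12 _ _ _ hp)
  have E21 : fderiv ℝ f2 (Lam p) (0, 1, 0) = f12 (Lam p) := line_ξ D2 (d21 _ _ _ hp)
  have gx : ∀ r, Lam r ∈ O → fderiv ℝ (fun q => f (Lam q)) r ex = f1 (Lam r) + f2 (Lam r) := by
    intro r hr
    rw [fd_comp, Lam_ex, map_add, e1 _ hr, e2 _ hr]
  have gy : ∀ r, Lam r ∈ O → fderiv ℝ (fun q => f (Lam q)) r ey = f1 (Lam r) - f2 (Lam r) := by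
    intro r hr
    rw [fd_comp, Lam_ey, map_sub, e1 _ hr, e2 _ hr]
  have hev : ∀ᶠ r in nhds p, Lam r ∈ O := Lam.continuous.continuousAt.eventually (hO.mem_nhds hp)
  have X : fderiv ℝ (fun r => fderiv ℝ (fun q => f (Lam q)) r ex) p
      = fderiv ℝ (fun r => (fun w => f1 w + f2 w) (Lam r)) p :=
    Filter.EventuallyEq.fderiv_eq (by filter_upwards [hev] with r hr using gx r hr)
  have Y : fderiv ℝ (fun r => fderiv ℝ (fun q => f (Lam q)) r ey) p
      = fderiv ℝ (fun r => (fun w => f1 w - f2 w) (Lam r)) p :=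
    Filter.EventuallyEq.fderiv_eq (by filter_upwards [hev] with r hr using gy r hr)
  refine ⟨gx p hp, gy p hp, ?_⟩
  rw [X, Y, fd_comp (fun w => f1 w + f2 w), fd_comp (fun w => f1 w - f2 w), fderiv_fun_add D1 D2, fderiv_fun_sub D1 D2, Lam_ex, Lam_ey]
  simp only [ContinuousLinearMap.add_apply, ContinuousLinearMap.sub_apply, map_add, map_sub]
  rw [E12, E21]
  module

end box

namespace Prof
variable {k c b κ : ℝ} (Qh Qv : Prof k c b κ) (μ : ℝ)

theorem hFηξ (Q : Prof k c b κ) {ξ η : ℝ} (h : ξ ≠ 0) : HasDerivAt (fun ξ => Q.Fη ξ η) (Q.Fξη ξ η) ξ := by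
  refine ((((Q.along_cos (ta_ξ (η := η) h)).const_sub 1).const_mul (2 * k)).const_mul
    (1 / (2 * η))).congr_deriv ?_
  simp only [Fξη]; ring
theorem hΦηξ (Q : Prof k c b κ) {ξ η : ℝ} (h : ξ ≠ 0) : HasDerivAt (fun ξ => Q.Φη ξ η) (-Q.Fξη ξ η) ξ := by
  exact (Q.hFηξ h).const_sub _

theorem sm_ta {w : ℝ × ℝ × ℝ} (hw : w ∈ offS) :
    ContDiffAt ℝ (⊤ : ℕ∞) (fun w : ℝ × ℝ × ℝ => ta w.2.1 w.2.2) w := by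
  have h1 : ContDiffAt ℝ (⊤ : ℕ∞) (fun w : ℝ × ℝ × ℝ => Real.log w.2.1) w :=
    ContDiffAt.log (by fun_prop) hw.1
  have h2 : ContDiffAt ℝ (⊤ : ℕ∞) (fun w : ℝ × ℝ × ℝ => Real.log w.2.2) w :=
    ContDiffAt.log (by fun_prop) hw.2
  exact (h1.add h2).div_const 2

theorem sm_al {w : ℝ × ℝ × ℝ} (hw : w ∈ offS) :
    ContDiffAt ℝ (⊤ : ℕ∞) (fun w : ℝ × ℝ × ℝ => al w.2.1 w.2.2) w := by
  have h1 : ContDiffAt ℝ (⊤ : ℕ∞) (fun w : ℝ × ℝ × ℝ => Real.log w.2.1) w :=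
    ContDiffAt.log (by fun_prop) hw.1
  have h2 : ContDiffAt ℝ (⊤ : ℕ∞) (fun w : ℝ × ℝ × ℝ => Real.log w.2.2) w :=
    ContDiffAt.log (by fun_prop) hw.2
  exact (h1.sub h2).div_const 2

theorem smU (Q : Prof k c b κ) {w : ℝ × ℝ × ℝ} (hw : w ∈ offS) :
    ContDiffAt ℝ (⊤ : ℕ∞) (fun w : ℝ × ℝ × ℝ => Q.U μ w.1 w.2.1 w.2.2) w := by
  have hS : ContDiffAt ℝ (⊤ : ℕ∞) (fun w : ℝ × ℝ × ℝ => Q.S (ta w.2.1 w.2.2)) w :=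
    Q.smS.contDiffAt.comp w (sm_ta hw)
  have hB : ContDiffAt ℝ (⊤ : ℕ∞) (fun w : ℝ × ℝ × ℝ => Q.B (ta w.2.1 w.2.2)) w :=
    Q.smB.contDiffAt.comp w (sm_ta hw)
  have hth : ContDiffAt ℝ (⊤ : ℕ∞) (fun w : ℝ × ℝ × ℝ => Q.th μ w.1 w.2.1 w.2.2) w :=
    (hB.add (contDiffAt_const.mul (sm_al hw))).add (contDiffAt_const.mul contDiffAt_fst)
  have hc := hS.cos
  have hs := hS.sin
  rw [contDiffAt_pi]
  intro i
  fin_cases i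
  · simpa [U, fr] using hc
  · simpa [U, fr] using hs.mul hth.cos
  · simpa [U, fr] using hs.mul hth.sin

theorem smΦ (Q : Prof k c b κ) {w : ℝ × ℝ × ℝ} (hw : w ∈ offS) :
    ContDiffAt ℝ (⊤ : ℕ∞) (fun w : ℝ × ℝ × ℝ => Q.Φ w.2.1 w.2.2) w := by
  have hF : ContDiffAt ℝ (⊤ : ℕ∞) (fun w : ℝ × ℝ × ℝ => Q.F (ta w.2.1 w.2.2)) w :=
    Q.smF.contDiffAt.comp w (sm_ta hw)
  exact ((contDiffAt_const.mul (sm_al hw)).add (contDiffAt_const.mul (sm_ta hw))).sub hF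

theorem sm_uu {w : ℝ × ℝ × ℝ} (hw : w ∈ offS) : ContDiffAt ℝ (⊤ : ℕ∞) (uu Qh Qv μ) w :=
  (smU μ _ hw).congr_of_eventuallyEq (gl_ev Qh Qv _ _ hw)
theorem sm_ph {w : ℝ × ℝ × ℝ} (hw : w ∈ offS) : ContDiffAt ℝ (⊤ : ℕ∞) (ph Qh Qv) w :=
  (smΦ _ hw).congr_of_eventuallyEq (gl_ev Qh Qv _ _ hw)

theorem cone_pos (x y : ℝ) : |x| > |y| ↔ 0 < (x + y) * (x - y) := by
  rw [gt_iff_lt, ← sq_lt_sq, ← sub_pos]; ring_nf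
theorem cone_neg (x y : ℝ) : |x| < |y| ↔ (x + y) * (x - y) < 0 := by
  rw [← sq_lt_sq, ← sub_neg]; ring_nf

theorem log_aOf {x y : ℝ} (h : (x + y) * (x - y) ≠ 0) : Real.log (aOf x y) = ta (x + y) (x - y) := by
  unfold aOf ta
  rw [Real.log_sqrt (abs_nonneg _), Real.log_abs, ← Real.log_mul (left_ne_zero_of_mul h) (right_ne_zero_of_mul h)]
  ring_nf
theorem aOf_pos {x y : ℝ} (h : (x + y) * (x - y) ≠ 0) : 0 < aOf x y := by
  unfold aOf
  apply Real.sqrt_pos.2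
  apply abs_pos.2
  convert h using 1; ring
theorem alphaOf_eq {x y : ℝ} (h : (x + y) * (x - y) ≠ 0) : alphaOf x y = al (x + y) (x - y) := by
  unfold alphaOf al
  rw [Real.log_div (abs_ne_zero.2 (left_ne_zero_of_mul h)) (abs_ne_zero.2 (right_ne_zero_of_mul h)),
    Real.log_abs, Real.log_abs]
  ring

theorem uDef_eq : uDef μ k (fun a => Qh.S (Real.log a)) (fun a => Qh.B (Real.log a))
    (fun a => Qv.S (Real.log a)) (fun a => Qv.B (Real.log a)) = fun p => uu Qh Qv μ (Lam p) := by
  funext p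
  obtain ⟨t, x, y⟩ := p
  simp only [uDef]
  rw [Lam_apply]
  simp only [uu]
  unfold gl
  simp only []
  rcases lt_trichotomy 0 ((x + y) * (x - y)) with h | h | h
  · rw [if_pos ((cone_pos x y).2 h), if_neg h.ne', log_aOf h.ne', alphaOf_eq h.ne']
    simp [sel, h, U, fr, th]
  · rw [if_neg (by rw [cone_pos, ← h]; exact lt_irrefl _), if_neg (by rw [cone_neg, ← h]; exact lt_irrefl _),
      if_pos h.symm]
    rfl
  · rw [if_neg (by rw [cone_pos]; exact h.not_gt), if_pos ((cone_neg x y).2 h), if_neg h.ne,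
      log_aOf h.ne, alphaOf_eq h.ne]
    simp [sel, h.not_gt, U, fr, th]

theorem φDef_eq (hκ : 0 < κ) : φDef k c b (fun a => Qh.S (Real.log a)) (fun a => Qv.S (Real.log a))
    = fun p => ph Qh Qv (Lam p) := by
  funext p
  obtain ⟨t, x, y⟩ := p
  simp only [φDef]
  rw [Lam_apply]
  simp only [ph]
  unfold gl
  simp only []
  rcases lt_trichotomy 0 ((x + y) * (x - y)) with h | h | h
  · rw [if_pos ((cone_pos x y).2 h), if_neg h.ne', F_eq hκ Qh (aOf_pos h.ne'), log_aOf h.ne', alphaOf_eq h.ne']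
    simp [sel, h, Φ]
  · rw [if_neg (by rw [cone_pos, ← h]; exact lt_irrefl _), if_neg (by rw [cone_neg, ← h]; exact lt_irrefl _),
      if_pos h.symm]
  · rw [if_neg (by rw [cone_pos]; exact h.not_gt), if_pos ((cone_neg x y).2 h), if_neg h.ne,
      F_eq hκ Qv (aOf_pos h.ne), log_aOf h.ne, alphaOf_eq h.ne]
    simp [sel, h.not_gt, Φ]

theorem u_grad {p : ℝ × ℝ × ℝ} (hp : Lam p ∈ offS) :
    pdV ex (fun p => uu Qh Qv μ (Lam p)) p = ux Qh Qv μ (Lam p) + uy Qh Qv μ (Lam p) ∧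
    pdV ey (fun p => uu Qh Qv μ (Lam p)) p = ux Qh Qv μ (Lam p) - uy Qh Qv μ (Lam p) ∧
    pdV ex (pdV ex (fun p => uu Qh Qv μ (Lam p))) p - pdV ey (pdV ey (fun p => uu Qh Qv μ (Lam p))) p
      = (4:ℝ) • uxy Qh Qv μ (Lam p) :=
  grad_box (f := uu Qh Qv μ) isOpen_offS (fun w hw => sm_uu Qh Qv μ hw)
    (fun t ξ η h => gl_dξ Qh Qv h.1 h.2 fun Q => Q.hUξ μ t h.1)
    (fun t ξ η h => gl_dη Qh Qv h.1 h.2 fun Q => Q.hUη μ t h.2)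
    (fun t ξ η h => gl_dη Qh Qv h.1 h.2 fun Q => Q.hUξη μ t h.2)
    (fun t ξ η h => gl_dξ Qh Qv h.1 h.2 fun Q => Q.hUηξ μ t h.1) hp

theorem u_t {p : ℝ × ℝ × ℝ} (hp : Lam p ∈ offS) :
    pdV et (fun p => uu Qh Qv μ (Lam p)) p = ut Qh Qv μ (Lam p) := by
  unfold pdV
  rw [fd_comp, Lam_et]
  exact line_t (smooth_diff (sm_uu Qh Qv μ hp)) (gl_dt Qh Qv fun Q => Q.hUt μ _ _ _)

theorem ph_grad {p : ℝ × ℝ × ℝ} (hp : Lam p ∈ offS) :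
    pdR ex (fun p => ph Qh Qv (Lam p)) p = phx Qh Qv (Lam p) + phy Qh Qv (Lam p) ∧
    pdR ey (fun p => ph Qh Qv (Lam p)) p = phx Qh Qv (Lam p) - phy Qh Qv (Lam p) ∧
    pdR ex (pdR ex (fun p => ph Qh Qv (Lam p))) p - pdR ey (pdR ey (fun p => ph Qh Qv (Lam p))) p
      = 4 * -fxy Qh Qv (Lam p) := by
  have := grad_box (f := ph Qh Qv) (f1 := phx Qh Qv) (f2 := phy Qh Qv)
    (f12 := gl Qh Qv (fun Q _ ξ η => -Q.Fξη ξ η) 0) isOpen_offS (fun w hw => sm_ph Qh Qv hw)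
    (fun t ξ η h => gl_dξ Qh Qv h.1 h.2 fun Q => Q.hΦξ h.1)
    (fun t ξ η h => gl_dη Qh Qv h.1 h.2 fun Q => Q.hΦη h.2)
    (fun t ξ η h => gl_dη Qh Qv h.1 h.2 fun Q => Q.hΦξη h.2)
    (fun t ξ η h => gl_dξ Qh Qv h.1 h.2 fun Q => Q.hΦηξ h.1) hp
  refine ⟨this.1, this.2.1, this.2.2.trans ?_⟩
  rw [gl_eq _ _ _ _ hp, fxy, gl_eq _ _ _ _ hp, smul_eq_mul]

theorem top_eq (Qh Qv : Prof k c b κ) (μ : ℝ) {p : ℝ × ℝ × ℝ} (hp : Lam p ∈ offS) :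
    dot3 (uu Qh Qv μ (Lam p)) (cross3 (pdV ex (fun p => uu Qh Qv μ (Lam p)) p)
      (pdV ey (fun p => uu Qh Qv μ (Lam p)) p)) = 2 * fxy Qh Qv (Lam p) := by
  obtain ⟨h1, h2, -⟩ := u_grad Qh Qv μ hp
  have h3 := pde2_gl (Qh := Qh) (Qv := Qv) (μ := μ) hp
  rw [h1, h2, ← neg_neg (fxy Qh Qv (Lam p)), h3]
  simp only [dot3, cross3, Pi.add_apply, Pi.sub_apply]
  simp
  ring

theorem pointwise1 (hh : Qh.ν = μ) (hv : Qv.ν = -μ) {p : ℝ × ℝ × ℝ} (hp : Lam p ∈ offS) :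
    pdV et (fun p => uu Qh Qv μ (Lam p)) p
      = cross3 (uu Qh Qv μ (Lam p)) (pdV ex (pdV ex (fun p => uu Qh Qv μ (Lam p))) p
          - pdV ey (pdV ey (fun p => uu Qh Qv μ (Lam p))) p)
        + pdR ex (fun p => ph Qh Qv (Lam p)) p • pdV ey (fun p => uu Qh Qv μ (Lam p)) p
        - pdR ey (fun p => ph Qh Qv (Lam p)) p • pdV ex (fun p => uu Qh Qv μ (Lam p)) p := by
  obtain ⟨h1, h2, h3⟩ := u_grad Qh Qv μ hp
  obtain ⟨h4, h5, -⟩ := ph_grad Qh Qv hp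
  rw [h3, h1, h2, h4, h5, u_t Qh Qv μ hp, pde1_gl hh hv hp]
  ext i
  fin_cases i <;> simp only [cross3, Pi.add_apply, Pi.sub_apply, Pi.smul_apply, smul_eq_mul] <;>
    simp only [Fin.isValue, Fin.zero_eta, Fin.mk_one, Fin.reduceFinMk, Matrix.cons_val] <;> ring

theorem pointwise2 {p : ℝ × ℝ × ℝ} (hp : Lam p ∈ offS) :
    pdR ex (pdR ex (fun p => ph Qh Qv (Lam p))) p - pdR ey (pdR ey (fun p => ph Qh Qv (Lam p))) p
      = -2 * dot3 (uu Qh Qv μ (Lam p)) (cross3 (pdV ex (fun p => uu Qh Qv μ (Lam p)) p)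
      (pdV ey (fun p => uu Qh Qv μ (Lam p)) p)) := by
  rw [top_eq Qh Qv μ hp, (ph_grad Qh Qv hp).2.2]; ring

theorem uu_dot (w : ℝ × ℝ × ℝ) : dot3 (uu Qh Qv μ w) (uu Qh Qv μ w) = 1 := by
  by_cases hw : w ∈ offS
  · rw [uu, gl_eq _ _ _ _ hw]
    simp only [U, dot_fr]
    linarith [Real.sin_sq_add_cos_sq ((sel Qh Qv w.2.1 w.2.2).S (ta w.2.1 w.2.2))]
  · rw [uu, gl_cross _ _ _ _ hw]; simp [dot3, e0]

theorem guu0 : Good (fun w => uu Qh Qv μ w - e0) (κ / 2) (κ / 2) := by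
  refine (gl_good Qh Qv (z := (0 : Fin 3 → ℝ)) (G := fun Q t ξ η => Q.U μ t ξ η - e0) (fun Q => Q.gU0 μ)).congr_fun' (fun w hw => ?_) rfl rfl
  rw [uu, gl_eq _ _ _ _ hw, gl_eq _ _ _ _ hw]

theorem uu_bound (hκ : 0 < κ) (M : ℝ) (hM : 0 < M) : ∃ C > 0, ∀ w : ℝ × ℝ × ℝ, |w.2.1| ≤ M → |w.2.2| ≤ M →
    ‖uu Qh Qv μ w - e0‖ ≤ C * |w.2.1 * w.2.2| ^ (κ / 2) := by
  obtain ⟨C, hC, h⟩ := (guu0 Qh Qv μ).2 M hM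
  refine ⟨C + 1, by positivity, fun w h1 h2 => ?_⟩
  by_cases hw : w ∈ offS
  · refine (h w hw h1 h2).trans ?_
    rw [abs_mul, Real.mul_rpow (abs_nonneg _) (abs_nonneg _)]
    gcongr; linarith
  · rw [uu, gl_cross _ _ _ _ hw]
    simp; positivity

theorem uu_cont (hκ : 0 < κ) : Continuous (uu Qh Qv μ) := by
  rw [continuous_iff_continuousAt]
  intro w
  by_cases hw : w ∈ offS
  · exact (sm_uu Qh Qv μ hw).continuousAt
  · have hz : w.2.1 * w.2.2 = 0 := by
      by_contra h; exact hw (mul_ne_zero_iff.1 h)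
    have hu : uu Qh Qv μ w = e0 := by rw [uu, gl_cross _ _ _ _ hw]
    obtain ⟨C, hC, h⟩ := uu_bound Qh Qv μ hκ (‖w‖ + 1) (by positivity)
    rw [ContinuousAt, hu, tendsto_iff_norm_sub_tendsto_zero]
    have hc : Continuous (fun w : ℝ × ℝ × ℝ => C * |w.2.1 * w.2.2| ^ (κ / 2)) :=
      continuous_const.mul ((by fun_prop : Continuous (fun w : ℝ × ℝ × ℝ => |w.2.1 * w.2.2|)).rpow_const
        (fun _ => Or.inr (by positivity)))
    have ht := hc.tendsto w
    rw [hz, abs_zero, Real.zero_rpow (by positivity), mul_zero] at ht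
    refine squeeze_zero' (Eventually.of_forall fun _ => norm_nonneg _) ?_ ht
    have hn : ∀ᶠ w' in nhds w, ‖w'‖ < ‖w‖ + 1 :=
      continuous_norm.continuousAt.eventually_lt_const (by simp)
    filter_upwards [hn] with w' hw'
    have a2 : ‖w'.2‖ ≤ ‖w'‖ := le_max_right _ _
    have a3 : |w'.2.1| ≤ ‖w'.2‖ := le_max_left _ _
    have a4 : |w'.2.2| ≤ ‖w'.2‖ := le_max_right _ _
    exact h w' (by linarith) (by linarith)

end Prof

namespace Prof
variable {k c b κ : ℝ} (Qh Qv : Prof k c b κ) (μ : ℝ)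

theorem tst_dir {E : Type*} [NormedAddCommGroup E] [NormedSpace ℝ E] {f : ℝ × ℝ × ℝ → E} {K : Set (ℝ × ℝ × ℝ)}
    (hf : ContDiff ℝ (⊤ : ℕ∞) f) (hK : IsCompact K) (h : tsupport f ⊆ K) (v : ℝ × ℝ × ℝ) :
    ContDiff ℝ (⊤ : ℕ∞) (fun w => fderiv ℝ f w v) ∧ tsupport (fun w => fderiv ℝ f w v) ⊆ K ∧
    Tst (fun w => fderiv ℝ f w v) K := by
  have h1 : ContDiff ℝ (⊤ : ℕ∞) (fun w => fderiv ℝ f w v) :=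
    contDiff_iff_contDiffAt.2 fun w => smooth_dir hf.contDiffAt v
  have h2 : ∀ w, w ∉ tsupport f → fderiv ℝ f w v = 0 := by
    intro w hw
    have : fderiv ℝ f w = 0 := by
      by_contra h0
      exact hw (support_fderiv_subset ℝ h0)
    rw [this]; rfl
  have h3 : tsupport (fun w => fderiv ℝ f w v) ⊆ tsupport f := by
    refine closure_minimal (fun w hw => ?_) (isClosed_tsupport f)
    by_contra h0
    exact hw (h2 w h0)
  exact ⟨h1, h3.trans h, h1.continuous, hK, fun w hw => h2 w fun h0 => hw (h h0)⟩

theorem pull {E : Type*} [NormedAddCommGroup E] [NormedSpace ℝ E] {ψ : ℝ × ℝ × ℝ → E}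
    (hψ : ContDiff ℝ (⊤ : ℕ∞) ψ) (hs : HasCompactSupport ψ) :
    ∃ f : ℝ × ℝ × ℝ → E, ContDiff ℝ (⊤ : ℕ∞) f ∧ IsCompact (tsupport f) ∧ ψ = fun p => f (Lam p) := by
  refine ⟨fun w => ψ (Lam.symm w), hψ.comp Lam.symm.contDiff, ?_, ?_⟩
  · exact hs.comp_homeomorph Lam.symm.toHomeomorph
  · funext p; simp

theorem weak_id1 (hκ : 0 < κ) (hh : Qh.ν = μ) (hv : Qv.ν = -μ) (ψ : ℝ × ℝ × ℝ → Fin 3 → ℝ)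
    (hψ : ContDiff ℝ (⊤ : ℕ∞) ψ) (hs : HasCompactSupport ψ) :
    ∫ p : ℝ × ℝ × ℝ,
      (dot3 (cross3 (uu Qh Qv μ (Lam p)) (pdV ey (fun p => uu Qh Qv μ (Lam p)) p)) (pdV ey ψ p)
        - dot3 (cross3 (uu Qh Qv μ (Lam p)) (pdV ex (fun p => uu Qh Qv μ (Lam p)) p)) (pdV ex ψ p)
        + dot3 (uu Qh Qv μ (Lam p)) (pdV et ψ p)
        - ph Qh Qv (Lam p) * (dot3 (pdV ey (fun p => uu Qh Qv μ (Lam p)) p) (pdV ex ψ p)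
          - dot3 (pdV ex (fun p => uu Qh Qv μ (Lam p)) p) (pdV ey ψ p))) = 0 := by
  obtain ⟨f, hf, hK, rfl⟩ := pull hψ hs
  have h0 : Tst f (tsupport f) := ⟨hf.continuous, hK, fun w hw => image_eq_zero_of_notMem_tsupport hw⟩
  have hd : ∀ w, DifferentiableAt ℝ f w := fun w => smooth_diff hf.contDiffAt
  have key := integral_Lam (weak1 hκ hh hv h0 (tst_dir hf hK le_rfl (1, 0, 0)).2.2
    (tst_dir hf hK le_rfl (0, 1, 0)).2.2 (tst_dir hf hK le_rfl (0, 0, 1)).2.2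
    (fun t ξ η => line_t' (hd _)) (fun t ξ η => line_ξ' (hd _)) (fun t ξ η => line_η' (hd _)))
  rw [← key]
  refine integral_congr_ae ?_
  filter_upwards [ae_Lam ae_offS] with p hp
  obtain ⟨h1, h2, -⟩ := u_grad Qh Qv μ hp
  rw [h1, h2]
  simp only [pdV, fd_comp, Lam_ex, Lam_ey, Lam_et, map_add, map_sub]
  simp only [dot3, cross3, Pi.add_apply, Pi.sub_apply, Pi.smul_apply, smul_eq_mul,
    Fin.isValue, Matrix.cons_val]
  ring

theorem weak_id2 (hκ : 0 < κ) (ρ : ℝ × ℝ × ℝ → ℝ)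
    (hρ : ContDiff ℝ (⊤ : ℕ∞) ρ) (hs : HasCompactSupport ρ) :
    ∫ p : ℝ × ℝ × ℝ,
      ((pdR ex (pdR ex ρ) p - pdR ey (pdR ey ρ) p) * ph Qh Qv (Lam p)
        + 2 * ρ p * dot3 (uu Qh Qv μ (Lam p)) (cross3 (pdV ex (fun p => uu Qh Qv μ (Lam p)) p)
          (pdV ey (fun p => uu Qh Qv μ (Lam p)) p))) = 0 := by
  obtain ⟨f, hf, hK, rfl⟩ := pull hρ hs
  have h0 : Tst f (tsupport f) := ⟨hf.continuous, hK, fun w hw => image_eq_zero_of_notMem_tsupport hw⟩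
  have hd : ∀ w, DifferentiableAt ℝ f w := fun w => smooth_diff hf.contDiffAt
  obtain ⟨a1, a2, a3⟩ := tst_dir hf hK le_rfl (0, 1, 0)
  obtain ⟨b1, b2, b3⟩ := tst_dir hf hK le_rfl (0, 0, 1)
  obtain ⟨c1, c2, c3⟩ := tst_dir a1 hK a2 (0, 0, 1)
  have hda : ∀ w, DifferentiableAt ℝ (fun w => fderiv ℝ f w (0, 1, 0)) w := fun w => smooth_diff a1.contDiffAt
  have hdb : ∀ w, DifferentiableAt ℝ (fun w => fderiv ℝ f w (0, 0, 1)) w := fun w => smooth_diff b1.contDiffAt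
  have hsym : ∀ w, fderiv ℝ (fun w => fderiv ℝ f w (0, 0, 1)) w (0, 1, 0)
      = fderiv ℝ (fun w => fderiv ℝ f w (0, 1, 0)) w (0, 0, 1) := by
    intro w
    have h2 : DifferentiableAt ℝ (fderiv ℝ f) w :=
      (hf.contDiffAt.fderiv_right (m := (⊤ : ℕ∞)) (by exact_mod_cast le_rfl)).differentiableAt (by simp)
    have hs : IsSymmSndFDerivAt ℝ f w := hf.contDiffAt.isSymmSndFDerivAt (by simp; exact WithTop.coe_le_coe.2 (le_top : (2 : ℕ∞) ≤ ⊤))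
    rw [fderiv_clm_apply h2 (differentiableAt_const _), fderiv_clm_apply h2 (differentiableAt_const _)]
    simp [hs.eq (0, 1, 0) (0, 0, 1)]
  have d21 : ∀ t ξ η, HasDerivAt (fun ξ => fderiv ℝ f (t, ξ, η) (0, 0, 1))
      (fderiv ℝ (fun w => fderiv ℝ f w (0, 1, 0)) (t, ξ, η) (0, 0, 1)) ξ := by
    intro t ξ η
    rw [← hsym]; exact line_ξ' (hdb _)
  have key := integral_Lam (weak2 (Qh := Qh) (Qv := Qv) hκ h0 a3 b3 c3
    (fun t ξ η => line_η' (hd _)) (fun t ξ η => line_η' (hda _)) d21 (fun t ξ η => line_ξ' (hd _)))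
  rw [← key]
  refine integral_congr_ae ?_
  filter_upwards [ae_Lam ae_offS] with p hp
  have hb := (grad_box (f := f) (f1 := fun w => fderiv ℝ f w (0, 1, 0)) (f2 := fun w => fderiv ℝ f w (0, 0, 1))
    (f12 := fun w => fderiv ℝ (fun w => fderiv ℝ f w (0, 1, 0)) w (0, 0, 1))
    isOpen_univ (fun w _ => hf.contDiffAt)
    (fun t ξ η _ => line_ξ' (hd _)) (fun t ξ η _ => line_η' (hd _)) (fun t ξ η _ => line_η' (hda _))
    (fun t ξ η _ => d21 t ξ η) (mem_univ (Lam p))).2.2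
  change pdR ex (pdR ex (fun q => f (Lam q))) p - pdR ey (pdR ey (fun q => f (Lam q))) p = _ at hb
  rw [top_eq Qh Qv μ hp, hb, smul_eq_mul]
  ring

theorem isWeak (hκ : 0 < κ) (hh : Qh.ν = μ) (hv : Qv.ν = -μ) :
    IsWeakIshimori univ (fun p => uu Qh Qv μ (Lam p)) (fun p => ph Qh Qv (Lam p)) := by
  obtain ⟨d, hd, hd4, hd1⟩ : ∃ d : ℝ, 0 < d ∧ d ≤ κ / 4 ∧ d ≤ 1 / 2 :=
    ⟨min (κ / 4) (1 / 2), lt_min (by positivity) (by norm_num), min_le_left _ _, min_le_right _ _⟩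
  have hset : {p : ℝ × ℝ × ℝ | p.1 ∈ (univ : Set ℝ)} = univ := by simp
  have gx : Good (ux Qh Qv μ) (κ / 2 - 1) (κ / 2 - 1) := (gux Qh Qv μ hκ).weaken le_rfl (by linarith)
  have gy : Good (uy Qh Qv μ) (κ / 2 - 1) (κ / 2 - 1) := (guy Qh Qv μ hκ).weaken (by linarith) le_rfl
  -- smaller exponent for the potential
  have gp : Good (ph Qh Qv) (-(κ / 4)) (-(κ / 4)) := gph Qh Qv hκ
  have gp' : Good (ph Qh Qv) (d - 1) (d - 1) :=
    gl_good _ _ fun Q => by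
      simp only [Φ_eq]
      exact ((((Good.log_ξ hd).const_mul ((c + b) / 2)).weaken (by linarith) (by linarith)).add
        (((Good.log_η hd).const_mul ((b - c) / 2)).weaken (by linarith) (by linarith))).sub
        (Q.gF.weaken (by linarith) (by linarith))
  have ae := ae_Lam ae_offS
  refine ⟨?_, ?_, ?_, ?_, ?_, ?_, ?_, fun ψ h1 h2 _ => weak_id1 Qh Qv μ hκ hh hv ψ h1 h2,
    fun ρ h1 h2 _ => weak_id2 Qh Qv μ hκ ρ h1 h2⟩ <;> rw [hset, locallyIntegrableOn_univ]
  · exact locInt_Lam (((guu Qh Qv μ hκ).weaken (by linarith) (by linarith)).locallyIntegrable hd)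
  · refine (locInt_Lam (((gx.add gy).weaken (by linarith) (by linarith)).locallyIntegrable hd)).congr ?_
    filter_upwards [ae] with p hp using (u_grad Qh Qv μ hp).1.symm
  · refine (locInt_Lam (((gx.sub gy).weaken (by linarith) (by linarith)).locallyIntegrable hd)).congr ?_
    filter_upwards [ae] with p hp using (u_grad Qh Qv μ hp).2.1.symm
  · exact locInt_Lam (gp'.locallyIntegrable hd)
  · refine (locInt_Lam (((gp.smul (gx.add gy)).weaken (by linarith) (by linarith)).locallyIntegrable hd)).congr ?_
    filter_upwards [ae] with p hp
    rw [(u_grad Qh Qv μ hp).1]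
  · refine (locInt_Lam (((gp.smul (gx.sub gy)).weaken (by linarith) (by linarith)).locallyIntegrable hd)).congr ?_
    filter_upwards [ae] with p hp
    rw [(u_grad Qh Qv μ hp).2.1]
  · refine (locInt_Lam ((((gfxy Qh Qv hκ).const_mul 2).weaken (by linarith) (by linarith)).locallyIntegrable hd)).congr ?_
    filter_upwards [ae] with p hp using (top_eq Qh Qv μ hp).symm

end Prof

namespace Prof
variable {k c b κ : ℝ}

theorem smlog {f : ℝ → ℝ} (hf : ContDiff ℝ (⊤ : ℕ∞) f) :
    ContDiffOn ℝ (⊤ : ℕ∞) (fun a => f (Real.log a)) (Ioi 0) := fun a ha =>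
  (hf.contDiffAt.comp a (Real.contDiffAt_log.2 (ne_of_gt ha))).contDiffWithinAt

theorem S_bigO (Q : Prof k c b κ) :
    (fun a => Q.S (Real.log a)) =O[nhdsWithin 0 (Ioi 0)] (fun a : ℝ => a ^ κ) := by
  obtain ⟨C, hC, h⟩ := Q.bd 0
  refine IsBigO.of_bound C ?_
  filter_upwards [Ioo_mem_nhdsGT (zero_lt_one' ℝ)] with a ha
  have := (h (Real.log a) (Real.log_nonpos ha.1.le ha.2.le)).1
  rw [Real.norm_eq_abs, Real.norm_eq_abs, abs_of_nonneg (Real.rpow_nonneg ha.1.le _),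
    Real.rpow_def_of_pos ha.1, mul_comm (Real.log a)]
  exact this

theorem S_tendsto (hκ : 0 < κ) (Q : Prof k c b κ) :
    Tendsto (fun a => Q.S (Real.log a)) (nhdsWithin 0 (Ioi 0)) (nhds 0) := by
  refine Q.S_bigO.trans_tendsto ?_
  have := (Real.continuousAt_rpow_const 0 κ (Or.inr hκ.le)).tendsto
  rw [Real.zero_rpow hκ.ne'] at this
  exact this.mono_left nhdsWithin_le_nhds

theorem S_ne (Q : Prof k c b κ) : ∃ a > (0:ℝ), Q.S (Real.log a) ≠ 0 := by
  obtain ⟨τ, h⟩ := Q.ne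
  exact ⟨Real.exp τ, Real.exp_pos τ, by rwa [Real.log_exp]⟩

theorem sqrt_dot_le (v : Fin 3 → ℝ) : Real.sqrt (dot3 v v) ≤ 2 * ‖v‖ := by
  refine Real.sqrt_le_iff.2 ⟨by positivity, ?_⟩
  have h : ∀ i, v i * v i ≤ ‖v‖ ^ 2 := fun i => by
    have := norm_le_pi_norm v i
    rw [Real.norm_eq_abs] at this
    rw [← abs_mul_abs_self, sq]
    exact mul_self_le_mul_self (abs_nonneg _) this
  unfold dot3
  nlinarith [h 0, h 1, h 2, sq_nonneg ‖v‖]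

theorem mem_off {t x y : ℝ} (h : |x| ≠ |y|) : Lam (t, x, y) ∈ offS := by
  rw [Lam_apply]
  constructor
  · intro h0
    exact h (by rw [show x = -y by simp at h0; linarith, abs_neg])
  · intro h0
    exact h (by rw [show x = y by simp at h0; linarith])

end Prof

/-- Main Theorem 1: existence of nontrivial `(μ,k,c)`-equivariant standing waves of the
Ishimori system with target `S²` which are weak solutions, given `c² < −4(k² + bk)`;
the spin is continuous, Hölder `C^κ` up to the cross `{|x| = |y|}`, and `(u,φ)` is
smooth and solves the system pointwise off the cross. -/
theorem stmt12 (μ k c b : ℝ) (hμ : μ ≠ 0) (hk : k ≠ 0) (hc : c ≠ 0)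
    (hb : c ^ 2 < -4 * (k ^ 2 + b * k)) :
    ∃ sh βh sv βv : ℝ → ℝ,
      ContDiffOn ℝ (⊤ : ℕ∞) sh (Ioi 0) ∧ ContDiffOn ℝ (⊤ : ℕ∞) βh (Ioi 0) ∧
      ContDiffOn ℝ (⊤ : ℕ∞) sv (Ioi 0) ∧ ContDiffOn ℝ (⊤ : ℕ∞) βv (Ioi 0) ∧
      Tendsto sh (nhdsWithin 0 (Ioi 0)) (nhds 0) ∧
      Tendsto sv (nhdsWithin 0 (Ioi 0)) (nhds 0) ∧
      (∃ a > (0:ℝ), sh a ≠ 0) ∧ (∃ a > (0:ℝ), sv a ≠ 0) ∧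
      sh =O[nhdsWithin 0 (Ioi 0)]
        (fun a : ℝ => a ^ (Real.sqrt (-(k ^ 2 + b * k) - c ^ 2 / 4))) ∧
      sv =O[nhdsWithin 0 (Ioi 0)]
        (fun a : ℝ => a ^ (Real.sqrt (-(k ^ 2 + b * k) - c ^ 2 / 4))) ∧
      IsWeakIshimori univ (uDef μ k sh βh sv βv) (φDef k c b sh sv) ∧
      (∀ p : ℝ × ℝ × ℝ, dot3 (uDef μ k sh βh sv βv p) (uDef μ k sh βh sv βv p) = 1) ∧
      Continuous (uDef μ k sh βh sv βv) ∧
      (∀ M > (0:ℝ), ∃ C > (0:ℝ), ∀ t x y : ℝ, |x| ≤ M → |y| ≤ M →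
        Real.sqrt (dot3 (uDef μ k sh βh sv βv (t, x, y) - e0)
            (uDef μ k sh βh sv βv (t, x, y) - e0))
          ≤ C * |x ^ 2 - y ^ 2| ^ (Real.sqrt (-(k ^ 2 + b * k) - c ^ 2 / 4) / 2)) ∧
      (∀ t x y : ℝ, |x| ≠ |y| →
        ContDiffAt ℝ (⊤ : ℕ∞) (uDef μ k sh βh sv βv) (t, x, y) ∧
        ContDiffAt ℝ (⊤ : ℕ∞) (φDef k c b sh sv) (t, x, y) ∧
        pdV et (uDef μ k sh βh sv βv) (t, x, y)
          = cross3 (uDef μ k sh βh sv βv (t, x, y))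
              (pdV ex (pdV ex (uDef μ k sh βh sv βv)) (t, x, y)
                - pdV ey (pdV ey (uDef μ k sh βh sv βv)) (t, x, y))
            + pdR ex (φDef k c b sh sv) (t, x, y) • pdV ey (uDef μ k sh βh sv βv) (t, x, y)
            - pdR ey (φDef k c b sh sv) (t, x, y)
                • pdV ex (uDef μ k sh βh sv βv) (t, x, y) ∧
        pdR ex (pdR ex (φDef k c b sh sv)) (t, x, y)
            - pdR ey (pdR ey (φDef k c b sh sv)) (t, x, y)
          = -2 * dot3 (uDef μ k sh βh sv βv (t, x, y))
              (cross3 (pdV ex (uDef μ k sh βh sv βv) (t, x, y))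
                (pdV ey (uDef μ k sh βh sv βv) (t, x, y)))) := by
  have hκ2' : 0 < -(k ^ 2 + b * k) - c ^ 2 / 4 := by linarith
  set κ := Real.sqrt (-(k ^ 2 + b * k) - c ^ 2 / 4) with hκdef
  have hκ : 0 < κ := Real.sqrt_pos.2 hκ2'
  have hκ2 : κ ^ 2 = -(k ^ 2 + b * k) - c ^ 2 / 4 := Real.sq_sqrt hκ2'.le
  obtain ⟨Qh, hh⟩ := prof_exists (k := k) (b := b) μ hc hκ hκ2
  obtain ⟨Qv, hv⟩ := prof_exists (k := k) (b := b) (-μ) hc hκ hκ2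
  refine ⟨fun a => Qh.S (Real.log a), fun a => Qh.B (Real.log a), fun a => Qv.S (Real.log a),
    fun a => Qv.B (Real.log a), Prof.smlog Qh.smS, Prof.smlog Qh.smB, Prof.smlog Qv.smS, Prof.smlog Qv.smB,
    Qh.S_tendsto hκ, Qv.S_tendsto hκ, Qh.S_ne, Qv.S_ne, Qh.S_bigO, Qv.S_bigO, ?_⟩
  rw [Prof.uDef_eq Qh Qv μ, Prof.φDef_eq Qh Qv hκ]
  refine ⟨Prof.isWeak Qh Qv μ hκ hh hv, fun p => Prof.uu_dot Qh Qv μ _,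
    (Prof.uu_cont Qh Qv μ hκ).comp Lam.continuous, ?_, ?_⟩
  · intro M hM
    obtain ⟨C, hC, h⟩ := Prof.uu_bound Qh Qv μ hκ (2 * M) (by positivity)
    refine ⟨2 * C, by positivity, fun t x y hx hy => ?_⟩
    have h1 : |x + y| ≤ 2 * M := (abs_add_le x y).trans (by linarith)
    have h2 : |x - y| ≤ 2 * M := (abs_sub x y).trans (by linarith)
    have h3 := h (Lam (t, x, y)) h1 h2
    have h4 : (Lam (t, x, y)).2.1 * (Lam (t, x, y)).2.2 = x ^ 2 - y ^ 2 := by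
      rw [Lam_apply]; ring
    rw [h4] at h3
    refine (Prof.sqrt_dot_le _).trans ?_
    linarith
  · intro t x y hxy
    have hp := Prof.mem_off (t := t) hxy
    exact ⟨(Prof.sm_uu Qh Qv μ hp).comp (t, x, y) Lam.contDiff.contDiffAt,
      (Prof.sm_ph Qh Qv hp).comp (t, x, y) Lam.contDiff.contDiffAt,
      Prof.pointwise1 Qh Qv μ hh hv hp, Prof.pointwise2 Qh Qv μ hp⟩
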